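/- Let (G_n) be a sequence of connected d-regular simple graphs on n vertices with d = d(n) → ∞ and parameters ε = ε(n) ∈ (0,1) with ε(n)·log d → ∞, satisfying properties P1, P2, P3 and P4. Let t* = n·ln d. Then for any sequence of starting vertices u = u(n) and any t = t(n) with t ≤ (1−ε)t*, there exists a constant c > 0 such that the probability that the subgraph of G_n induced by the vertices not visited by the first t steps of the simple random walk started at u contains a connected component with at least exp(c·d^{ε/2}) vertices tends to 1 as n → ∞. -/

import Mathlib

open Finset Filter

noncomputable section
open scoped Classical

variable {V : Type*} [Fintype V] [DecidableEq V]

/-- Transition matrix of the simple random walk on a `d`-regular graph `G`: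
from `u` the walk moves to a uniformly random neighbour. -/
def simpleStep (G : SimpleGraph V) (d : ℕ) : Matrix V V ℝ :=
  Matrix.of fun u v => if G.Adj u v then ((d : ℝ))⁻¹ else 0

/-- Transition matrix of the lazy random walk `M = (1/2)(I + A/d)`. -/
def lazyStep (G : SimpleGraph V) (d : ℕ) : Matrix V V ℝ :=
  Matrix.of fun u v =>
    (if u = v then (2 : ℝ)⁻¹ else 0) + (2 : ℝ)⁻¹ * (if G.Adj u v then ((d : ℝ))⁻¹ else 0)

/-- Probability that the first `t` steps of the Markov chain with transition
matrix `M` started at `u` form a trajectory satisfying `E`:  the sum, over all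
paths realizing the event, of the product of the transition probabilities. -/
def walkProb (M : Matrix V V ℝ) (u : V) (t : ℕ)
    (E : (Fin (t + 1) → V) → Prop) : ℝ :=
  ∑ p : Fin (t + 1) → V,
    if p 0 = u ∧ E p then ∏ i : Fin t, M (p i.castSucc) (p i.succ) else 0

/-- The mixing time `T = min { t ≥ 1 : |M^t x y - 1/n| ≤ n⁻³ for all x,y }`. -/
def mixingTime (G : SimpleGraph V) (d : ℕ) : ℕ :=
  sInf {T : ℕ | 1 ≤ T ∧ ∀ x y : V,
    |((lazyStep G d) ^ T) x y - ((Fintype.card V : ℝ))⁻¹| ≤ (((Fintype.card V : ℝ)) ^ 3)⁻¹}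

/-- Property P1: the second largest eigenvalue of the lazy walk matrix is at
most `1 - g`, stated via the Rayleigh quotient on the orthogonal complement of
the constant (top) eigenvector. -/
def SpectralGapLB (G : SimpleGraph V) (d : ℕ) (g : ℝ) : Prop :=
  ∀ x : V → ℝ, (∑ v : V, x v) = 0 →
    (∑ u : V, ∑ v : V, x u * lazyStep G d u v * x v) ≤ (1 - g) * ∑ v : V, x v ^ 2

/-- Property P3 with constant `ρ₂`: for vertices `u,v` at distance at most
`d^ε`, the number of neighbours `w` of `v` with `dist w u ≤ dist u v` is at
most `ρ₂ · dist u v`. -/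
def PropP3 (G : SimpleGraph V) (d : ℕ) (ε ρ₂ : ℝ) : Prop :=
  ∀ u v : V, (G.dist u v : ℝ) ≤ (d : ℝ) ^ ε →
    (((univ : Finset V).filter fun w => G.Adj v w ∧ G.dist w u ≤ G.dist u v).card : ℝ) ≤
      ρ₂ * (G.dist u v : ℝ)

/-- The number of edges of `G` with both endpoints in `S`. -/
def edgesInside (G : SimpleGraph V) (S : Finset V) : ℕ :=
  ((S ×ˢ S).filter fun p => G.Adj p.1 p.2).card / 2

/-- The set of vertices of `G` not visited by the trajectory `p` at any step
`s` with `t₀ ≤ s` contains a connected (in the induced subgraph) subset of at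
least `K` vertices; equivalently, the subgraph induced by this vacant set has a
connected component with at least `K` vertices. -/
def bigVacantComponent (G : SimpleGraph V) {t : ℕ} (p : Fin (t + 1) → V)
    (t₀ : ℕ) (K : ℝ) : Prop :=
  ∃ S : Finset V, (∀ v ∈ S, ∀ s : Fin (t + 1), t₀ ≤ (s : ℕ) → p s ≠ v) ∧
    (G.induce (S : Set V)).Connected ∧ K ≤ (S.card : ℝ)

/-!
The proof is a second moment argument. Put `q = exp (-t / n)`. A spectral gap comparison for the
walk killed on a small set `S` shows that it avoids `S` up to time `t` with probability about
`q ^ #S`, up to corrections for returns and for hits before mixing. Fix a root `v` and let `X` be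
the mass, under the walk that always moves away from `v`, of the geodesics of length `k + 1` from
`v` which are vacant after `v`. P3 makes outward steps dominate and two independent geodesics
rarely coincide, so that `X / q ^ (k + 1)` concentrates. If every vacant component is small, then
the vacant geodesics through a given neighbour of `v` have few endpoints, and Cauchy-Schwarz bounds
`X ^ 2` by the number of vacant neighbours of `v` times the mass of pairs of vacant geodesics with
the same first step and the same endpoint. That mass is exponentially small in `k`, so this rarely
happens.
-/

open scoped Matrix BigOperators

section PathSums

variable {α : Type*} {M M' : Matrix α α ℝ} {x : α} {t : ℕ}

/-- The weight of the path `p` for the kernel `M` started at `x`: the product of the transition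
weights if `p` starts at `x`, and `0` otherwise. -/
def pathWeight (M : Matrix α α ℝ) (x : α) {t : ℕ} (p : Fin (t + 1) → α) : ℝ :=
  if p 0 = x then ∏ i : Fin t, M (p i.castSucc) (p i.succ) else 0

lemma pathWeight_ne_zero {p : Fin (t + 1) → α} :
    pathWeight M x p ≠ 0 ↔ p 0 = x ∧ ∀ i : Fin t, M (p i.castSucc) (p i.succ) ≠ 0 := by
  simp [pathWeight, Finset.prod_eq_zero_iff]

lemma pathWeight_nonneg (hM : ∀ x y, 0 ≤ M x y) (p : Fin (t + 1) → α) : 0 ≤ pathWeight M x p := by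
  unfold pathWeight
  split_ifs
  exacts [prod_nonneg fun i _ => hM _ _, le_rfl]

lemma pathWeight_mono (hM : ∀ x y, 0 ≤ M x y) (hMM : ∀ x y, M x y ≤ M' x y)
    (p : Fin (t + 1) → α) : pathWeight M x p ≤ pathWeight M' x p := by
  unfold pathWeight
  split_ifs
  exacts [prod_le_prod (fun i _ => hM _ _) fun i _ => hMM _ _, le_rfl]

lemma pathWeight_snoc (p : Fin (t + 1) → α) (y : α) :
    pathWeight M x (Fin.snoc p y : Fin (t + 2) → α) =
      pathWeight M x p * M (p (Fin.last t)) y := by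
  have hzero : (Fin.snoc p y : Fin (t + 2) → α) 0 = p 0 := Fin.snoc_castSucc (α := fun _ => α) y p 0
  have hsucc (i : Fin t) : (Fin.snoc p y : Fin (t + 2) → α) i.castSucc.succ = p i.succ := by
    rw [Fin.succ_castSucc, Fin.snoc_castSucc]
  simp only [pathWeight, hzero, Fin.prod_univ_castSucc, hsucc, Fin.snoc_castSucc, Fin.succ_last,
    Fin.snoc_last, ite_mul, zero_mul]

lemma pathWeight_cons (p : Fin (t + 1) → α) (y : α) :
    pathWeight M x (Fin.cons y p : Fin (t + 2) → α) =
      if y = x then M x (p 0) * pathWeight M (p 0) p else 0 := by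
  have hcastSucc (i : Fin t) : (Fin.cons y p : Fin (t + 2) → α) i.succ.castSucc = p i.castSucc := by
    rw [← Fin.succ_castSucc, Fin.cons_succ]
  simp only [pathWeight, Fin.cons_zero, Fin.prod_univ_succ, Fin.castSucc_zero, Fin.cons_succ,
    hcastSucc, if_true]
  split_ifs with h
  exacts [by rw [h], rfl]

variable [Fintype α]

/-- The sum of `F` over the paths of length `t` started at `x`, weighted by the kernel `M`; for a
stochastic kernel this is the expectation of `F` along the first `t` steps of the chain. -/
def pathSum (M : Matrix α α ℝ) (x : α) (t : ℕ) (F : (Fin (t + 1) → α) → ℝ) : ℝ :=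
  ∑ p, pathWeight M x p * F p

variable {F F' : (Fin (t + 1) → α) → ℝ}

lemma walkProb_eq_pathSum [DecidableEq α] (E : (Fin (t + 1) → α) → Prop) :
    walkProb M x t E = pathSum M x t fun p => if E p then 1 else 0 := by
  refine sum_congr rfl fun p _ => ?_
  by_cases hx : p 0 = x <;> by_cases hE : E p <;> simp [pathWeight, hx, hE]

lemma pathSum_add (F F' : (Fin (t + 1) → α) → ℝ) :
    pathSum M x t (fun p => F p + F' p) = pathSum M x t F + pathSum M x t F' := by
  simp only [pathSum, mul_add, sum_add_distrib]

lemma pathSum_sub (F F' : (Fin (t + 1) → α) → ℝ) :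
    pathSum M x t (fun p => F p - F' p) = pathSum M x t F - pathSum M x t F' := by
  simp only [pathSum, mul_sub, sum_sub_distrib]

lemma pathSum_const_mul (c : ℝ) (F : (Fin (t + 1) → α) → ℝ) :
    pathSum M x t (fun p => c * F p) = c * pathSum M x t F := by
  simp only [pathSum, mul_sum, mul_left_comm]

lemma pathSum_sum {ι : Type*} (s : Finset ι) (F : ι → (Fin (t + 1) → α) → ℝ) :
    pathSum M x t (fun p => ∑ i ∈ s, F i p) = ∑ i ∈ s, pathSum M x t (F i) := by
  simp only [pathSum, mul_sum]
  exact sum_comm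

lemma pathSum_comm {β : Type*} [Fintype β] (M' : Matrix β β ℝ) (y : β) (s : ℕ)
    (F : (Fin (t + 1) → α) → (Fin (s + 1) → β) → ℝ) :
    pathSum M x t (fun p => pathSum M' y s (F p)) =
      pathSum M' y s fun p' => pathSum M x t fun p => F p p' := by
  simp only [pathSum, mul_sum, mul_left_comm (pathWeight M x _)]
  exact sum_comm

lemma pathSum_mono (hM : ∀ x y, 0 ≤ M x y) (h : ∀ p, pathWeight M x p ≠ 0 → F p ≤ F' p) :
    pathSum M x t F ≤ pathSum M x t F' := by
  refine sum_le_sum fun p _ => ?_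
  by_cases hp : pathWeight M x p = 0
  · simp [hp]
  · exact mul_le_mul_of_nonneg_left (h p hp) (pathWeight_nonneg hM p)

lemma pathSum_congr (h : ∀ p, pathWeight M x p ≠ 0 → F p = F' p) :
    pathSum M x t F = pathSum M x t F' := by
  refine sum_congr rfl fun p _ => ?_
  by_cases hp : pathWeight M x p = 0
  · simp [hp]
  · rw [h p hp]

lemma pathSum_nonpos (hM : ∀ x y, 0 ≤ M x y) (h : ∀ p, pathWeight M x p ≠ 0 → F p ≤ 0) :
    pathSum M x t F ≤ 0 :=
  (pathSum_mono hM h).trans_eq (by simp [pathSum])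

lemma pathSum_nonneg (hM : ∀ x y, 0 ≤ M x y) (h : ∀ p, 0 ≤ F p) : 0 ≤ pathSum M x t F :=
  sum_nonneg fun p _ => mul_nonneg (pathWeight_nonneg hM p) (h p)

lemma pathSum_mono_kernel (hM : ∀ x y, 0 ≤ M x y) (hMM : ∀ x y, M x y ≤ M' x y)
    (h : ∀ p, 0 ≤ F p) : pathSum M x t F ≤ pathSum M' x t F :=
  sum_le_sum fun p _ => mul_le_mul_of_nonneg_right (pathWeight_mono hM hMM p) (h p)

lemma pathSum_zero (F : (Fin 1 → α) → ℝ) : pathSum M x 0 F = F fun _ => x := by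
  rw [pathSum, Fintype.sum_eq_single fun _ => x]
  · simp [pathWeight]
  · intro p hp
    have hp0 : p 0 ≠ x := fun h => hp (funext fun i => by rw [Fin.fin_one_eq_zero i, h])
    simp [pathWeight, hp0]

lemma pathSum_snoc (F : (Fin (t + 2) → α) → ℝ) :
    pathSum M x (t + 1) F =
      pathSum M x t fun p => ∑ y, M (p (Fin.last t)) y * F (Fin.snoc p y) := by
  unfold pathSum
  rw [← (Fin.snocEquiv fun _ : Fin (t + 2) => α).sum_comp, Fintype.sum_prod_type_right]
  refine sum_congr rfl fun p _ => ?_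
  rw [mul_sum]
  refine sum_congr rfl fun y _ => ?_
  rw [← mul_assoc]
  exact congrArg (· * F (Fin.snoc p y)) (pathWeight_snoc p y)

lemma pathSum_cons (F : (Fin (t + 2) → α) → ℝ) :
    pathSum M x (t + 1) F = ∑ y, M x y * pathSum M y t fun p => F (Fin.cons x p) := by
  have hstart (p : Fin (t + 1) → α) : M x (p 0) * pathWeight M (p 0) p * F (Fin.cons x p) =
      ∑ y, M x y * (pathWeight M y p * F (Fin.cons x p)) := by
    rw [Fintype.sum_eq_single (p 0), mul_assoc]
    intro y hy
    simp [pathWeight, hy.symm]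
  unfold pathSum
  rw [← (Fin.consEquiv fun _ : Fin (t + 2) => α).sum_comp, Fintype.sum_prod_type]
  change ∑ y, ∑ p, pathWeight M x (Fin.cons y p : Fin (t + 2) → α) * F (Fin.cons y p) = _
  simp only [pathWeight_cons]
  rw [Fintype.sum_eq_single x fun y hy => by simp [hy]]
  simp only [if_true, hstart, mul_sum]
  exact sum_comm

lemma pathSum_one (hM : ∀ x, ∑ y, M x y = 1) (t : ℕ) (x : α) :
    pathSum M x t (fun _ => 1) = 1 := by
  induction t generalizing x with
  | zero => rw [pathSum_zero]
  | succ t ih => simp [pathSum_cons, ih, hM]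

end PathSums

section SymmetricStochastic

open Matrix

variable {α : Type*} [Fintype α]

lemma dotProduct_mulVec_of_isSymm {M : Matrix α α ℝ} (hM : M.IsSymm) (f g : α → ℝ) :
    f ⬝ᵥ M *ᵥ g = (M *ᵥ f) ⬝ᵥ g := by
  rw [dotProduct_mulVec, ← mulVec_transpose, hM.eq]

lemma dotProduct_sq_le (f g : α → ℝ) : (f ⬝ᵥ g) ^ 2 ≤ (f ⬝ᵥ f) * (g ⬝ᵥ g) := by
  simpa only [dotProduct, sq] using sum_mul_sq_le_sq_mul_sq univ f g

lemma dotProduct_self_nonneg (f : α → ℝ) : 0 ≤ f ⬝ᵥ f :=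
  sum_nonneg fun x _ => mul_self_nonneg (f x)

lemma sq_apply_le_dotProduct_self (f : α → ℝ) (x : α) : f x ^ 2 ≤ f ⬝ᵥ f := by
  rw [sq]
  exact single_le_sum (f := fun y => f y * f y) (fun y _ => mul_self_nonneg _) (mem_univ x)

lemma mulVec_indicator_one (M : Matrix α α ℝ) (S : Finset α) (x : α) :
    (M *ᵥ (S : Set α).indicator 1) x = ∑ s ∈ S, M x s := by
  simp [mulVec, dotProduct, Set.indicator_apply]

lemma dotProduct_indicator_one (f : α → ℝ) (S : Finset α) :
    f ⬝ᵥ (S : Set α).indicator 1 = ∑ s ∈ S, f s := by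
  simp [dotProduct, Set.indicator_apply]

/-- A symmetric matrix with nonnegative entries and unit row sums, that is, the transition matrix
of a Markov chain reversible with respect to the uniform distribution. -/
structure IsSymmStochastic (P : Matrix α α ℝ) : Prop where
  symm : P.IsSymm
  stochastic : P ∈ rowStochastic ℝ α

/-- The Dirichlet form `⟨f, (1 - P) g⟩` of the kernel `P` with respect to counting measure. -/
def dirichletForm (P : Matrix α α ℝ) (f g : α → ℝ) : ℝ := f ⬝ᵥ (1 - P) *ᵥ g

lemma dirichletForm_eq (P : Matrix α α ℝ) (f g : α → ℝ) :
    dirichletForm P f g = f ⬝ᵥ g - f ⬝ᵥ P *ᵥ g := by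
  rw [dirichletForm, sub_mulVec, one_mulVec, dotProduct_sub]

/-- The lazy version `(1 + P) / 2` of the kernel `P`. -/
def lazyMatrix (P : Matrix α α ℝ) : Matrix α α ℝ := (2 : ℝ)⁻¹ • (1 + P)

/-- The truncated Green matrix `∑_{i < L} P ^ i`, whose `(x, y)` entry is the expected number of
visits to `y` before time `L` of the chain started at `x`. -/
def truncatedGreen (P : Matrix α α ℝ) (L : ℕ) : Matrix α α ℝ := ∑ i ∈ range L, P ^ i

namespace IsSymmStochastic

variable {P : Matrix α α ℝ}

lemma apply_comm (hP : IsSymmStochastic P) (x y : α) : P x y = P y x := hP.symm.apply y x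

lemma nonneg (hP : IsSymmStochastic P) (x y : α) : 0 ≤ P x y :=
  nonneg_of_mem_rowStochastic hP.stochastic

lemma pow (hP : IsSymmStochastic P) (n : ℕ) : IsSymmStochastic (P ^ n) :=
  ⟨hP.symm.pow n, pow_mem hP.stochastic n⟩

lemma lazy (hP : IsSymmStochastic P) : IsSymmStochastic (lazyMatrix P) where
  symm := (isSymm_one.add hP.symm).smul _
  stochastic := by
    have h := convex_rowStochastic (R := ℝ) (n := α) (one_mem _) hP.stochastic
      (a := 2⁻¹) (b := 2⁻¹) (by norm_num) (by norm_num) (by norm_num)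
    rwa [← smul_add] at h

lemma dotProduct_mulVec_comm (hP : IsSymmStochastic P) (f g : α → ℝ) :
    f ⬝ᵥ P *ᵥ g = (P *ᵥ f) ⬝ᵥ g := dotProduct_mulVec_of_isSymm hP.symm f g

lemma mulVec_const (hP : IsSymmStochastic P) (c : ℝ) :
    (P *ᵥ fun _ => c) = fun _ => c := by
  ext x
  simp only [mulVec, dotProduct, ← sum_mul, sum_row_of_mem_rowStochastic hP.stochastic, one_mul]

lemma mulVec_mono (hP : IsSymmStochastic P) {f g : α → ℝ} (h : f ≤ g) : P *ᵥ f ≤ P *ᵥ g :=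
  fun x => sum_le_sum fun y _ => mul_le_mul_of_nonneg_left (h y) (hP.nonneg x y)

lemma mulVec_nonneg (hP : IsSymmStochastic P) {f : α → ℝ} (h : 0 ≤ f) : 0 ≤ P *ᵥ f := by
  simpa only [mulVec_zero] using hP.mulVec_mono h

lemma mulVec_le_of_le (hP : IsSymmStochastic P) {f : α → ℝ} {c : ℝ} (h : ∀ x, f x ≤ c) (x : α) :
    (P *ᵥ f) x ≤ c := by
  simpa only [hP.mulVec_const] using hP.mulVec_mono (g := fun _ => c) h x

lemma sum_mulVec (hP : IsSymmStochastic P) (f : α → ℝ) : ∑ x, (P *ᵥ f) x = ∑ x, f x := by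
  have h := hP.dotProduct_mulVec_comm 1 f
  rwa [one_vecMul_of_mem_rowStochastic hP.stochastic, one_dotProduct, one_dotProduct] at h

lemma truncatedGreen_nonneg (hP : IsSymmStochastic P) (L : ℕ) (x y : α) :
    0 ≤ truncatedGreen P L x y := by
  rw [truncatedGreen, Matrix.sum_apply]
  exact sum_nonneg fun i _ => (hP.pow i).nonneg x y

lemma sum_truncatedGreen (hP : IsSymmStochastic P) (L : ℕ) (x : α) :
    ∑ y, truncatedGreen P L x y = L := by
  simp only [truncatedGreen, Matrix.sum_apply]
  rw [sum_comm]
  simp only [sum_row_of_mem_rowStochastic (hP.pow _).stochastic, sum_const, card_range, nsmul_one]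

lemma dirichletForm_self_eq (hP : IsSymmStochastic P) (f : α → ℝ) :
    dirichletForm P f f = 2⁻¹ * ∑ x, ∑ y, P x y * (f x - f y) ^ 2 := by
  have hrow (g : α → ℝ) : ∑ x, ∑ y, P x y * g x = ∑ x, g x :=
    sum_congr rfl fun x _ => by
      rw [← sum_mul, sum_row_of_mem_rowStochastic hP.stochastic, one_mul]
  have hcol (g : α → ℝ) : ∑ x, ∑ y, P x y * g y = ∑ x, g x := hP.sum_mulVec g
  have hexpand (x y : α) : P x y * (f x - f y) ^ 2 =
      P x y * f x ^ 2 + P x y * f y ^ 2 - 2 * (f x * (P x y * f y)) := by ring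
  simp only [hexpand, sum_sub_distrib, sum_add_distrib, ← mul_sum, hrow fun x => f x ^ 2,
    hcol fun x => f x ^ 2]
  rw [dirichletForm_eq]
  simp only [mulVec, dotProduct, ← sq]
  ring

lemma dirichletForm_self_nonneg (hP : IsSymmStochastic P) (f : α → ℝ) :
    0 ≤ dirichletForm P f f := by
  rw [hP.dirichletForm_self_eq]
  exact mul_nonneg (by norm_num)
    (sum_nonneg fun x _ => sum_nonneg fun y _ => mul_nonneg (hP.nonneg x y) (sq_nonneg _))

lemma dirichletForm_sq_le (hP : IsSymmStochastic P) (f g : α → ℝ) :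
    dirichletForm P f g ^ 2 ≤ dirichletForm P f f * dirichletForm P g g := by
  have happly (f g : α → ℝ) : Matrix.toBilin' (1 - P) f g = dirichletForm P f g :=
    Matrix.toBilin'_apply' _ f g
  have hsymm := Matrix.isSymm_toBilin'_iff_isSymm.2 (isSymm_one.sub hP.symm)
  have h := (Matrix.toBilin' (1 - P)).apply_sq_le_of_symm
    (fun f => (happly f f).symm ▸ hP.dirichletForm_self_nonneg f) ⟨hsymm.eq⟩ f g
  simpa only [happly] using h

lemma mulVec_dotProduct_self_le (hP : IsSymmStochastic P) (f : α → ℝ) :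
    (P *ᵥ f) ⬝ᵥ P *ᵥ f ≤ f ⬝ᵥ f := by
  have h := (hP.pow 2).dirichletForm_self_nonneg f
  rw [dirichletForm_eq, sq, ← mulVec_mulVec, hP.dotProduct_mulVec_comm] at h
  linarith

end IsSymmStochastic

end SymmetricStochastic

section Mixing

open Matrix Fintype

variable {α : Type*} [Fintype α] {P : Matrix α α ℝ} {γ : ℝ}

/-- The spectral gap of `P` is at least `γ`: the Dirichlet form dominates `γ` times the square
norm on functions of mean zero. -/
def HasSpectralGap (P : Matrix α α ℝ) (γ : ℝ) : Prop :=
  ∀ f : α → ℝ, ∑ x, f x = 0 → γ * (f ⬝ᵥ f) ≤ dirichletForm P f f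

lemma dotProduct_self_eq_balance_add (f : α → ℝ) :
    f ⬝ᵥ f = balance f ⬝ᵥ balance f + card α * (𝔼 x, f x) ^ 2 := by
  have hexpand (x : α) :
      f x * f x = balance f x * balance f x + 2 * (𝔼 x, f x) * balance f x + (𝔼 x, f x) ^ 2 := by
    rw [balance_apply]; ring
  simp only [dotProduct, hexpand, sum_add_distrib, ← mul_sum, sum_balance, sum_const, card_univ,
    nsmul_eq_mul, mul_zero, add_zero]

lemma lazyMatrix_mulVec (P : Matrix α α ℝ) (f : α → ℝ) :
    lazyMatrix P *ᵥ f = (2 : ℝ)⁻¹ • (f + P *ᵥ f) := by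
  rw [lazyMatrix, smul_mulVec, add_mulVec, one_mulVec]

namespace IsSymmStochastic

lemma mulVec_balance (hP : IsSymmStochastic P) (f : α → ℝ) (x : α) :
    (P *ᵥ balance f) x = (P *ᵥ f) x - 𝔼 y, f y := by
  rw [balance, mulVec_sub, Pi.sub_apply]
  exact congrArg _ (congrFun (hP.mulVec_const _) x)

lemma lazyMatrix_contract (hP : IsSymmStochastic P) (hgap : HasSpectralGap P γ) {f : α → ℝ}
    (hf : ∑ x, f x = 0) :
    (lazyMatrix P *ᵥ f) ⬝ᵥ lazyMatrix P *ᵥ f ≤ Real.exp (-(γ / 2)) * (f ⬝ᵥ f) := by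
  have hexpand : (lazyMatrix P *ᵥ f) ⬝ᵥ lazyMatrix P *ᵥ f =
      4⁻¹ * (f ⬝ᵥ f + 2 * (f ⬝ᵥ P *ᵥ f) + (P *ᵥ f) ⬝ᵥ P *ᵥ f) := by
    simp only [lazyMatrix_mulVec, smul_dotProduct, dotProduct_smul, smul_eq_mul, add_dotProduct,
      dotProduct_add, dotProduct_comm (P *ᵥ f) f]
    ring
  have hnorm := hP.mulVec_dotProduct_self_le f
  have hdir := hgap f hf
  rw [dirichletForm_eq] at hdir
  calc (lazyMatrix P *ᵥ f) ⬝ᵥ lazyMatrix P *ᵥ f ≤ (-(γ / 2) + 1) * (f ⬝ᵥ f) := by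
        rw [hexpand]; linarith
    _ ≤ Real.exp (-(γ / 2)) * (f ⬝ᵥ f) :=
        mul_le_mul_of_nonneg_right (Real.add_one_le_exp _) (dotProduct_self_nonneg f)

lemma lazyMatrix_pow_contract (hP : IsSymmStochastic P) (hgap : HasSpectralGap P γ) {f : α → ℝ}
    (hf : ∑ x, f x = 0) (L : ℕ) :
    (lazyMatrix P ^ L *ᵥ f) ⬝ᵥ lazyMatrix P ^ L *ᵥ f ≤ Real.exp (-(γ / 2 * L)) * (f ⬝ᵥ f) := by
  induction L with
  | zero => simp
  | succ L ih =>
    have hsum : ∑ x, (lazyMatrix P ^ L *ᵥ f) x = 0 := by rw [(hP.lazy.pow L).sum_mulVec, hf]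
    rw [pow_succ', ← mulVec_mulVec]
    calc _ ≤ Real.exp (-(γ / 2)) * ((lazyMatrix P ^ L *ᵥ f) ⬝ᵥ lazyMatrix P ^ L *ᵥ f) :=
          hP.lazyMatrix_contract hgap hsum
      _ ≤ Real.exp (-(γ / 2)) * (Real.exp (-(γ / 2 * L)) * (f ⬝ᵥ f)) := by gcongr
      _ = Real.exp (-(γ / 2 * (L + 1 : ℕ))) * (f ⬝ᵥ f) := by
          rw [← mul_assoc, ← Real.exp_add]
          push_cast
          ring_nf

lemma abs_lazyMatrix_pow_mulVec_sub_expect_le [Nonempty α] (hP : IsSymmStochastic P)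
    (hgap : HasSpectralGap P γ) {f : α → ℝ} {β : ℝ} (hβ : 0 ≤ β)
    (hf : f ⬝ᵥ f ≤ card α * β ^ 2) {L : ℕ} (hL : (card α : ℝ) ^ 3 ≤ Real.exp (γ / 2 * L)) (x : α) :
    |(lazyMatrix P ^ L *ᵥ f) x - 𝔼 y, f y| ≤ β / card α := by
  rw [← (hP.lazy.pow L).mulVec_balance]
  have hbalance : balance f ⬝ᵥ balance f ≤ card α * β ^ 2 := by
    refine le_trans ?_ hf
    rw [dotProduct_self_eq_balance_add f]
    exact le_add_of_nonneg_right (by positivity)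
  have hexp : Real.exp (-(γ / 2 * L)) ≤ ((card α : ℝ) ^ 3)⁻¹ := by
    rw [Real.exp_neg]
    exact inv_anti₀ (by positivity) hL
  refine abs_le_of_sq_le_sq ?_ (by positivity)
  calc (lazyMatrix P ^ L *ᵥ balance f) x ^ 2
      ≤ (lazyMatrix P ^ L *ᵥ balance f) ⬝ᵥ lazyMatrix P ^ L *ᵥ balance f :=
        sq_apply_le_dotProduct_self _ x
    _ ≤ Real.exp (-(γ / 2 * L)) * (balance f ⬝ᵥ balance f) :=
        hP.lazyMatrix_pow_contract hgap (sum_balance f) L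
    _ ≤ ((card α : ℝ) ^ 3)⁻¹ * (card α * β ^ 2) :=
        mul_le_mul hexp hbalance (dotProduct_self_nonneg _) (by positivity)
    _ = (β / card α) ^ 2 := by field_simp

end IsSymmStochastic

end Mixing

section Avoidance

open Matrix Fintype

variable {α : Type*} {P : Matrix α α ℝ} {S : Finset α}

/-- The indicator function of the event that the trajectory `ω` does not visit `S`. -/
def avoidIndicator {t : ℕ} (ω : Fin (t + 1) → α) (S : Finset α) : ℝ :=
  if ∀ s, ω s ∉ S then 1 else 0

lemma avoidIndicator_nonneg {t : ℕ} (ω : Fin (t + 1) → α) (S : Finset α) :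
    0 ≤ avoidIndicator ω S := by
  unfold avoidIndicator
  split_ifs
  exacts [zero_le_one, le_rfl]

lemma avoidIndicator_ne_zero {t : ℕ} {ω : Fin (t + 1) → α} :
    avoidIndicator ω S ≠ 0 ↔ ∀ s, ω s ∉ S := by
  rw [avoidIndicator, ite_ne_right_iff]
  exact and_iff_left one_ne_zero

lemma avoidIndicator_mul {t : ℕ} (ω : Fin (t + 1) → α) (S S' : Finset α) :
    avoidIndicator ω S * avoidIndicator ω S' = avoidIndicator ω (S ∪ S') := by
  simp only [avoidIndicator, ite_zero_mul_ite_zero, mul_one, mem_union, not_or, forall_and]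

/-- The kernel of the chain `P` killed upon hitting `S`. -/
def killedMatrix (P : Matrix α α ℝ) (S : Finset α) : Matrix α α ℝ :=
  Matrix.of fun x y => if x ∈ S ∨ y ∈ S then 0 else P x y

lemma isSymm_killedMatrix (hP : P.IsSymm) (S : Finset α) : (killedMatrix P S).IsSymm := by
  ext x y
  simp only [transpose_apply, killedMatrix, of_apply, or_comm (a := y ∈ S), hP.apply x y]

variable [Fintype α]

lemma killedMatrix_mulVec {f : α → ℝ} (hf : ∀ x ∈ S, f x = 0) (x : α) :
    (killedMatrix P S *ᵥ f) x = if x ∈ S then 0 else (P *ᵥ f) x := by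
  simp only [mulVec, dotProduct, killedMatrix, of_apply]
  split_ifs with hx
  · simp [hx]
  · refine sum_congr rfl fun y _ => ?_
    by_cases hy : y ∈ S <;> simp [hx, hy, hf]

/-- The probability that the chain with kernel `P` started at `x` avoids `S` at the times
`0, …, t`. -/
def avoidProb (P : Matrix α α ℝ) (S : Finset α) (t : ℕ) : α → ℝ :=
  killedMatrix P S ^ t *ᵥ (S : Set α)ᶜ.indicator 1

lemma avoidProb_zero (x : α) : avoidProb P S 0 x = if x ∈ S then 0 else 1 := by
  simp [avoidProb, Set.indicator_apply]

lemma avoidProb_of_mem (t : ℕ) {x : α} (hx : x ∈ S) : avoidProb P S t x = 0 := by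
  cases t with
  | zero => simp [avoidProb_zero, hx]
  | succ t =>
    rw [avoidProb, pow_succ', ← mulVec_mulVec]
    simp [mulVec, dotProduct, killedMatrix, hx]

lemma avoidProb_succ (t : ℕ) (x : α) :
    avoidProb P S (t + 1) x = if x ∈ S then 0 else (P *ᵥ avoidProb P S t) x := by
  rw [← killedMatrix_mulVec fun y hy => avoidProb_of_mem t hy]
  simp only [avoidProb, pow_succ', mulVec_mulVec]

lemma pathSum_avoidIndicator (P : Matrix α α ℝ) (S : Finset α) (t : ℕ) (x : α) :
    pathSum P x t (fun ω => avoidIndicator ω S) = avoidProb P S t x := by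
  unfold avoidIndicator
  induction t generalizing x with
  | zero => simp [pathSum_zero, avoidProb_zero, ite_not]
  | succ t ih =>
    rw [pathSum_cons, avoidProb_succ]
    split_ifs with hx
    · simp [Fin.forall_fin_succ, hx, pathSum]
    · simp only [Fin.forall_fin_succ (n := t + 1), Fin.cons_zero, Fin.cons_succ, hx,
        not_false_eq_true, true_and, ih]
      rfl

namespace IsSymmStochastic

lemma avoidProb_nonneg (hP : IsSymmStochastic P) (S : Finset α) (t : ℕ) :
    0 ≤ avoidProb P S t := by
  induction t with
  | zero => intro x; rw [avoidProb_zero]; split_ifs <;> simp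
  | succ t ih =>
    intro x
    rw [avoidProb_succ]
    split_ifs
    exacts [le_rfl, hP.mulVec_nonneg ih x]

lemma avoidProb_le_one (hP : IsSymmStochastic P) (S : Finset α) (t : ℕ) (x : α) :
    avoidProb P S t x ≤ 1 := by
  induction t generalizing x with
  | zero => rw [avoidProb_zero]; split_ifs <;> simp
  | succ t ih =>
    rw [avoidProb_succ]
    split_ifs
    exacts [zero_le_one, hP.mulVec_le_of_le ih x]

lemma avoidProb_succ_le_mulVec (hP : IsSymmStochastic P) (S : Finset α) (t : ℕ) :
    avoidProb P S (t + 1) ≤ P *ᵥ avoidProb P S t := by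
  intro x
  rw [avoidProb_succ]
  split_ifs
  exacts [hP.mulVec_nonneg (hP.avoidProb_nonneg S t) x, le_rfl]

lemma avoidProb_antitone (hP : IsSymmStochastic P) (S : Finset α) : Antitone (avoidProb P S) := by
  refine antitone_nat_of_succ_le fun t => ?_
  induction t with
  | zero =>
    intro x
    by_cases hx : x ∈ S
    · simp [avoidProb_of_mem _ hx]
    · simpa [avoidProb_zero, hx] using hP.avoidProb_le_one S 1 x
  | succ t ih =>
    intro x
    simp only [avoidProb_succ _ x]
    split_ifs
    exacts [le_rfl, hP.mulVec_mono ih x]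

lemma avoidProb_add_le_lazyMatrix_pow (hP : IsSymmStochastic P) (S : Finset α) (t L : ℕ) :
    avoidProb P S (t + L) ≤ lazyMatrix P ^ L *ᵥ avoidProb P S t := by
  induction L with
  | zero => simp
  | succ L ih =>
    rw [pow_succ', ← mulVec_mulVec]
    refine le_trans (fun x => ?_) (hP.lazy.mulVec_mono ih)
    have hanti := hP.avoidProb_antitone S (Nat.le_succ (t + L)) x
    have hstep := hP.avoidProb_succ_le_mulVec S (t + L) x
    rw [lazyMatrix_mulVec, Pi.smul_apply, Pi.add_apply, smul_eq_mul, ← add_assoc]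
    rw [Nat.succ_eq_add_one] at hanti
    linarith

lemma lazyMatrix_pow_avoidProb_le (hP : IsSymmStochastic P) {t : ℕ} {F : ℝ}
    (hF : ∀ x, avoidProb P S t x ≤ F) (L : ℕ) :
    lazyMatrix P ^ L *ᵥ avoidProb P S t ≤
      avoidProb P S t + F • truncatedGreen (lazyMatrix P) L *ᵥ (S : Set α).indicator 1 := by
  have hstep : lazyMatrix P *ᵥ avoidProb P S t ≤
      avoidProb P S t + F • (S : Set α).indicator 1 := by
    intro x
    simp only [lazyMatrix_mulVec, Pi.smul_apply, Pi.add_apply, smul_eq_mul]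
    by_cases hx : x ∈ S
    · have hmul := hP.mulVec_le_of_le hF x
      have hF0 : 0 ≤ F := (hP.avoidProb_nonneg S t x).trans (hF x)
      simp only [avoidProb_of_mem _ hx, Set.indicator_of_mem (mem_coe.2 hx), Pi.one_apply]
      linarith
    · have hanti := hP.avoidProb_antitone S t.le_succ x
      rw [Nat.succ_eq_add_one, avoidProb_succ, if_neg hx] at hanti
      simp only [Set.indicator_of_notMem (mt mem_coe.1 hx)]
      linarith
  induction L with
  | zero => simp [truncatedGreen]
  | succ L ih =>
    rw [pow_succ, ← mulVec_mulVec]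
    refine ((hP.lazy.pow L).mulVec_mono hstep).trans ?_
    rw [mulVec_add, mulVec_smul, truncatedGreen, sum_range_succ, add_mulVec, smul_add, ← add_assoc]
    exact add_le_add_left ih _

lemma dotProduct_avoidProb (hP : IsSymmStochastic P) (S : Finset α) (i j : ℕ) :
    avoidProb P S i ⬝ᵥ avoidProb P S j = ∑ x, avoidProb P S (i + j) x := by
  have hmul : avoidProb P S i ⬝ᵥ avoidProb P S j =
      avoidProb P S 0 ⬝ᵥ avoidProb P S (i + j) := by
    simp only [avoidProb, pow_zero, one_mulVec]
    rw [← dotProduct_mulVec_of_isSymm ((isSymm_killedMatrix hP.symm S).pow i), mulVec_mulVec,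
      pow_add]
  rw [hmul]
  refine sum_congr rfl fun x _ => ?_
  rw [avoidProb_zero]
  split_ifs with hx
  · simp [avoidProb_of_mem _ hx]
  · rw [one_mul]

end IsSymmStochastic

end Avoidance

section KilledChain

open Matrix Fintype

variable {α : Type*} [Fintype α] {P : Matrix α α ℝ} {S : Finset α} {γ κ : ℝ}

lemma mulVec_dotProduct_self_le_of_abs_le {M : Matrix α α ℝ} (hM : M.IsSymm) {θ : ℝ}
    (hθ : 0 < θ) (h : ∀ f : α → ℝ, |f ⬝ᵥ M *ᵥ f| ≤ θ * (f ⬝ᵥ f)) (f : α → ℝ) :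
    (M *ᵥ f) ⬝ᵥ M *ᵥ f ≤ θ ^ 2 * (f ⬝ᵥ f) := by
  set y := M *ᵥ f with hy
  have hfy : f ⬝ᵥ M *ᵥ y = y ⬝ᵥ y := dotProduct_mulVec_of_isSymm hM f y
  have hadd := (abs_le.1 (h (θ • f + y))).2
  have hsub := (abs_le.1 (h (θ • f - y))).1
  simp only [mulVec_add, mulVec_sub, mulVec_smul, add_dotProduct, sub_dotProduct, dotProduct_add,
    dotProduct_sub, smul_dotProduct, dotProduct_smul, smul_eq_mul, hfy, ← hy,
    dotProduct_comm y f] at hadd hsub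
  have hpolar : 2 * θ * (y ⬝ᵥ y) ≤ 2 * θ * (θ ^ 2 * (f ⬝ᵥ f)) := by linarith
  exact le_of_mul_le_mul_left hpolar (by positivity)

/-- The spectral gap of the chain `P` killed on hitting `S` is at least `κ`: the Dirichlet form
dominates `κ` times the square norm on functions vanishing on `S`. -/
def KilledGap (P : Matrix α α ℝ) (S : Finset α) (κ : ℝ) : Prop :=
  ∀ f : α → ℝ, (∀ x ∈ S, f x = 0) → κ * (f ⬝ᵥ f) ≤ dirichletForm P f f

lemma dotProduct_killedMatrix_mulVec (P : Matrix α α ℝ) (S : Finset α) (f : α → ℝ) :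
    f ⬝ᵥ killedMatrix P S *ᵥ f =
      (S : Set α)ᶜ.indicator f ⬝ᵥ P *ᵥ (S : Set α)ᶜ.indicator f := by
  simp only [dotProduct, mulVec, mul_sum]
  refine sum_congr rfl fun x _ => sum_congr rfl fun y _ => ?_
  by_cases hx : x ∈ S <;> by_cases hy : y ∈ S <;> simp [killedMatrix, hx, hy]

namespace IsSymmStochastic

lemma abs_dotProduct_killedMatrix_mulVec_le (hP : IsSymmStochastic P) (hκ : KilledGap P S κ)
    (f : α → ℝ) : |f ⬝ᵥ killedMatrix P S *ᵥ f| ≤ Real.exp (-κ) * (f ⬝ᵥ f) := by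
  set g : α → ℝ := (S : Set α)ᶜ.indicator |f|
  have hgf : g ⬝ᵥ g ≤ f ⬝ᵥ f := by
    refine sum_le_sum fun x _ => ?_
    by_cases hx : x ∈ S <;> simp [g, hx, mul_self_nonneg]
  have hgap := hκ g fun x hx => by simp [g, hx]
  rw [dirichletForm_eq] at hgap
  have habs : |f ⬝ᵥ killedMatrix P S *ᵥ f| ≤ g ⬝ᵥ P *ᵥ g := by
    rw [← dotProduct_killedMatrix_mulVec]
    simp only [dotProduct, mulVec, mul_sum]
    refine (abs_sum_le_sum_abs _ _).trans (sum_le_sum fun x _ => ?_)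
    refine (abs_sum_le_sum_abs _ _).trans (sum_le_sum fun y _ => ?_)
    have hkilled : 0 ≤ killedMatrix P S x y := by
      rw [killedMatrix, of_apply]
      split_ifs
      exacts [le_rfl, hP.nonneg x y]
    rw [abs_mul, abs_mul, abs_of_nonneg hkilled, Pi.abs_apply, Pi.abs_apply]
  calc |f ⬝ᵥ killedMatrix P S *ᵥ f| ≤ (-κ + 1) * (g ⬝ᵥ g) := by linarith
    _ ≤ Real.exp (-κ) * (g ⬝ᵥ g) :=
        mul_le_mul_of_nonneg_right (Real.add_one_le_exp _) (dotProduct_self_nonneg g)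
    _ ≤ Real.exp (-κ) * (f ⬝ᵥ f) := by gcongr

lemma dotProduct_avoidProb_self_le (hP : IsSymmStochastic P) (hκ : KilledGap P S κ) (t : ℕ) :
    avoidProb P S t ⬝ᵥ avoidProb P S t ≤ card α * Real.exp (-κ * t) ^ 2 := by
  induction t with
  | zero =>
    calc avoidProb P S 0 ⬝ᵥ avoidProb P S 0 ≤ ∑ _x : α, (1 : ℝ) :=
          sum_le_sum fun x _ => by rw [avoidProb_zero]; split_ifs <;> simp
      _ = card α * Real.exp (-κ * (0 : ℕ)) ^ 2 := by simp
  | succ t ih =>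
    have hstep := mulVec_dotProduct_self_le_of_abs_le (isSymm_killedMatrix hP.symm S)
      (Real.exp_pos _) (hP.abs_dotProduct_killedMatrix_mulVec_le hκ) (avoidProb P S t)
    have hsucc : avoidProb P S (t + 1) = killedMatrix P S *ᵥ avoidProb P S t := by
      simp only [avoidProb, pow_succ', mulVec_mulVec]
    rw [hsucc]
    calc _ ≤ Real.exp (-κ) ^ 2 * (card α * Real.exp (-κ * t) ^ 2) :=
          hstep.trans (by gcongr)
      _ = card α * Real.exp (-κ * (t + 1 : ℕ)) ^ 2 := by
          rw [mul_left_comm, ← mul_pow, ← Real.exp_add]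
          push_cast
          ring_nf

lemma expect_avoidProb_le [Nonempty α] (hP : IsSymmStochastic P) (hκ : KilledGap P S κ) (t : ℕ) :
    𝔼 x, avoidProb P S t x ≤ Real.exp (-κ * t) := by
  have hN : (0 : ℝ) < card α := mod_cast card_pos
  have hnorm := hP.dotProduct_avoidProb_self_le hκ t
  rw [dotProduct_self_eq_balance_add] at hnorm
  have hsq := (le_add_of_nonneg_left (dotProduct_self_nonneg _)).trans hnorm
  exact (pow_le_pow_iff_left₀ (expect_nonneg fun x _ => hP.avoidProb_nonneg S t x)
    (Real.exp_pos _).le two_ne_zero).1 (le_of_mul_le_mul_left hsq hN)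

lemma avoidProb_le [Nonempty α] (hP : IsSymmStochastic P) (hgap : HasSpectralGap P γ)
    (hκ0 : 0 ≤ κ) (hκ : KilledGap P S κ) {L : ℕ}
    (hL : (card α : ℝ) ^ 3 ≤ Real.exp (γ / 2 * L)) (t : ℕ) (x : α) :
    avoidProb P S t x ≤ Real.exp (-κ * (t - L)) * (1 + 1 / card α) := by
  rcases le_or_gt L t with htL | htL
  · obtain ⟨s, rfl⟩ := Nat.exists_eq_add_of_le' htL
    have hlazy := hP.avoidProb_add_le_lazyMatrix_pow S s L x
    have hmix := hP.abs_lazyMatrix_pow_mulVec_sub_expect_le hgap (Real.exp_pos _).le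
      (hP.dotProduct_avoidProb_self_le hκ s) hL x
    have hmean := hP.expect_avoidProb_le hκ s
    rw [Nat.cast_add, add_sub_cancel_right, mul_add, mul_one, mul_one_div]
    linarith [(abs_le.1 hmix).2]
  · have hexp : 1 ≤ Real.exp (-κ * (t - L)) := by
      have : (t : ℝ) ≤ L := mod_cast htL.le
      exact Real.one_le_exp (by nlinarith)
    calc avoidProb P S t x ≤ 1 * (1 + 0) := by simpa using hP.avoidProb_le_one S t x
      _ ≤ _ := by gcongr; positivity

lemma le_avoidProb [Nonempty α] (hP : IsSymmStochastic P) (hgap : HasSpectralGap P γ)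
    (hκ : KilledGap P S κ) {t L : ℕ} (hL : (card α : ℝ) ^ 3 ≤ Real.exp (γ / 2 * L)) {F : ℝ}
    (hF : ∀ x, avoidProb P S t x ≤ F) (x : α) :
    𝔼 y, avoidProb P S t y - Real.exp (-κ * t) / card α
      - F * ∑ s ∈ S, truncatedGreen (lazyMatrix P) L x s ≤ avoidProb P S t x := by
  have hgreen := hP.lazyMatrix_pow_avoidProb_le hF L x
  have hmix := hP.abs_lazyMatrix_pow_mulVec_sub_expect_le hgap (Real.exp_pos _).le
    (hP.dotProduct_avoidProb_self_le hκ t) hL x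
  rw [Pi.add_apply, Pi.smul_apply, mulVec_indicator_one, smul_eq_mul] at hgreen
  linarith [(abs_le.1 hmix).1]

end IsSymmStochastic

end KilledChain

section StationaryAvoidance

open Matrix Fintype

lemma logConvex_step {b : ℕ → ℝ} (hb : ∀ i j, b (i + j) ^ 2 ≤ b (i + i) * b (j + j)) {c : ℝ}
    (hc : 0 < c) (hb0 : 0 < b 0) (hb1 : c * b 0 ≤ b 1) (m : ℕ) :
    0 < b (2 * m) ∧ c ^ 2 * b (2 * m) ≤ b (2 * (m + 1)) := by
  induction m with
  | zero =>
    have hsq : (c * b 0) ^ 2 ≤ b 0 * b 2 :=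
      (pow_le_pow_left₀ (by positivity) hb1 2).trans (by simpa using hb 0 1)
    refine ⟨hb0, le_of_mul_le_mul_left (le_trans (le_of_eq ?_) hsq) hb0⟩
    rw [mul_zero]
    ring
  | succ m ih =>
    obtain ⟨hpos, hstep⟩ := ih
    have hpos' : 0 < b (2 * (m + 1)) := (by positivity : 0 < c ^ 2 * b (2 * m)).trans_le hstep
    have hcs : b (2 * (m + 1)) ^ 2 ≤ b (2 * m) * b (2 * (m + 1 + 1)) := by
      have h := hb m (m + 2)
      rwa [show m + (m + 2) = 2 * (m + 1) by ring, ← two_mul m,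
        show m + 2 + (m + 2) = 2 * (m + 1 + 1) by ring] at h
    refine ⟨hpos', le_of_mul_le_mul_left (le_trans ?_ hcs) hpos⟩
    nlinarith [mul_le_mul_of_nonneg_right hstep hpos'.le]

lemma logConvex_lower_bound {b : ℕ → ℝ} (hb : ∀ i j, b (i + j) ^ 2 ≤ b (i + i) * b (j + j))
    (hanti : Antitone b) {c : ℝ} (hc : 0 < c) (hc1 : c ≤ 1) (hb0 : 0 < b 0)
    (hb1 : c * b 0 ≤ b 1) (t : ℕ) : b 0 * c ^ (t + 1) ≤ b t := by
  have heven (m : ℕ) : b 0 * c ^ (2 * m) ≤ b (2 * m) := by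
    induction m with
    | zero => simp
    | succ m ih =>
      calc b 0 * c ^ (2 * (m + 1)) = c ^ 2 * (b 0 * c ^ (2 * m)) := by ring
        _ ≤ c ^ 2 * b (2 * m) := by gcongr
        _ ≤ _ := (logConvex_step hb hc hb0 hb1 m).2
  calc b 0 * c ^ (t + 1) ≤ b 0 * c ^ (2 * ((t + 1) / 2)) :=
        mul_le_mul_of_nonneg_left (pow_le_pow_of_le_one hc.le hc1 (Nat.mul_div_le _ _)) hb0.le
    _ ≤ b (2 * ((t + 1) / 2)) := heven _
    _ ≤ b t := hanti (by omega)

variable {α : Type*} [Fintype α] {P : Matrix α α ℝ} {S : Finset α}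

lemma sum_avoidProb_zero (P : Matrix α α ℝ) (S : Finset α) :
    ∑ x, avoidProb P S 0 x = card α - S.card := by
  have hcompl (x : α) : avoidProb P S 0 x = 1 - if x ∈ S then 1 else 0 := by
    rw [avoidProb_zero]; split_ifs <;> simp
  simp [hcompl]

namespace IsSymmStochastic

lemma le_sum_avoidProb_one (hP : IsSymmStochastic P) (S : Finset α) :
    (card α : ℝ) - 2 * S.card ≤ ∑ x, avoidProb P S 1 x := by
  have hpoint (x : α) :
      (P *ᵥ avoidProb P S 0) x - (if x ∈ S then 1 else 0) ≤ avoidProb P S 1 x := by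
    rw [avoidProb_succ]
    split_ifs
    · linarith [hP.mulVec_le_of_le (hP.avoidProb_le_one S 0) x]
    · simp
  have hsum := sum_le_sum fun x (_ : x ∈ univ) => hpoint x
  rw [sum_sub_distrib, hP.sum_mulVec, sum_avoidProb_zero] at hsum
  simp only [Fintype.sum_ite_mem, sum_const, nsmul_eq_mul, mul_one] at hsum
  linarith

lemma le_sum_avoidProb (hP : IsSymmStochastic P) (hS : 2 * (S.card : ℝ) < card α) (t : ℕ) :
    ((card α : ℝ) - S.card) * (1 - S.card / ((card α : ℝ) - S.card)) ^ (t + 1) ≤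
      ∑ x, avoidProb P S t x := by
  have hS0 : (0 : ℝ) ≤ S.card := Nat.cast_nonneg _
  have hpos : 0 < (card α : ℝ) - S.card := by linarith
  rw [← sum_avoidProb_zero P S] at hpos ⊢
  refine logConvex_lower_bound (b := fun t => ∑ x, avoidProb P S t x) (fun i j => ?_)
    (fun i j hij => sum_le_sum fun x _ => hP.avoidProb_antitone S hij x)
    ?_ (sub_le_self _ (div_nonneg hS0 hpos.le)) hpos ?_ t
  · simpa only [hP.dotProduct_avoidProb] using
      dotProduct_sq_le (avoidProb P S i) (avoidProb P S j)
  · rw [sub_pos, div_lt_one hpos, sum_avoidProb_zero]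
    linarith
  · have hone := hP.le_sum_avoidProb_one S
    rw [sub_mul, one_mul, div_mul_cancel₀ _ hpos.ne', sum_avoidProb_zero]
    linarith

end IsSymmStochastic

end StationaryAvoidance

section KilledGapEstimate

open Matrix Fintype

variable {α : Type*} [Fintype α] {P : Matrix α α ℝ} {S : Finset α} {γ a r : ℝ} {J : ℕ}

lemma dirichletForm_truncatedGreen_mulVec (P : Matrix α α ℝ) (J : ℕ) (f g : α → ℝ) :
    dirichletForm P f (truncatedGreen P J *ᵥ g) = f ⬝ᵥ g - f ⬝ᵥ P ^ J *ᵥ g := by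
  rw [dirichletForm, mulVec_mulVec, truncatedGreen, mul_neg_geom_sum, sub_mulVec, one_mulVec,
    dotProduct_sub]

namespace IsSymmStochastic

lemma dirichletForm_balance (hP : IsSymmStochastic P) (f : α → ℝ) :
    dirichletForm P (balance f) (balance f) = dirichletForm P f f := by
  simp only [hP.dirichletForm_self_eq, balance_apply, sub_sub_sub_cancel_right]

lemma sum_sq_pow_apply (hP : IsSymmStochastic P) (J : ℕ) (s : α) :
    ∑ x, (P ^ J) x s ^ 2 = (P ^ (2 * J)) s s := by
  rw [two_mul, pow_add, Matrix.mul_apply]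
  exact sum_congr rfl fun x _ => by rw [(hP.pow J).apply_comm s x, sq]

lemma pow_mulVec_indicator_dotProduct_self_le (hP : IsSymmStochastic P)
    (hr : ∀ s ∈ S, (P ^ (2 * J)) s s ≤ r) :
    (P ^ J *ᵥ (S : Set α).indicator 1) ⬝ᵥ P ^ J *ᵥ (S : Set α).indicator 1 ≤
      (S.card : ℝ) ^ 2 * r := by
  calc (P ^ J *ᵥ (S : Set α).indicator 1) ⬝ᵥ P ^ J *ᵥ (S : Set α).indicator 1
      = ∑ x, (∑ s ∈ S, (P ^ J) x s) ^ 2 := by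
        simp only [dotProduct, mulVec_indicator_one, sq]
    _ ≤ ∑ x, S.card * ∑ s ∈ S, (P ^ J) x s ^ 2 := by gcongr; exact sq_sum_le_card_mul_sum_sq
    _ = S.card * ∑ s ∈ S, (P ^ (2 * J)) s s := by
        rw [← mul_sum, sum_comm]
        simp only [hP.sum_sq_pow_apply]
    _ ≤ S.card * (S.card * r) := by
        rw [← nsmul_eq_mul S.card r]
        gcongr
        exact sum_le_card_nsmul _ _ _ hr
    _ = _ := by ring

lemma truncatedGreen_mulVec_indicator_le (hP : IsSymmStochastic P) (ha0 : 0 ≤ a)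
    (ha : ∀ x, ∑ s ∈ S, P x s ≤ a) (J : ℕ) (x : α) :
    (truncatedGreen P J *ᵥ (S : Set α).indicator 1) x ≤ 1 + J * a := by
  rw [truncatedGreen, Matrix.sum_mulVec, Finset.sum_apply]
  cases J with
  | zero => simp
  | succ J =>
    have hlater (j : ℕ) : (P ^ (j + 1) *ᵥ (S : Set α).indicator 1) x ≤ a := by
      rw [pow_succ, ← mulVec_mulVec]
      exact (hP.pow j).mulVec_le_of_le (fun y => (mulVec_indicator_one P S y).trans_le (ha y)) x
    have hfirst : (P ^ 0 *ᵥ (S : Set α).indicator 1) x ≤ 1 := by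
      rw [pow_zero, one_mulVec]
      exact Set.indicator_apply_le' (fun _ => le_rfl) fun _ => zero_le_one
    have hsum := sum_le_card_nsmul (range J) _ a fun j _ => hlater j
    rw [sum_range_succ']
    rw [card_range, nsmul_eq_mul] at hsum
    push_cast
    linarith

lemma sq_pow_mulVec_indicator_le (hP : IsSymmStochastic P) (ha0 : 0 ≤ a)
    (ha : ∀ x, ∑ s ∈ S, P x s ≤ a) (J : ℕ) {f : α → ℝ} (hf : ∀ x ∈ S, f x = 0) :
    (f ⬝ᵥ P ^ J *ᵥ (S : Set α).indicator 1) ^ 2 ≤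
      dirichletForm P f f * (S.card * (1 + J * a)) := by
  set ψ := truncatedGreen P J *ᵥ (S : Set α).indicator 1 with hψ
  have hind : 0 ≤ (S : Set α).indicator (1 : α → ℝ) :=
    Set.indicator_nonneg fun _ _ => zero_le_one
  have hψ0 : 0 ≤ ψ := by
    rw [hψ, truncatedGreen, Matrix.sum_mulVec]
    exact sum_nonneg fun j _ => (hP.pow j).mulVec_nonneg hind
  have hdual : dirichletForm P f ψ = -(f ⬝ᵥ P ^ J *ᵥ (S : Set α).indicator 1) := by
    rw [hψ, dirichletForm_truncatedGreen_mulVec, dotProduct_indicator_one, sum_eq_zero hf, zero_sub]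
  have henergy : dirichletForm P ψ ψ ≤ S.card * (1 + J * a) :=
    calc dirichletForm P ψ ψ ≤ ψ ⬝ᵥ (S : Set α).indicator 1 := by
          rw [dirichletForm_truncatedGreen_mulVec]
          exact sub_le_self _ (dotProduct_nonneg_of_nonneg hψ0
            ((hP.pow J).mulVec_nonneg hind))
      _ ≤ S.card * (1 + J * a) := by
          rw [dotProduct_indicator_one, ← nsmul_eq_mul]
          exact sum_le_card_nsmul _ _ _ fun s _ =>
            hP.truncatedGreen_mulVec_indicator_le ha0 ha J s
  calc (f ⬝ᵥ P ^ J *ᵥ (S : Set α).indicator 1) ^ 2 = dirichletForm P f ψ ^ 2 := by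
        rw [hdual, neg_sq]
    _ ≤ dirichletForm P f f * dirichletForm P ψ ψ := hP.dirichletForm_sq_le f ψ
    _ ≤ _ := mul_le_mul_of_nonneg_left henergy (hP.dirichletForm_self_nonneg f)

lemma pow_mulVec_indicator_split (hP : IsSymmStochastic P) (S : Finset α) (J : ℕ) (f : α → ℝ) :
    f ⬝ᵥ P ^ J *ᵥ (S : Set α).indicator 1 =
      balance f ⬝ᵥ P ^ J *ᵥ (S : Set α).indicator 1 + S.card * 𝔼 x, f x := by
  simp only [(hP.pow J).dotProduct_mulVec_comm, dotProduct_indicator_one,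
    (hP.pow J).mulVec_balance, sum_sub_distrib, sum_const, nsmul_eq_mul, sub_add_cancel]

lemma card_mul_expect_sq_le (hP : IsSymmStochastic P) (hγ : 0 < γ) (hgap : HasSpectralGap P γ)
    (hS : S.Nonempty) (ha0 : 0 ≤ a) (ha : ∀ x, ∑ s ∈ S, P x s ≤ a)
    (hr : ∀ s ∈ S, (P ^ (2 * J)) s s ≤ r) {τ : ℝ} (hτ : 0 < τ) {f : α → ℝ}
    (hf : ∀ x ∈ S, f x = 0) :
    S.card * (𝔼 x, f x) ^ 2 ≤
      dirichletForm P f f * ((1 + τ) * (1 + J * a) + (1 + 1 / τ) * (S.card * r / γ)) := by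
  have hk : (0 : ℝ) < S.card := mod_cast hS.card_pos
  set X := f ⬝ᵥ P ^ J *ᵥ (S : Set α).indicator 1 with hX
  set Y := balance f ⬝ᵥ P ^ J *ᵥ (S : Set α).indicator 1 with hY
  have hXY : S.card * 𝔼 x, f x = X - Y := by
    rw [hX, hY, hP.pow_mulVec_indicator_split S J f, add_sub_cancel_left]
  have hXsq : X ^ 2 ≤ dirichletForm P f f * (S.card * (1 + J * a)) :=
    hP.sq_pow_mulVec_indicator_le ha0 ha J hf
  have hbalance : balance f ⬝ᵥ balance f ≤ dirichletForm P f f / γ := by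
    rw [le_div_iff₀' hγ, ← hP.dirichletForm_balance]
    exact hgap _ (sum_balance f)
  have hYsq : Y ^ 2 ≤ dirichletForm P f f / γ * ((S.card : ℝ) ^ 2 * r) :=
    (dotProduct_sq_le _ _).trans (mul_le_mul hbalance
      (hP.pow_mulVec_indicator_dotProduct_self_le hr) (dotProduct_self_nonneg _)
      (div_nonneg (hP.dirichletForm_self_nonneg f) hγ.le))
  have hyoung : (X - Y) ^ 2 ≤ (1 + τ) * X ^ 2 + (1 + 1 / τ) * Y ^ 2 := by
    have hid : (1 + τ) * X ^ 2 + (1 + 1 / τ) * Y ^ 2 - (X - Y) ^ 2 = (τ * X + Y) ^ 2 / τ := by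
      field_simp
      ring
    have hnn : 0 ≤ (τ * X + Y) ^ 2 / τ := by positivity
    linarith
  refine le_of_mul_le_mul_left ?_ hk
  calc (S.card : ℝ) * (S.card * (𝔼 x, f x) ^ 2) = (X - Y) ^ 2 := by rw [← hXY]; ring
    _ ≤ (1 + τ) * X ^ 2 + (1 + 1 / τ) * Y ^ 2 := hyoung
    _ ≤ (1 + τ) * (dirichletForm P f f * (S.card * (1 + J * a))) +
          (1 + 1 / τ) * (dirichletForm P f f / γ * ((S.card : ℝ) ^ 2 * r)) := by gcongr
    _ = _ := by ring

lemma killedGap (hP : IsSymmStochastic P) (hγ : 0 < γ) (hgap : HasSpectralGap P γ)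
    (hS : S.Nonempty) (ha0 : 0 ≤ a) (ha : ∀ x, ∑ s ∈ S, P x s ≤ a)
    (hr : ∀ s ∈ S, (P ^ (2 * J)) s s ≤ r) {τ : ℝ} (hτ : 0 < τ) {θ : ℝ} (hθ1 : θ ≤ 1)
    (hθ : (1 + τ) * (1 + J * a) + (1 + 1 / τ) * (S.card * r / γ) + S.card / (γ * card α) ≤
      1 + θ) :
    KilledGap P S (S.card / card α * (1 - θ)) := by
  intro f hf
  have hk : (0 : ℝ) < S.card := mod_cast hS.card_pos
  have hN : (0 : ℝ) < card α := by
    have : S.card ≤ card α := card_le_univ S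
    exact hk.trans_le (mod_cast this)
  have hE := hP.dirichletForm_self_nonneg f
  have hmean := hP.card_mul_expect_sq_le hγ hgap hS ha0 ha hr hτ hf
  have hbalance : γ * (balance f ⬝ᵥ balance f) ≤ dirichletForm P f f := by
    rw [← hP.dirichletForm_balance]
    exact hgap _ (sum_balance f)
  have hfirst : S.card / card α * (balance f ⬝ᵥ balance f) ≤
      S.card / (γ * card α) * dirichletForm P f f := by
    calc _ = S.card / (γ * card α) * (γ * (balance f ⬝ᵥ balance f)) := by field_simp
      _ ≤ _ := by gcongr
  have htotal : S.card / card α * (f ⬝ᵥ f) ≤ (1 + θ) * dirichletForm P f f := by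
    calc S.card / card α * (f ⬝ᵥ f)
        = S.card / card α * (balance f ⬝ᵥ balance f) + S.card * (𝔼 x, f x) ^ 2 := by
          rw [dotProduct_self_eq_balance_add f]
          field_simp
      _ ≤ ((1 + τ) * (1 + J * a) + (1 + 1 / τ) * (S.card * r / γ) + S.card / (γ * card α)) *
            dirichletForm P f f := by linarith
      _ ≤ _ := mul_le_mul_of_nonneg_right hθ hE
  calc S.card / card α * (1 - θ) * (f ⬝ᵥ f) = (1 - θ) * (S.card / card α * (f ⬝ᵥ f)) := by ring
    _ ≤ (1 - θ) * ((1 + θ) * dirichletForm P f f) :=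
        mul_le_mul_of_nonneg_left htotal (by linarith)
    _ ≤ dirichletForm P f f := by linarith [mul_nonneg (sq_nonneg θ) hE]

end IsSymmStochastic

end KilledGapEstimate

section AvoidanceEstimate

open Matrix Fintype

lemma exp_neg_add_sq_le_one_sub {y : ℝ} (h0 : 0 ≤ y) (h1 : y ≤ 1 / 2) :
    Real.exp (-(y + y ^ 2)) ≤ 1 - y := by
  have hquad := Real.quadratic_le_exp_of_nonneg (by positivity : 0 ≤ y + y ^ 2)
  have hpoly : 1 ≤ (1 + (y + y ^ 2) + (y + y ^ 2) ^ 2 / 2) * (1 - y) := by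
    have h3 : y ^ 3 ≤ (1 / 2) ^ 3 := by gcongr
    have h2 : y ^ 2 ≤ (1 / 2) ^ 2 := by gcongr
    have hid : (1 + (y + y ^ 2) + (y + y ^ 2) ^ 2 / 2) * (1 - y) =
        1 + y ^ 2 * (1 / 2 - y / 2 - y ^ 2 / 2 - y ^ 3 / 2) := by ring
    rw [hid]
    exact le_add_of_nonneg_right (mul_nonneg (sq_nonneg y) (by linarith))
  rw [Real.exp_neg, inv_le_iff_one_le_mul₀' (Real.exp_pos _)]
  exact hpoly.trans (mul_le_mul_of_nonneg_right hquad (by linarith))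

variable {α : Type*} [Fintype α] {P : Matrix α α ℝ} {S : Finset α} {γ θ η : ℝ} {t L : ℕ}

lemma exp_neg_le_one_sub_div_pow {k n T : ℝ} (hk : 0 ≤ k) (hn : 1 ≤ n) (hkn : 4 * k ≤ n)
    (hT : T = t / n) :
    Real.exp (-(k * T)) * (1 - (k / n + 6 * k ^ 2 * (T + 1) / n)) ≤
      (1 - k / (n - k)) ^ (t + 1) := by
  have hn0 : 0 < n := by linarith
  have hnk : 0 < n - k := by linarith
  set v := k / n with hv
  set y := k / (n - k) with hy
  have hv0 : 0 ≤ v := by positivity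
  have hv4 : v ≤ 1 / 4 := by rw [hv, div_le_iff₀ hn0]; linarith
  have hy0 : 0 ≤ y := by positivity
  have hyv : y = v + y * v := by rw [hy, hv]; field_simp; ring
  have hy2 : y ≤ 2 * v := by nlinarith
  have hysum : y + y ^ 2 ≤ v + 6 * v ^ 2 := by nlinarith
  have hexponent : -(k * T) + -(v + 6 * k ^ 2 * (T + 1 / n) / n) =
      (t + 1 : ℕ) * -(v + 6 * v ^ 2) := by
    rw [hv, hT]
    push_cast
    field_simp
    ring
  calc Real.exp (-(k * T)) * (1 - (v + 6 * k ^ 2 * (T + 1) / n))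
      ≤ Real.exp (-(k * T)) * (-(v + 6 * k ^ 2 * (T + 1 / n) / n) + 1) := by
        have hinv : 1 / n ≤ 1 := div_le_one_of_le₀ hn hn0.le
        rw [neg_add_eq_sub]
        gcongr
    _ ≤ Real.exp (-(k * T)) * Real.exp (-(v + 6 * k ^ 2 * (T + 1 / n) / n)) := by
        gcongr
        exact Real.add_one_le_exp _
    _ = Real.exp (-(v + 6 * v ^ 2)) ^ (t + 1) := by
        rw [← Real.exp_add, hexponent, Real.exp_nat_mul]
    _ ≤ Real.exp (-(y + y ^ 2)) ^ (t + 1) := by gcongr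
    _ ≤ (1 - y) ^ (t + 1) := by
        gcongr
        exact exp_neg_add_sq_le_one_sub hy0 (by linarith)

namespace IsSymmStochastic

lemma pow_mul_le_expect_avoidProb [Nonempty α] (hP : IsSymmStochastic P)
    (hS : 4 * (S.card : ℝ) ≤ card α) (t : ℕ) :
    Real.exp (-(t / card α)) ^ S.card * (1 - 8 * S.card ^ 2 * (t / card α + 1) / card α) ≤
      𝔼 x, avoidProb P S t x := by
  have hn : (1 : ℝ) ≤ card α := mod_cast card_pos
  have hk : (0 : ℝ) ≤ S.card := Nat.cast_nonneg _
  have havg := hP.le_sum_avoidProb (S := S) (by linarith) t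
  rw [Fintype.expect_eq_sum_div_card, le_div_iff₀ (by linarith), ← Real.exp_nat_mul, mul_neg]
  refine le_trans ?_ havg
  set T : ℝ := t / card α with hT
  have hT0 : 0 ≤ T := by positivity
  have hpow := exp_neg_le_one_sub_div_pow hk hn hS hT
  have hkk : (S.card : ℝ) ≤ S.card ^ 2 := mod_cast Nat.le_self_pow two_ne_zero _
  have hv : (S.card : ℝ) / card α ≤ S.card ^ 2 * (T + 1) / card α := by
    gcongr
    nlinarith
  set v := (S.card : ℝ) / card α with hvdef
  set w := (S.card : ℝ) ^ 2 * (T + 1) / card α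
  have hv0 : 0 ≤ v := by positivity
  have h8 : 8 * (S.card : ℝ) ^ 2 * (T + 1) / card α = 8 * w := by ring
  have h6 : 6 * (S.card : ℝ) ^ 2 * (T + 1) / card α = 6 * w := by ring
  have hfactor : (1 - 8 * w) * card α ≤ (card α - S.card) * (1 - (v + 6 * w)) := by
    have hcard : (card α : ℝ) - S.card = card α * (1 - v) := by rw [hvdef]; field_simp
    rw [hcard]
    nlinarith [mul_nonneg hv0 (hv0.trans hv)]
  rw [h8, mul_assoc]
  rw [h6] at hpow
  calc Real.exp (-(S.card * T)) * ((1 - 8 * w) * card α)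
      ≤ Real.exp (-(S.card * T)) * ((card α - S.card) * (1 - (v + 6 * w))) := by gcongr
    _ = (card α - S.card) * (Real.exp (-(S.card * T)) * (1 - (v + 6 * w))) := by ring
    _ ≤ _ := mul_le_mul_of_nonneg_left hpow (by linarith)

lemma avoidProb_le_pow [Nonempty α] (hP : IsSymmStochastic P) (hgap : HasSpectralGap P γ)
    (hθ0 : 0 ≤ θ) (hθ1 : θ ≤ 1) (hκ : KilledGap P S (S.card / card α * (1 - θ)))
    (hL : (card α : ℝ) ^ 3 ≤ Real.exp (γ / 2 * L))
    (hη : Real.exp (S.card * (t / card α) * θ + S.card * L / card α) * (1 + 1 / card α) ≤ 1 + η)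
    (x : α) : avoidProb P S t x ≤ (1 + η) * Real.exp (-(t / card α)) ^ S.card := by
  have hexponent : -(S.card / card α * (1 - θ)) * (t - L) ≤
      S.card * (t / card α) * θ + S.card * L / card α + S.card * -(t / card α) := by
    have hnn : 0 ≤ S.card * L / card α * θ := by positivity
    have hid : -(S.card / card α * (1 - θ)) * (t - L) = S.card * (t / card α) * θ +
        S.card * L / card α + S.card * -(t / card α) - S.card * L / card α * θ := by ring
    linarith
  calc avoidProb P S t x
      ≤ Real.exp (-(S.card / card α * (1 - θ)) * (t - L)) * (1 + 1 / card α) :=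
        hP.avoidProb_le hgap (mul_nonneg (by positivity) (by linarith)) hκ hL t x
    _ ≤ Real.exp (S.card * (t / card α) * θ + S.card * L / card α + S.card * -(t / card α)) *
          (1 + 1 / card α) := by gcongr
    _ = Real.exp (S.card * (t / card α) * θ + S.card * L / card α) * (1 + 1 / card α) *
          Real.exp (-(t / card α)) ^ S.card := by
        rw [Real.exp_add, Real.exp_nat_mul, mul_right_comm]
    _ ≤ _ := by gcongr

lemma pow_mul_le_avoidProb [Nonempty α] (hP : IsSymmStochastic P) (hgap : HasSpectralGap P γ)
    (hθ0 : 0 ≤ θ) (hθ1 : θ ≤ 1) (hκ : KilledGap P S (S.card / card α * (1 - θ)))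
    (hL : (card α : ℝ) ^ 3 ≤ Real.exp (γ / 2 * L))
    (hη : Real.exp (S.card * (t / card α) * θ + S.card * L / card α) * (1 + 1 / card α) ≤ 1 + η)
    (hη1 : η ≤ 1) (hS : 4 * (S.card : ℝ) ≤ card α)
    (hη2 : 8 * S.card ^ 2 * (t / card α + 1) / card α + 2 / card α ≤ η) (x : α) :
    Real.exp (-(t / card α)) ^ S.card *
      (1 - η - 2 * ∑ s ∈ S, truncatedGreen (lazyMatrix P) L x s) ≤ avoidProb P S t x := by
  have hlower := hP.le_avoidProb hgap hκ hL (hP.avoidProb_le_pow hgap hθ0 hθ1 hκ hL hη) x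
  have hmean := hP.pow_mul_le_expect_avoidProb hS t
  set q := Real.exp (-(t / card α : ℝ)) with hq
  set Γ := ∑ s ∈ S, truncatedGreen (lazyMatrix P) L x s
  have hΓ : 0 ≤ Γ := sum_nonneg fun s _ => hP.lazy.truncatedGreen_nonneg L x s
  have herror : Real.exp (-(S.card / card α * (1 - θ)) * t) / card α ≤ q ^ S.card * (2 / card α) :=
    calc _ = Real.exp (S.card * (t / card α) * θ) * q ^ S.card / card α := by
          rw [hq, ← Real.exp_nat_mul, ← Real.exp_add]
          ring_nf
      _ ≤ 2 * q ^ S.card / card α := by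
          have hle : Real.exp (S.card * (t / card α) * θ) * (1 + 0) ≤
              Real.exp (S.card * (t / card α) * θ + S.card * L / card α) * (1 + 1 / card α) := by
            gcongr
            · exact le_add_of_nonneg_right (by positivity)
            · positivity
          gcongr
          linarith
      _ = q ^ S.card * (2 / card α) := by ring
  have hgreen : (1 + η) * q ^ S.card * Γ ≤ 2 * q ^ S.card * Γ := by gcongr; linarith
  have hmain := mul_le_mul_of_nonneg_left hη2 (by positivity : 0 ≤ q ^ S.card)
  linarith

end IsSymmStochastic

end AvoidanceEstimate

section OutwardExpansion

variable {α : Type*} [Fintype α] {G : SimpleGraph α} {d : ℕ} {R ρ z : ℝ}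

lemma hasSpectralGap_of_spectralGapLB [DecidableEq α] {g γ : ℝ} (hg : SpectralGapLB G d g)
    (hγ : γ ≤ 2 * g) : HasSpectralGap (simpleStep G d) γ := by
  intro f hf
  have hlazy : lazyStep G d = lazyMatrix (simpleStep G d) := by
    ext u v
    simp only [lazyStep, lazyMatrix, simpleStep, Matrix.of_apply, Matrix.smul_apply,
      Matrix.add_apply, Matrix.one_apply, smul_eq_mul]
    split_ifs <;> ring
  have hquad : ∑ u, ∑ v, f u * lazyStep G d u v * f v =
      2⁻¹ * (f ⬝ᵥ f + f ⬝ᵥ simpleStep G d *ᵥ f) := by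
    rw [← dotProduct_add, ← smul_eq_mul, ← dotProduct_smul, ← lazyMatrix_mulVec, hlazy]
    simp only [dotProduct, Matrix.mulVec, mul_sum, mul_assoc]
  have hsq : ∑ v, f v ^ 2 = f ⬝ᵥ f := sum_congr rfl fun v _ => sq (f v)
  have hgf := hg f hf
  rw [hquad, hsq] at hgf
  rw [dirichletForm_eq]
  linarith [mul_le_mul_of_nonneg_right hγ (dotProduct_self_nonneg f)]

lemma simpleStep_mulVec (G : SimpleGraph α) (d : ℕ) (f : α → ℝ) (x : α) :
    (simpleStep G d *ᵥ f) x = (d : ℝ)⁻¹ * ∑ y with G.Adj x y, f y := by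
  simp only [Matrix.mulVec, dotProduct, simpleStep, Matrix.of_apply, ite_mul, zero_mul, mul_sum,
    sum_filter, mul_ite, mul_zero]

/-- A connected `d`-regular graph satisfying property P3 with constant `ρ` up to distance `R`:
seen from any vertex, a vertex at distance `r ≤ R` has at most `ρ * r` neighbours that are not
farther away than itself. -/
structure IsOutwardExpanding (G : SimpleGraph α) (d : ℕ) (R ρ : ℝ) : Prop where
  degree_pos : 0 < d
  card_adj (x : α) : #{y | G.Adj x y} = d
  connected : G.Connected
  rho_nonneg : 0 ≤ ρ
  card_inward_le (a y : α) : (G.dist a y : ℝ) ≤ R →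
    (#{w | G.Adj y w ∧ G.dist w a ≤ G.dist a y} : ℝ) ≤ ρ * G.dist a y

/-- The factor by which one step of the simple random walk decreases the potential
`w ↦ z⁻¹ ^ dist w a` within distance `R` of `a`. -/
def decayFactor (d : ℕ) (R ρ z : ℝ) : ℝ := z⁻¹ + ρ * R * z / d

namespace IsOutwardExpanding

lemma isSymmStochastic (hG : IsOutwardExpanding G d R ρ) :
    IsSymmStochastic (simpleStep G d) where
  symm := Matrix.IsSymm.ext fun x y => by simp only [simpleStep, Matrix.of_apply, G.adj_comm]
  stochastic := by
    refine Matrix.mem_rowStochastic.2 ⟨fun x y => ?_, ?_⟩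
    · simp only [simpleStep, Matrix.of_apply]
      split_ifs <;> positivity
    · ext x
      have hd : (d : ℝ) ≠ 0 := by exact_mod_cast hG.degree_pos.ne'
      simp [simpleStep_mulVec, hG.card_adj, hd]

lemma dist_le_add_one (hG : IsOutwardExpanding G d R ρ) {x y : α} (hxy : G.Adj x y) (a : α) :
    G.dist x a ≤ G.dist y a + 1 := by
  have htri := hG.connected.dist_triangle (u := x) (v := y) (w := a)
  rw [SimpleGraph.dist_eq_one_iff_adj.2 hxy] at htri
  lia

lemma decayFactor_nonneg (hG : IsOutwardExpanding G d R ρ) (hz : 1 ≤ z) (hR : 0 ≤ R) :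
    0 ≤ decayFactor d R ρ z := by
  have hρ := hG.rho_nonneg
  unfold decayFactor
  positivity

lemma mulVec_pow_dist_le (hG : IsOutwardExpanding G d R ρ) (hz : 1 ≤ z) {a y : α}
    (hay : (G.dist a y : ℝ) ≤ R) :
    (simpleStep G d *ᵥ fun w => z⁻¹ ^ G.dist w a) y ≤
      decayFactor d R ρ z * z⁻¹ ^ G.dist y a := by
  have hd : (0 : ℝ) < d := by exact_mod_cast hG.degree_pos
  have hz1 : z⁻¹ ≤ 1 := inv_le_one_of_one_le₀ hz
  rw [simpleStep_mulVec, decayFactor]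
  set r := G.dist y a
  have hcomm : G.dist a y = r := SimpleGraph.dist_comm
  have hterm : ∀ w ∈ ({w | G.Adj y w} : Finset α), z⁻¹ ^ G.dist w a ≤
      z⁻¹ ^ (r + 1) + if G.dist w a ≤ G.dist a y then z * z⁻¹ ^ r else 0 := by
    intro w hw
    split_ifs with hin
    · have hback : z⁻¹ ^ (G.dist w a + 1) ≤ z⁻¹ ^ r :=
        pow_le_pow_of_le_one (by positivity) hz1 (hG.dist_le_add_one (mem_filter_univ w |>.1 hw) a)
      calc z⁻¹ ^ G.dist w a = z * z⁻¹ ^ (G.dist w a + 1) := by rw [pow_succ]; field_simp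
        _ ≤ z * z⁻¹ ^ r := by gcongr
        _ ≤ _ := le_add_of_nonneg_left (by positivity)
    · rw [add_zero]
      exact pow_le_pow_of_le_one (by positivity) hz1 (by lia)
  have hinward : (#{w | G.Adj y w ∧ G.dist w a ≤ G.dist a y} : ℝ) ≤ ρ * R :=
    (hG.card_inward_le a y hay).trans (mul_le_mul_of_nonneg_left hay hG.rho_nonneg)
  calc (d : ℝ)⁻¹ * ∑ w with G.Adj y w, z⁻¹ ^ G.dist w a
      ≤ (d : ℝ)⁻¹ * ∑ w with G.Adj y w,
          (z⁻¹ ^ (r + 1) + if G.dist w a ≤ G.dist a y then z * z⁻¹ ^ r else 0) := by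
        gcongr with w hw
        exact hterm w hw
    _ = (d : ℝ)⁻¹ * (d * z⁻¹ ^ (r + 1) +
          #{w | G.Adj y w ∧ G.dist w a ≤ G.dist a y} * (z * z⁻¹ ^ r)) := by
        rw [sum_add_distrib, sum_const, hG.card_adj, ← sum_filter, filter_filter, sum_const,
          nsmul_eq_mul, nsmul_eq_mul]
    _ ≤ (d : ℝ)⁻¹ * (d * z⁻¹ ^ (r + 1) + ρ * R * (z * z⁻¹ ^ r)) := by gcongr
    _ = (z⁻¹ + ρ * R * z / d) * z⁻¹ ^ r := by rw [pow_succ]; field_simp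

lemma pow_mulVec_pow_dist_le (hG : IsOutwardExpanding G d R ρ) (hz : 1 ≤ z) {a y : α} {m : ℕ}
    (hm : (G.dist y a : ℝ) + m ≤ R) :
    (simpleStep G d ^ m *ᵥ fun w => z⁻¹ ^ G.dist w a) y ≤
      decayFactor d R ρ z ^ m * z⁻¹ ^ G.dist y a := by
  have hR : 0 ≤ R := le_trans (by positivity) hm
  induction m generalizing y with
  | zero => simp
  | succ m ih =>
    push_cast at hm
    rw [pow_succ', ← Matrix.mulVec_mulVec, simpleStep_mulVec]
    have hnear (w : α) (hw : G.Adj y w) : (G.dist w a : ℝ) + m ≤ R := by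
      have hdist : (G.dist w a : ℝ) ≤ G.dist y a + 1 := by
        exact_mod_cast hG.dist_le_add_one hw.symm a
      linarith
    calc (d : ℝ)⁻¹ * ∑ w with G.Adj y w, (simpleStep G d ^ m *ᵥ fun w => z⁻¹ ^ G.dist w a) w
        ≤ (d : ℝ)⁻¹ * ∑ w with G.Adj y w, decayFactor d R ρ z ^ m * z⁻¹ ^ G.dist w a := by
          gcongr with w hw
          exact ih (hnear w (mem_filter_univ w |>.1 hw))
      _ = decayFactor d R ρ z ^ m * (simpleStep G d *ᵥ fun w => z⁻¹ ^ G.dist w a) y := by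
          rw [simpleStep_mulVec, ← mul_sum, mul_left_comm]
      _ ≤ decayFactor d R ρ z ^ m * (decayFactor d R ρ z * z⁻¹ ^ G.dist y a) := by
          refine mul_le_mul_of_nonneg_left (hG.mulVec_pow_dist_le hz ?_)
            (pow_nonneg (hG.decayFactor_nonneg hz hR) m)
          rw [SimpleGraph.dist_comm]
          linarith [Nat.cast_nonneg (α := ℝ) m]
      _ = decayFactor d R ρ z ^ (m + 1) * z⁻¹ ^ G.dist y a := by ring

lemma pow_apply_self_le (hG : IsOutwardExpanding G d R ρ) (hz : 1 ≤ z) {m : ℕ} (hm : (m : ℝ) ≤ R)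
    (s : α) : (simpleStep G d ^ m) s s ≤ decayFactor d R ρ z ^ m := by
  have hpotential : Set.indicator ({s} : Finset α) 1 ≤ fun w => z⁻¹ ^ G.dist w s := by
    refine Set.indicator_le' (fun w hw => ?_) fun w _ => by positivity
    simp [mem_singleton.1 (mem_coe.1 hw)]
  calc (simpleStep G d ^ m) s s
      = (simpleStep G d ^ m *ᵥ Set.indicator ({s} : Finset α) 1) s := by
        rw [mulVec_indicator_one, sum_singleton]
    _ ≤ (simpleStep G d ^ m *ᵥ fun w => z⁻¹ ^ G.dist w s) s :=
        (hG.isSymmStochastic.pow m).mulVec_mono hpotential s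
    _ ≤ decayFactor d R ρ z ^ m * z⁻¹ ^ G.dist s s :=
        hG.pow_mulVec_pow_dist_le hz (by simpa using hm)
    _ = decayFactor d R ρ z ^ m := by simp

lemma dist_le_two {x y w : α} (hG : IsOutwardExpanding G d R ρ) (hxw : G.Adj x w)
    (hyw : G.Adj y w) : G.dist x y ≤ 2 := by
  have h := hG.dist_le_add_one hxw y
  rwa [SimpleGraph.dist_eq_one_iff_adj.2 hyw.symm] at h

lemma card_common_adj_le (hG : IsOutwardExpanding G d R ρ) (hR : 2 ≤ R) {x y : α} (hxy : x ≠ y) :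
    (#{w | G.Adj x w ∧ G.Adj y w} : ℝ) ≤ 2 * ρ := by
  have hρ := hG.rho_nonneg
  obtain hempty | ⟨w₀, hw₀⟩ := eq_empty_or_nonempty ({w | G.Adj x w ∧ G.Adj y w} : Finset α)
  · rw [hempty, card_empty, Nat.cast_zero]
    positivity
  rw [mem_filter_univ] at hw₀
  have hdist : (G.dist x y : ℝ) ≤ 2 := by exact_mod_cast hG.dist_le_two hw₀.1 hw₀.2
  have hpos : 0 < G.dist x y := hG.connected.pos_dist_of_ne hxy
  have hinward (w : α) (hw : G.Adj x w ∧ G.Adj y w) : G.Adj y w ∧ G.dist w x ≤ G.dist x y :=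
    ⟨hw.2, by rwa [SimpleGraph.dist_eq_one_iff_adj.2 hw.1.symm]⟩
  calc (#{w | G.Adj x w ∧ G.Adj y w} : ℝ)
      ≤ #{w | G.Adj y w ∧ G.dist w x ≤ G.dist x y} := by
        exact_mod_cast card_le_card (monotone_filter_right _ fun w _ => hinward w)
    _ ≤ ρ * G.dist x y := hG.card_inward_le x y (hdist.trans hR)
    _ ≤ 2 * ρ := by linarith [mul_le_mul_of_nonneg_left hdist hρ]

end IsOutwardExpanding

end OutwardExpansion

section PathPairs

variable {α : Type*} [Fintype α] {M M' : Matrix α α ℝ} {x : α} {t : ℕ}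
  {F F' : (Fin (t + 1) → α) → (Fin (t + 1) → α) → ℝ}

/-- The sum of `F` over the pairs of paths of length `t` started at `x`, both weighted by the
kernel `M`; for a stochastic kernel this is an expectation over two independent chains. -/
def pairSum (M : Matrix α α ℝ) (x : α) (t : ℕ)
    (F : (Fin (t + 1) → α) → (Fin (t + 1) → α) → ℝ) : ℝ :=
  pathSum M x t fun p => pathSum M x t (F p)

lemma pairSum_add (F F' : (Fin (t + 1) → α) → (Fin (t + 1) → α) → ℝ) :
    pairSum M x t (fun p p' => F p p' + F' p p') = pairSum M x t F + pairSum M x t F' := by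
  simp only [pairSum, pathSum_add]

lemma pairSum_const_mul (c : ℝ) (F : (Fin (t + 1) → α) → (Fin (t + 1) → α) → ℝ) :
    pairSum M x t (fun p p' => c * F p p') = c * pairSum M x t F := by
  simp only [pairSum, pathSum_const_mul]

lemma pairSum_mul (F F' : (Fin (t + 1) → α) → ℝ) :
    pairSum M x t (fun p p' => F p * F' p') = pathSum M x t F * pathSum M x t F' := by
  simp only [pairSum, pathSum_const_mul, mul_comm _ (pathSum M x t F')]

lemma pairSum_mono (hM : ∀ x y, 0 ≤ M x y)
    (h : ∀ p p', pathWeight M x p ≠ 0 → pathWeight M x p' ≠ 0 → F p p' ≤ F' p p') :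
    pairSum M x t F ≤ pairSum M x t F' :=
  pathSum_mono hM fun p hp => pathSum_mono hM fun p' hp' => h p p' hp hp'

lemma pairSum_mono_kernel (hM : ∀ x y, 0 ≤ M x y) (hMM : ∀ x y, M x y ≤ M' x y)
    (h : ∀ p p', 0 ≤ F p p') : pairSum M x t F ≤ pairSum M' x t F :=
  (pathSum_mono hM fun p _ => pathSum_mono_kernel hM hMM (h p)).trans
    (pathSum_mono_kernel hM hMM fun p =>
      pathSum_nonneg (fun x y => (hM x y).trans (hMM x y)) (h p))

lemma pairSum_zero (F : (Fin 1 → α) → (Fin 1 → α) → ℝ) :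
    pairSum M x 0 F = F (fun _ => x) fun _ => x := by
  simp only [pairSum, pathSum_zero]

lemma pairSum_snoc (F : (Fin (t + 2) → α) → (Fin (t + 2) → α) → ℝ) :
    pairSum M x (t + 1) F = pairSum M x t fun p p' =>
      ∑ y, ∑ y', M (p (Fin.last t)) y * M (p' (Fin.last t)) y' *
        F (Fin.snoc p y) (Fin.snoc p' y') := by
  simp only [pairSum, pathSum_snoc, pathSum_sum, ← pathSum_const_mul, mul_sum, mul_assoc]

lemma pairSum_cons (F : (Fin (t + 2) → α) → (Fin (t + 2) → α) → ℝ) :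
    pairSum M x (t + 1) F = ∑ y, ∑ y', M x y * M x y' *
      pathSum M y t fun p => pathSum M y' t fun p' => F (Fin.cons x p) (Fin.cons x p') := by
  simp only [pairSum, pathSum_cons, pathSum_sum, pathSum_const_mul, mul_sum, mul_assoc]

lemma pairSum_init (hM : ∀ x, ∑ y, M x y = 1) (F : (Fin (t + 1) → α) → (Fin (t + 1) → α) → ℝ) :
    pairSum M x (t + 1) (fun p p' => F (Fin.init p) (Fin.init p')) = pairSum M x t F := by
  simp only [pairSum_snoc, Fin.init_snoc, ← sum_mul, ← mul_sum, hM, one_mul]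

/-- The number of times `i ≥ 1` at which two paths are at the same vertex. -/
def coincidences {α : Type*} {t : ℕ} (p p' : Fin (t + 1) → α) : ℕ :=
  #{i : Fin t | p i.succ = p' i.succ}

lemma coincidences_zero {α : Type*} (p p' : Fin 1 → α) : coincidences p p' = 0 := by
  simp [coincidences]

lemma coincidences_snoc {α : Type*} (p p' : Fin (t + 1) → α) (y y' : α) :
    coincidences (Fin.snoc p y : Fin (t + 2) → α) (Fin.snoc p' y') =
      coincidences p p' + if y = y' then 1 else 0 := by
  simp only [coincidences, card_filter, Fin.sum_univ_castSucc, Fin.succ_castSucc,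
    Fin.snoc_castSucc, Fin.succ_last, Fin.snoc_last]

lemma coincidences_eq_init_add {α : Type*} (p p' : Fin (t + 2) → α) :
    coincidences p p' = coincidences (Fin.init p : Fin (t + 1) → α) (Fin.init p') +
      if p (Fin.last (t + 1)) = p' (Fin.last (t + 1)) then 1 else 0 := by
  rw [← coincidences_snoc]
  exact congrArg₂ coincidences (Fin.snoc_init_self p).symm (Fin.snoc_init_self p').symm

lemma coincidences_cons {α : Type*} (p p' : Fin (t + 1) → α) (y y' : α) :
    coincidences (Fin.cons y p : Fin (t + 2) → α) (Fin.cons y' p') =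
      (if p 0 = p' 0 then 1 else 0) + coincidences p p' := by
  simp only [coincidences, card_filter, Fin.sum_univ_succ, Fin.cons_succ]

end PathPairs

section PairPotential

variable {α : Type*} [Fintype α] {G : SimpleGraph α} {d : ℕ} {R ρ z b : ℝ}

/-- The factor by which one step of two independent simple random walks decreases the expectation
of `b ^ coincidences p p' * z⁻¹ ^ dist`, with `dist` the distance between the two endpoints. -/
def pairFactor (d : ℕ) (R ρ z b : ℝ) : ℝ :=
  decayFactor d R ρ z ^ 2 + b * (1 / d + 2 * ρ * z ^ 2 / d ^ 2)

lemma sum_simpleStep_mul_simpleStep (G : SimpleGraph α) (d : ℕ) (x x' : α) :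
    ∑ y, simpleStep G d x y * simpleStep G d x' y =
      #{w | G.Adj x w ∧ G.Adj x' w} / (d : ℝ) ^ 2 := by
  simp only [simpleStep, Matrix.of_apply, ite_zero_mul_ite_zero, ← sum_filter, sum_const,
    nsmul_eq_mul, div_eq_mul_inv, sq, mul_inv]

namespace IsOutwardExpanding

lemma pairFactor_nonneg (hG : IsOutwardExpanding G d R ρ) (hb : 0 ≤ b) :
    0 ≤ pairFactor d R ρ z b := by
  have hρ := hG.rho_nonneg
  unfold pairFactor
  positivity

lemma dist_apply_le (hG : IsOutwardExpanding G d R ρ) {x : α} {t : ℕ} {p : Fin (t + 1) → α}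
    (hp : pathWeight (simpleStep G d) x p ≠ 0) (i : Fin (t + 1)) : G.dist (p i) x ≤ i := by
  rw [pathWeight_ne_zero] at hp
  induction i using Fin.induction with
  | zero => rw [hp.1, SimpleGraph.dist_self, Fin.val_zero]
  | succ i ih =>
    have hadj : G.Adj (p i.castSucc) (p i.succ) := by
      by_contra h
      exact hp.2 i (by rw [simpleStep, Matrix.of_apply, if_neg h])
    have hstep := hG.dist_le_add_one hadj.symm x
    rw [Fin.val_castSucc] at ih
    rw [Fin.val_succ]
    lia

lemma sum_sum_pow_dist_le (hG : IsOutwardExpanding G d R ρ) (hz : 1 ≤ z) {x x' : α}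
    (hR : (G.dist x x' : ℝ) + 1 ≤ R) :
    ∑ y, ∑ y', simpleStep G d x y * simpleStep G d x' y' * z⁻¹ ^ G.dist y y' ≤
      decayFactor d R ρ z ^ 2 * z⁻¹ ^ G.dist x x' := by
  have hR0 : 0 ≤ R := le_trans (by positivity) hR
  have hinner (y : α) (hy : G.Adj x y) : (simpleStep G d *ᵥ fun w => z⁻¹ ^ G.dist w y) x' ≤
      decayFactor d R ρ z * z⁻¹ ^ G.dist y x' := by
    have hdist : (G.dist y x' : ℝ) ≤ G.dist x x' + 1 := by
      exact_mod_cast hG.dist_le_add_one hy.symm x'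
    rw [SimpleGraph.dist_comm (u := y)]
    exact hG.mulVec_pow_dist_le hz (hdist.trans hR)
  calc ∑ y, ∑ y', simpleStep G d x y * simpleStep G d x' y' * z⁻¹ ^ G.dist y y'
      = (simpleStep G d *ᵥ fun y => (simpleStep G d *ᵥ fun w => z⁻¹ ^ G.dist w y) x') x := by
        simp only [Matrix.mulVec, dotProduct, mul_sum, mul_assoc, SimpleGraph.dist_comm]
    _ ≤ decayFactor d R ρ z * (simpleStep G d *ᵥ fun y => z⁻¹ ^ G.dist y x') x := by
        rw [simpleStep_mulVec, simpleStep_mulVec, mul_left_comm,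
          mul_sum _ _ (decayFactor d R ρ z)]
        gcongr with y hy
        exact hinner y ((mem_filter_univ y).1 hy)
    _ ≤ decayFactor d R ρ z * (decayFactor d R ρ z * z⁻¹ ^ G.dist x x') := by
        refine mul_le_mul_of_nonneg_left (hG.mulVec_pow_dist_le hz ?_)
          (hG.decayFactor_nonneg hz hR0)
        rw [SimpleGraph.dist_comm]
        linarith
    _ = decayFactor d R ρ z ^ 2 * z⁻¹ ^ G.dist x x' := by ring

lemma sum_mul_le (hG : IsOutwardExpanding G d R ρ) (hz : 1 ≤ z) (hR : 2 ≤ R) (x x' : α) :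
    ∑ y, simpleStep G d x y * simpleStep G d x' y ≤
      (1 / d + 2 * ρ * z ^ 2 / d ^ 2) * z⁻¹ ^ G.dist x x' := by
  have hρ := hG.rho_nonneg
  have hd : (d : ℝ) ≠ 0 := by exact_mod_cast hG.degree_pos.ne'
  rw [sum_simpleStep_mul_simpleStep]
  obtain rfl | hne := eq_or_ne x x'
  · simp only [and_self, hG.card_adj, SimpleGraph.dist_self, pow_zero, mul_one]
    rw [sq, div_mul_cancel_left₀ hd, one_div]
    exact le_add_of_nonneg_right (by positivity)
  obtain hempty | ⟨w, hw⟩ := eq_empty_or_nonempty ({w | G.Adj x w ∧ G.Adj x' w} : Finset α)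
  · rw [hempty, card_empty, Nat.cast_zero, zero_div]
    positivity
  rw [mem_filter_univ] at hw
  have hpow : 1 ≤ z ^ 2 * z⁻¹ ^ G.dist x x' := by
    calc (1 : ℝ) = z ^ 2 * z⁻¹ ^ 2 := by field_simp
      _ ≤ z ^ 2 * z⁻¹ ^ G.dist x x' := mul_le_mul_of_nonneg_left
          (pow_le_pow_of_le_one (by positivity) (inv_le_one_of_one_le₀ hz)
            (hG.dist_le_two hw.1 hw.2)) (by positivity)
  calc (#{w | G.Adj x w ∧ G.Adj x' w} : ℝ) / (d : ℝ) ^ 2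
      ≤ 2 * ρ / d ^ 2 * 1 := by
        rw [mul_one]
        gcongr
        exact hG.card_common_adj_le hR hne
    _ ≤ 2 * ρ / d ^ 2 * (z ^ 2 * z⁻¹ ^ G.dist x x') := by gcongr
    _ = 2 * ρ * z ^ 2 / d ^ 2 * z⁻¹ ^ G.dist x x' := by ring
    _ ≤ (1 / d + 2 * ρ * z ^ 2 / d ^ 2) * z⁻¹ ^ G.dist x x' := by
        gcongr
        exact le_add_of_nonneg_left (by positivity)

lemma sum_sum_pair_potential_le (hG : IsOutwardExpanding G d R ρ) (hz : 1 ≤ z) (hb : 0 ≤ b)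
    (hR : 2 ≤ R) {x x' : α} (hdist : (G.dist x x' : ℝ) + 1 ≤ R) :
    ∑ y, ∑ y', simpleStep G d x y * simpleStep G d x' y' *
        (b ^ (if y = y' then 1 else 0) * z⁻¹ ^ G.dist y y') ≤
      pairFactor d R ρ z b * z⁻¹ ^ G.dist x x' := by
  have hP := hG.isSymmStochastic
  calc ∑ y, ∑ y', simpleStep G d x y * simpleStep G d x' y' *
        (b ^ (if y = y' then 1 else 0) * z⁻¹ ^ G.dist y y')
      ≤ ∑ y, ∑ y', (simpleStep G d x y * simpleStep G d x' y' * z⁻¹ ^ G.dist y y' +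
          if y = y' then b * (simpleStep G d x y * simpleStep G d x' y') else 0) := by
        gcongr with y _ y' _
        have hPP := mul_nonneg (hP.nonneg x y) (hP.nonneg x' y')
        split_ifs with h
        · rw [h, SimpleGraph.dist_self, pow_zero, pow_one, mul_one, mul_one, mul_comm _ b]
          rw [h] at hPP
          linarith
        · simp
    _ = ∑ y, ∑ y', simpleStep G d x y * simpleStep G d x' y' * z⁻¹ ^ G.dist y y' +
          b * ∑ y, simpleStep G d x y * simpleStep G d x' y := by
        simp only [sum_add_distrib, sum_ite_eq, mem_univ, if_true, mul_sum]
    _ ≤ decayFactor d R ρ z ^ 2 * z⁻¹ ^ G.dist x x' +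
          b * ((1 / d + 2 * ρ * z ^ 2 / d ^ 2) * z⁻¹ ^ G.dist x x') :=
        add_le_add (hG.sum_sum_pow_dist_le hz hdist)
          (mul_le_mul_of_nonneg_left (hG.sum_mul_le hz hR x x') hb)
    _ = pairFactor d R ρ z b * z⁻¹ ^ G.dist x x' := by unfold pairFactor; ring

lemma pairSum_potential_le (hG : IsOutwardExpanding G d R ρ) (hz : 1 ≤ z) (hb : 0 ≤ b)
    (hR : 2 ≤ R) (x : α) {t : ℕ} (ht : 2 * (t : ℝ) ≤ R) :
    pairSum (simpleStep G d) x t (fun p p' =>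
        b ^ coincidences p p' * z⁻¹ ^ G.dist (p (Fin.last t)) (p' (Fin.last t))) ≤
      pairFactor d R ρ z b ^ t := by
  induction t with
  | zero => simp [pairSum_zero, coincidences_zero]
  | succ t ih =>
    push_cast at ht
    rw [pairSum_snoc, pow_succ']
    refine le_trans ?_ (mul_le_mul_of_nonneg_left (ih (by linarith)) (hG.pairFactor_nonneg hb))
    rw [← pairSum_const_mul]
    refine pairSum_mono hG.isSymmStochastic.nonneg fun p p' hp hp' => ?_
    set y₀ := p (Fin.last t)
    set y₀' := p' (Fin.last t)
    have hdist : (G.dist y₀ y₀' : ℝ) + 1 ≤ R := by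
      have htri := hG.connected.dist_triangle (u := y₀) (v := x) (w := y₀')
      have h : G.dist y₀ x ≤ t := hG.dist_apply_le hp (Fin.last t)
      have h' : G.dist y₀' x ≤ t := hG.dist_apply_le hp' (Fin.last t)
      rw [SimpleGraph.dist_comm (u := x)] at htri
      have hle : (G.dist y₀ y₀' : ℝ) ≤ t + t := by exact_mod_cast htri.trans (add_le_add h h')
      linarith
    calc ∑ y, ∑ y', simpleStep G d y₀ y * simpleStep G d y₀' y' *
          (b ^ coincidences (Fin.snoc p y : Fin (t + 2) → α) (Fin.snoc p' y') *
            z⁻¹ ^ G.dist ((Fin.snoc p y : Fin (t + 2) → α) (Fin.last (t + 1)))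
              ((Fin.snoc p' y' : Fin (t + 2) → α) (Fin.last (t + 1))))
        = b ^ coincidences p p' * ∑ y, ∑ y', simpleStep G d y₀ y * simpleStep G d y₀' y' *
            (b ^ (if y = y' then 1 else 0) * z⁻¹ ^ G.dist y y') := by
          simp only [coincidences_snoc, Fin.snoc_last, mul_sum, pow_add]
          refine sum_congr rfl fun y _ => sum_congr rfl fun y' _ => ?_
          ring
      _ ≤ b ^ coincidences p p' * (pairFactor d R ρ z b * z⁻¹ ^ G.dist y₀ y₀') :=
          mul_le_mul_of_nonneg_left (hG.sum_sum_pair_potential_le hz hb hR hdist)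
            (pow_nonneg hb _)
      _ = pairFactor d R ρ z b * (b ^ coincidences p p' * z⁻¹ ^ G.dist y₀ y₀') := by ring

lemma pairSum_pow_coincidences_sub_one_le (hG : IsOutwardExpanding G d R ρ) (hz : 1 ≤ z)
    (hb : 1 ≤ b) (hR : 2 ≤ R) (hκ : pairFactor d R ρ z b ≤ 1 / 2) (x : α) {t : ℕ}
    (ht : 2 * (t : ℝ) ≤ R) :
    pairSum (simpleStep G d) x t (fun p p' => b ^ coincidences p p' - 1) ≤
      2 * pairFactor d R ρ z b * (1 - (1 / 2) ^ t) := by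
  have hP := hG.isSymmStochastic
  set κ := pairFactor d R ρ z b
  have hκ0 : 0 ≤ κ := hG.pairFactor_nonneg (by linarith)
  induction t with
  | zero => simp [pairSum_zero, coincidences_zero]
  | succ t ih =>
    have hlast := hG.pairSum_potential_le hz (by linarith : 0 ≤ b) hR x ht
    push_cast at ht
    calc pairSum (simpleStep G d) x (t + 1) (fun p p' => b ^ coincidences p p' - 1)
        ≤ pairSum (simpleStep G d) x (t + 1) (fun p p' =>
            (b ^ coincidences (Fin.init p : Fin (t + 1) → α) (Fin.init p') - 1) +
            b ^ coincidences p p' *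
              z⁻¹ ^ G.dist (p (Fin.last (t + 1))) (p' (Fin.last (t + 1)))) := by
          refine pairSum_mono hP.nonneg fun p p' _ _ => ?_
          rw [coincidences_eq_init_add]
          split_ifs with hmeet
          · have hone : 1 ≤ b ^ coincidences (Fin.init p : Fin (t + 1) → α) (Fin.init p') :=
              one_le_pow₀ hb
            rw [hmeet, SimpleGraph.dist_self, pow_zero, mul_one]
            linarith
          · rw [add_zero]
            exact le_add_of_nonneg_right (by positivity)
      _ ≤ 2 * κ * (1 - (1 / 2) ^ t) + κ ^ (t + 1) := by
          rw [pairSum_add]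
          refine add_le_add (le_of_eq_of_le ?_ (ih (by linarith))) hlast
          exact pairSum_init (fun x => Matrix.sum_row_of_mem_rowStochastic hP.stochastic x)
            fun p p' => b ^ coincidences p p' - 1
      _ ≤ 2 * κ * (1 - (1 / 2) ^ t) + κ * (1 / 2) ^ t := by rw [pow_succ']; gcongr
      _ = 2 * κ * (1 - (1 / 2) ^ (t + 1)) := by ring

lemma pairSum_common_ends_le (hG : IsOutwardExpanding G d R ρ) (hz : 1 ≤ z) (hb : 0 ≤ b)
    (hR : 2 ≤ R) (x : α) {t : ℕ} (ht : 2 * (t : ℝ) ≤ R) :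
    pairSum (simpleStep G d) x (t + 1) (fun p p' =>
        if p 1 = p' 1 ∧ p (Fin.last (t + 1)) = p' (Fin.last (t + 1))
          then b ^ coincidences p p' else 0) ≤
      b / d * pairFactor d R ρ z b ^ t := by
  have hP := hG.isSymmStochastic
  have hd : (d : ℝ) ≠ 0 := by exact_mod_cast hG.degree_pos.ne'
  set κ := pairFactor d R ρ z b
  have hrest (y y' : α) : pathSum (simpleStep G d) y t (fun p => pathSum (simpleStep G d) y' t
      fun p' => if p 0 = p' 0 ∧ p (Fin.last t) = p' (Fin.last t)
        then b ^ ((if p 0 = p' 0 then 1 else 0) + coincidences p p') else 0) ≤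
      if y = y' then b * κ ^ t else 0 := by
    split_ifs with hy
    · subst hy
      refine le_trans ?_ (mul_le_mul_of_nonneg_left (hG.pairSum_potential_le hz hb hR y ht) hb)
      rw [← pairSum_const_mul]
      refine pairSum_mono hP.nonneg fun p p' hp hp' => ?_
      rw [(pathWeight_ne_zero.1 hp).1, (pathWeight_ne_zero.1 hp').1]
      simp only [true_and, if_true]
      split_ifs with hlast
      · rw [hlast, SimpleGraph.dist_self, pow_zero, mul_one, pow_add, pow_one]
      · positivity
    · refine pathSum_nonpos hP.nonneg fun p hp => pathSum_nonpos hP.nonneg fun p' hp' => ?_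
      rw [(pathWeight_ne_zero.1 hp).1, (pathWeight_ne_zero.1 hp').1, if_neg fun h => hy h.1]
  calc pairSum (simpleStep G d) x (t + 1) (fun p p' =>
        if p 1 = p' 1 ∧ p (Fin.last (t + 1)) = p' (Fin.last (t + 1))
          then b ^ coincidences p p' else 0)
      ≤ ∑ y, ∑ y', simpleStep G d x y * simpleStep G d x y' *
          if y = y' then b * κ ^ t else 0 := by
        rw [pairSum_cons]
        gcongr with y _ y' _
        · exact mul_nonneg (hP.nonneg x y) (hP.nonneg x y')
        · simpa only [coincidences_cons, ← Fin.succ_zero_eq_one, ← Fin.succ_last, Fin.cons_succ]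
            using hrest y y'
    _ = b / d * κ ^ t := by
        simp only [mul_ite, mul_zero, sum_ite_eq, mem_univ, if_true, ← sum_mul,
          sum_simpleStep_mul_simpleStep, and_self, hG.card_adj]
        field_simp

end IsOutwardExpanding

end PairPotential

section Geodesics

variable {α : Type*} {G : SimpleGraph α} {d : ℕ} {R ρ z b : ℝ} {v x : α} {t : ℕ}
  {p p' : Fin (t + 1) → α}

/-- The sub-Markov kernel that keeps the steps of the simple random walk leading away from `v`; its
paths started at `v` are geodesics. -/
def outwardKernel (G : SimpleGraph α) (d : ℕ) (v : α) : Matrix α α ℝ :=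
  Matrix.of fun x y => if G.Adj x y ∧ G.dist v y = G.dist v x + 1 then (d : ℝ)⁻¹ else 0

lemma outwardKernel_nonneg (G : SimpleGraph α) (d : ℕ) (v x y : α) :
    0 ≤ outwardKernel G d v x y := by
  rw [outwardKernel, Matrix.of_apply]
  split_ifs <;> positivity

lemma outwardKernel_le (G : SimpleGraph α) (d : ℕ) (v x y : α) :
    outwardKernel G d v x y ≤ simpleStep G d x y := by
  rw [outwardKernel, simpleStep, Matrix.of_apply, Matrix.of_apply]
  split_ifs with h h'
  exacts [le_rfl, absurd h.1 h', by positivity, le_rfl]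

/-- The path `p` is a geodesic of `G` started at `v`: each of its steps is an edge that increases
the distance to `v` by one. -/
structure IsGeodesic (G : SimpleGraph α) (v : α) {t : ℕ} (p : Fin (t + 1) → α) : Prop where
  start : p 0 = v
  adj (i : Fin t) : G.Adj (p i.castSucc) (p i.succ)
  dist_succ (i : Fin t) : G.dist v (p i.succ) = G.dist v (p i.castSucc) + 1

lemma isGeodesic_of_pathWeight_ne_zero (hp : pathWeight (outwardKernel G d v) v p ≠ 0) :
    IsGeodesic G v p := by
  rw [pathWeight_ne_zero] at hp
  have hstep (i : Fin t) : G.Adj (p i.castSucc) (p i.succ) ∧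
      G.dist v (p i.succ) = G.dist v (p i.castSucc) + 1 := by
    by_contra h
    exact hp.2 i (by rw [outwardKernel, Matrix.of_apply, if_neg h])
  exact ⟨hp.1, fun i => (hstep i).1, fun i => (hstep i).2⟩

/-- The set of vertices visited by a path after its starting point. -/
def pathTail (p : Fin (t + 1) → α) : Finset α := univ.image fun i : Fin t => p i.succ

lemma mem_pathTail : x ∈ pathTail p ↔ ∃ i : Fin t, p i.succ = x := by
  simp only [pathTail, mem_image, mem_univ, true_and]

namespace IsGeodesic

lemma dist_apply (hp : IsGeodesic G v p) (i : Fin (t + 1)) : G.dist v (p i) = i := by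
  induction i using Fin.induction with
  | zero => rw [hp.start, SimpleGraph.dist_self, Fin.val_zero]
  | succ i ih => rw [hp.dist_succ, ih, Fin.val_castSucc, Fin.val_succ]

lemma eq_of_apply_eq (hp : IsGeodesic G v p) (hp' : IsGeodesic G v p') {i j : Fin t}
    (h : p i.succ = p' j.succ) : i = j := by
  have hdist := hp.dist_apply i.succ
  rw [h, hp'.dist_apply] at hdist
  exact Fin.succ_injective t (Fin.ext hdist.symm)

lemma sum_pathTail (hp : IsGeodesic G v p) (g : α → ℝ) :
    ∑ s ∈ pathTail p, g s = ∑ i : Fin t, g (p i.succ) :=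
  sum_image fun _ _ _ _ h => hp.eq_of_apply_eq hp h

lemma card_pathTail (hp : IsGeodesic G v p) : #(pathTail p) = t := by
  rw [pathTail, card_image_of_injective _ fun _ _ h => hp.eq_of_apply_eq hp h, card_univ,
    Fintype.card_fin]

lemma card_union_add_coincidences (hp : IsGeodesic G v p) (hp' : IsGeodesic G v p') :
    #(pathTail p ∪ pathTail p') + coincidences p p' = 2 * t := by
  have hinter : pathTail p ∩ pathTail p' =
      ({i | p i.succ = p' i.succ} : Finset (Fin t)).image fun i => p i.succ := by
    ext x
    simp only [mem_inter, mem_pathTail, mem_image, mem_filter_univ]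
    constructor
    · rintro ⟨⟨i, hi⟩, j, hj⟩
      obtain rfl := hp.eq_of_apply_eq hp' (hi.trans hj.symm)
      exact ⟨i, hi.trans hj.symm, hi⟩
    · rintro ⟨i, hmeet, hi⟩
      exact ⟨⟨i, hi⟩, i, hmeet ▸ hi⟩
  have hcard : #(pathTail p ∩ pathTail p') = coincidences p p' := by
    rw [hinter, card_image_of_injective _ fun _ _ h => hp.eq_of_apply_eq hp h, coincidences]
  rw [← hcard, card_union_add_card_inter, hp.card_pathTail, hp'.card_pathTail, two_mul]

lemma pow_card_union {q : ℝ} (hp : IsGeodesic G v p) (hp' : IsGeodesic G v p') (hq : q ≠ 0) :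
    q ^ #(pathTail p ∪ pathTail p') = (q ^ t) ^ 2 * q⁻¹ ^ coincidences p p' := by
  rw [← pow_mul, mul_comm t 2, ← hp.card_union_add_coincidences hp', pow_add, mul_assoc, ← mul_pow,
    mul_inv_cancel₀ hq, one_pow, mul_one]

lemma card_adj_pathTail_le (hp : IsGeodesic G v p) (hG : G.Connected) (x : α) :
    #{y ∈ pathTail p | G.Adj x y} ≤ 3 := by
  have hdist : Set.MapsTo (G.dist v) ({y ∈ pathTail p | G.Adj x y} : Finset α)
      (Icc (G.dist v x - 1) (G.dist v x + 1)) := by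
    intro y hy
    have hxy : G.Adj x y := (mem_filter.1 (mem_coe.1 hy)).2
    have htri := hG.dist_triangle (u := v) (v := x) (w := y)
    have htri' := hG.dist_triangle (u := v) (v := y) (w := x)
    rw [SimpleGraph.dist_eq_one_iff_adj.2 hxy] at htri
    rw [SimpleGraph.dist_eq_one_iff_adj.2 hxy.symm] at htri'
    rw [coe_Icc, Set.mem_Icc]
    lia
  have hinj : Set.InjOn (G.dist v) ({y ∈ pathTail p | G.Adj x y} : Finset α) := by
    intro y hy y' hy' heq
    obtain ⟨i, rfl⟩ := mem_pathTail.1 (mem_filter.1 (mem_coe.1 hy)).1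
    obtain ⟨j, rfl⟩ := mem_pathTail.1 (mem_filter.1 (mem_coe.1 hy')).1
    rw [hp.dist_apply, hp.dist_apply] at heq
    rw [Fin.ext heq]
  refine (card_le_card_of_injOn _ hdist hinj).trans ?_
  rw [Nat.card_Icc]
  lia

lemma reachable_induce_pathTail {p : Fin (t + 2) → α} (hp : IsGeodesic G v p) (i : Fin (t + 1)) :
    (G.induce (pathTail p : Set α)).Reachable ⟨p 1, mem_pathTail.2 ⟨0, rfl⟩⟩
      ⟨p i.succ, mem_pathTail.2 ⟨i, rfl⟩⟩ := by
  induction i using Fin.induction with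
  | zero => exact .refl _
  | succ i ih => exact ih.trans (SimpleGraph.Adj.reachable (hp.adj i.succ))

end IsGeodesic

lemma sum_simpleStep_pathTail_union_le (hG : G.Connected) (hp : IsGeodesic G v p)
    (hp' : IsGeodesic G v p') (x : α) :
    ∑ s ∈ pathTail p ∪ pathTail p', simpleStep G d x s ≤ 6 / d := by
  have hcard : #{s ∈ pathTail p ∪ pathTail p' | G.Adj x s} ≤ 3 + 3 := by
    rw [filter_union]
    exact (card_union_le _ _).trans
      (add_le_add (hp.card_adj_pathTail_le hG x) (hp'.card_adj_pathTail_le hG x))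
  calc ∑ s ∈ pathTail p ∪ pathTail p', simpleStep G d x s
      = #{s ∈ pathTail p ∪ pathTail p' | G.Adj x s} / (d : ℝ) := by
        simp only [simpleStep, Matrix.of_apply, ← sum_filter, sum_const, nsmul_eq_mul,
          div_eq_mul_inv]
    _ ≤ 6 / d := by
        gcongr
        exact_mod_cast hcard

variable [Fintype α]

/-- The probability that the first `t` steps of the simple random walk started at `v` all lead away
from `v`. -/
def geodesicMass (G : SimpleGraph α) (d : ℕ) (v : α) (t : ℕ) : ℝ :=
  pathSum (outwardKernel G d v) v t fun _ => 1

namespace IsOutwardExpanding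

lemma geodesicMass_le_one (hG : IsOutwardExpanding G d R ρ) (v : α) (t : ℕ) :
    geodesicMass G d v t ≤ 1 :=
  (pathSum_mono_kernel (outwardKernel_nonneg G d v) (outwardKernel_le G d v)
    fun _ => zero_le_one).trans_eq
    (pathSum_one (Matrix.sum_row_of_mem_rowStochastic hG.isSymmStochastic.stochastic) t v)

lemma le_sum_outwardKernel (hG : IsOutwardExpanding G d R ρ) (hx : (G.dist v x : ℝ) ≤ R) :
    1 - ρ * G.dist v x / d ≤ ∑ y, outwardKernel G d v x y := by
  have hsplit (y : α) : simpleStep G d x y ≤ outwardKernel G d v x y +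
      if G.Adj x y ∧ G.dist y v ≤ G.dist v x then (d : ℝ)⁻¹ else 0 := by
    rw [simpleStep, outwardKernel, Matrix.of_apply, Matrix.of_apply]
    by_cases hxy : G.Adj x y
    · have hstep := hG.dist_le_add_one hxy.symm v
      have hcomm : G.dist x v = G.dist v x := SimpleGraph.dist_comm
      have hcomm' : G.dist y v = G.dist v y := SimpleGraph.dist_comm
      simp only [hxy, true_and, if_true]
      split_ifs
      · linarith [inv_nonneg.2 (Nat.cast_nonneg (α := ℝ) d)]
      · rw [add_zero]
      · rw [zero_add]
      · lia
    · simp only [hxy, false_and, if_false, add_zero, le_refl]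
  have hsum := sum_le_sum fun y (_ : y ∈ univ) => hsplit y
  rw [Matrix.sum_row_of_mem_rowStochastic hG.isSymmStochastic.stochastic, sum_add_distrib,
    ← sum_filter, sum_const, nsmul_eq_mul, ← div_eq_mul_inv] at hsum
  have hinward := div_le_div_of_nonneg_right (hG.card_inward_le v x hx) (Nat.cast_nonneg d)
  linarith

lemma le_geodesicMass (hG : IsOutwardExpanding G d R ρ) (v : α) {t : ℕ} (ht : (t : ℝ) ≤ R) :
    1 - ρ * t ^ 2 / d ≤ geodesicMass G d v t := by
  have hρ := hG.rho_nonneg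
  induction t with
  | zero => simp [geodesicMass, pathSum_zero]
  | succ t ih =>
    push_cast at ht
    have hloss : 0 ≤ ρ * t / d := by positivity
    calc 1 - ρ * (t + 1 : ℕ) ^ 2 / d = 1 - ρ * t ^ 2 / d - ρ * t / d * 1 - ρ * (t + 1) / d := by
          push_cast
          ring
      _ ≤ geodesicMass G d v t - ρ * t / d * geodesicMass G d v t - 0 :=
          sub_le_sub (sub_le_sub (ih (by linarith))
            (mul_le_mul_of_nonneg_left (hG.geodesicMass_le_one v t) hloss)) (by positivity)
      _ = pathSum (outwardKernel G d v) v t fun _ => (1 - ρ * t / d) * 1 := by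
          rw [pathSum_const_mul, geodesicMass]
          ring
      _ ≤ geodesicMass G d v (t + 1) := by
          rw [geodesicMass, pathSum_snoc]
          refine pathSum_mono (outwardKernel_nonneg G d v) fun p hp => ?_
          have hdist := (isGeodesic_of_pathWeight_ne_zero hp).dist_apply (Fin.last t)
          rw [Fin.val_last] at hdist
          have hout := hG.le_sum_outwardKernel (v := v) (x := p (Fin.last t))
            (by rw [hdist]; linarith)
          simpa only [mul_one, hdist] using hout

lemma pairSum_outwardKernel_pow_coincidences_le (hG : IsOutwardExpanding G d R ρ) (hz : 1 ≤ z)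
    (hb : 1 ≤ b) (hR : 2 ≤ R) (hκ : pairFactor d R ρ z b ≤ 1 / 2) (v : α) {t : ℕ}
    (ht : 2 * (t : ℝ) ≤ R) :
    pairSum (outwardKernel G d v) v t (fun p p' => b ^ coincidences p p') ≤
      geodesicMass G d v t ^ 2 + 2 * pairFactor d R ρ z b := by
  have hκ0 : 0 ≤ pairFactor d R ρ z b := hG.pairFactor_nonneg (by linarith)
  have hexcess : pairSum (outwardKernel G d v) v t (fun p p' => b ^ coincidences p p' - 1) ≤
      2 * pairFactor d R ρ z b :=
    calc pairSum (outwardKernel G d v) v t (fun p p' => b ^ coincidences p p' - 1)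
        ≤ pairSum (simpleStep G d) v t (fun p p' => b ^ coincidences p p' - 1) :=
          pairSum_mono_kernel (outwardKernel_nonneg G d v) (outwardKernel_le G d v)
            fun p p' => sub_nonneg.2 (one_le_pow₀ hb)
      _ ≤ 2 * pairFactor d R ρ z b * (1 - (1 / 2) ^ t) :=
          hG.pairSum_pow_coincidences_sub_one_le hz hb hR hκ v ht
      _ ≤ 2 * pairFactor d R ρ z b :=
          mul_le_of_le_one_right (by positivity) (sub_le_self 1 (by positivity))
  calc pairSum (outwardKernel G d v) v t (fun p p' => b ^ coincidences p p')
      = pairSum (outwardKernel G d v) v t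
          (fun p p' => 1 * 1 + (b ^ coincidences p p' - 1)) := by
        simp only [one_mul, add_sub_cancel]
    _ ≤ geodesicMass G d v t ^ 2 + 2 * pairFactor d R ρ z b := by
        rw [pairSum_add, pairSum_mul, sq]
        exact add_le_add_right hexcess _

end IsOutwardExpanding

namespace IsSymmStochastic

lemma sum_pathSum_apply {P : Matrix α α ℝ} (hP : IsSymmStochastic P) (g : α → ℝ) {t : ℕ}
    (i : Fin (t + 1)) : ∑ v, pathSum P v t (fun p => g (p i)) = ∑ x, g x := by
  have hrow := Matrix.sum_row_of_mem_rowStochastic hP.stochastic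
  induction t with
  | zero => simp only [pathSum_zero]
  | succ t ih =>
    cases i using Fin.cases with
    | zero =>
      refine sum_congr rfl fun v _ => ?_
      simpa only [pathSum_cons, Fin.cons_zero, mul_one, hrow, pathSum_one hrow] using
        pathSum_const_mul (M := P) (x := v) (g v) fun _ : Fin (t + 2) → α => (1 : ℝ)
    | succ j =>
      simp only [pathSum_cons, Fin.cons_succ]
      rw [← ih j]
      exact hP.sum_mulVec fun y => pathSum P y t fun p => g (p j)

end IsSymmStochastic

lemma IsOutwardExpanding.exists_root (hG : IsOutwardExpanding G d R ρ) {g : α → ℝ}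
    (hg : ∀ x, 0 ≤ g x) (t : ℕ) :
    ∃ v, pathSum (outwardKernel G d v) v t (fun p => ∑ i : Fin t, g (p i.succ)) ≤
      t * (∑ x, g x) / Fintype.card α := by
  have hP := hG.isSymmStochastic
  have : Nonempty α := hG.connected.nonempty
  have hcard : (Fintype.card α : ℝ) ≠ 0 := by exact_mod_cast Fintype.card_ne_zero
  have haverage :
      ∑ v, pathSum (outwardKernel G d v) v t (fun p => ∑ i : Fin t, g (p i.succ)) ≤
        ∑ _v : α, t * (∑ x, g x) / Fintype.card α :=
    calc ∑ v, pathSum (outwardKernel G d v) v t (fun p => ∑ i : Fin t, g (p i.succ))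
        ≤ ∑ v, pathSum (simpleStep G d) v t (fun p => ∑ i : Fin t, g (p i.succ)) :=
          sum_le_sum fun v _ => pathSum_mono_kernel (outwardKernel_nonneg G d v)
            (outwardKernel_le G d v) fun p => sum_nonneg fun i _ => hg _
      _ = t * ∑ x, g x := by
          simp only [pathSum_sum]
          rw [sum_comm]
          simp only [hP.sum_pathSum_apply, sum_const, card_univ, Fintype.card_fin, nsmul_eq_mul]
      _ = ∑ _v : α, t * (∑ x, g x) / Fintype.card α := by
          rw [sum_const, card_univ, nsmul_eq_mul, mul_div_cancel₀ _ hcard]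
  obtain ⟨v, _, hv⟩ := exists_le_of_sum_le univ_nonempty haverage
  exact ⟨v, hv⟩

end Geodesics

section VacantBranches

variable {α : Type*} [Fintype α] {G : SimpleGraph α} {v a : α} {t k : ℕ} {K : ℝ}
  {ω : Fin (t + 1) → α}

lemma sq_pathSum_le_card_mul_pairSum {β : Type*} {M : Matrix α α ℝ} {D : Finset β}
    {φ : (Fin (t + 1) → α) → β} {f : (Fin (t + 1) → α) → ℝ}
    (hD : ∀ p, pathWeight M v p ≠ 0 → f p ≠ 0 → φ p ∈ D) :
    pathSum M v t f ^ 2 ≤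
      #D * pairSum M v t fun p p' => if φ p = φ p' then f p * f p' else 0 := by
  let fiber (b : β) (p : Fin (t + 1) → α) : ℝ := if φ p = b then f p else 0
  have hsum : pathSum M v t f = ∑ b ∈ D, pathSum M v t (fiber b) := by
    rw [← pathSum_sum]
    refine pathSum_congr fun p hp => ?_
    rw [sum_ite_eq]
    split_ifs with h
    exacts [rfl, not_not.1 fun hf => h (hD p hp hf)]
  have hsq : pairSum M v t (fun p p' => if φ p = φ p' then f p * f p' else 0) =
      ∑ b ∈ D, pathSum M v t (fiber b) ^ 2 := by
    simp only [sq, ← pairSum_mul, pairSum, ← pathSum_sum]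
    refine pathSum_congr fun p hp => pathSum_congr fun p' _ => ?_
    simp only [fiber, ite_mul, zero_mul, sum_ite_eq]
    by_cases hf : f p = 0
    · simp only [hf, zero_mul, ite_self]
    · simp only [hD p hp hf, if_true, eq_comm (a := φ p), mul_ite, mul_zero]
  rw [hsum, hsq]
  exact sq_sum_le_card_mul_sum_sq

/-- The set of vertices on the geodesics with `k + 1` steps that start with the edge from `v` to `a`
and that the trajectory `ω` avoids after their starting point `v`. -/
def vacantBranch (G : SimpleGraph α) (ω : Fin (t + 1) → α) (v a : α) (k : ℕ) :
    Finset α :=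
  {y | ∃ p : Fin (k + 2) → α, IsGeodesic G v p ∧ (∀ s, ω s ∉ pathTail p) ∧ p 1 = a ∧
    y ∈ pathTail p}

lemma connected_induce_vacantBranch (h : (vacantBranch G ω v a k).Nonempty) :
    (G.induce (vacantBranch G ω v a k : Set α)).Connected := by
  obtain ⟨y, hy⟩ := h
  obtain ⟨p₀, hp₀, hω₀, ha₀, -⟩ := (mem_filter_univ y).1 hy
  refine SimpleGraph.induce_connected_of_patches a
    (mem_coe.2 <| (mem_filter_univ a).2 ⟨p₀, hp₀, hω₀, ha₀, mem_pathTail.2 ⟨0, ha₀⟩⟩) ?_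
  intro x hx
  obtain ⟨p, hp, hω, rfl, hxp⟩ := (mem_filter_univ x).1 (mem_coe.1 hx)
  obtain ⟨i, rfl⟩ := mem_pathTail.1 hxp
  exact ⟨pathTail p, fun y hy => mem_coe.2 <| (mem_filter_univ y).2 ⟨p, hp, hω, rfl, hy⟩,
    mem_pathTail.2 ⟨0, rfl⟩, hxp, hp.reachable_induce_pathTail i⟩

lemma card_vacantBranch_le (hK : 0 ≤ K) (hω : ¬bigVacantComponent G ω 0 K) :
    (#(vacantBranch G ω v a k) : ℝ) ≤ K := by
  rcases (vacantBranch G ω v a k).eq_empty_or_nonempty with h | h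
  · rwa [h, card_empty, Nat.cast_zero]
  · by_contra! hlt
    refine hω ⟨vacantBranch G ω v a k, fun x hx s _ hs => ?_, connected_induce_vacantBranch h,
      hlt.le⟩
    obtain ⟨p, -, havoid, -, hxp⟩ := (mem_filter_univ x).1 hx
    exact havoid s (hs ▸ hxp)

/-- The proportion of nearest-neighbour trajectories of length `h` started at `v` that are geodesics
avoided by the trajectory `ω` after their starting point `v`. -/
def vacantMass (G : SimpleGraph α) (d : ℕ) (v : α) (h : ℕ) (ω : Fin (t + 1) → α) : ℝ :=
  pathSum (outwardKernel G d v) v h fun p => avoidIndicator ω (pathTail p)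

/-- The analogue of `vacantMass` for the pairs of geodesics with `k + 1` steps that share their
first step and their endpoint. -/
def vacantMeetingMass (G : SimpleGraph α) (d : ℕ) (v : α) (k : ℕ)
    (ω : Fin (t + 1) → α) : ℝ :=
  pairSum (outwardKernel G d v) v (k + 1) fun p p' =>
    if p 1 = p' 1 ∧ p (Fin.last (k + 1)) = p' (Fin.last (k + 1)) then
      avoidIndicator ω (pathTail p ∪ pathTail p') else 0

/-- The number of neighbours of `v` avoided by the trajectory `ω`. -/
def vacantDegree (G : SimpleGraph α) (v : α) (ω : Fin (t + 1) → α) : ℝ :=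
  ∑ a with G.Adj v a, avoidIndicator ω {a}

lemma vacantMeetingMass_nonneg (G : SimpleGraph α) (d : ℕ) (v : α) (k : ℕ)
    (ω : Fin (t + 1) → α) : 0 ≤ vacantMeetingMass G d v k ω :=
  pathSum_nonneg (outwardKernel_nonneg G d v) fun _ =>
    pathSum_nonneg (outwardKernel_nonneg G d v) fun _ =>
      ite_nonneg (avoidIndicator_nonneg ω _) le_rfl

lemma vacantDegree_nonneg (G : SimpleGraph α) (v : α) (ω : Fin (t + 1) → α) :
    0 ≤ vacantDegree G v ω :=
  sum_nonneg fun _ _ => avoidIndicator_nonneg ω _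

lemma vacantMass_sq_le (hK : 0 ≤ K) (hω : ¬bigVacantComponent G ω 0 K) (d : ℕ) (v : α)
    (k : ℕ) : vacantMass G d v (k + 1) ω ^ 2 ≤
      K * (vacantDegree G v ω * vacantMeetingMass G d v k ω) := by
  let D : Finset (Σ _ : α, α) :=
    ({a | G.Adj v a ∧ ∀ s, ω s ≠ a} : Finset α).sigma fun a => vacantBranch G ω v a k
  have hD (p : Fin (k + 2) → α) (hp : pathWeight (outwardKernel G d v) v p ≠ 0)
      (hf : avoidIndicator ω (pathTail p) ≠ 0) :
      (⟨p 1, p (Fin.last (k + 1))⟩ : Σ _ : α, α) ∈ D := by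
    rw [avoidIndicator_ne_zero] at hf
    have hgeo := isGeodesic_of_pathWeight_ne_zero hp
    have hfirst : G.Adj v (p 1) := hgeo.start ▸ hgeo.adj 0
    refine mem_sigma.2 ⟨(mem_filter_univ _).2 ⟨hfirst, fun s hs => hf s ?_⟩,
      (mem_filter_univ _).2 ⟨p, hgeo, hf, rfl, mem_pathTail.2 ⟨Fin.last k, rfl⟩⟩⟩
    exact mem_pathTail.2 ⟨0, hs.symm⟩
  have hcard : (#D : ℝ) ≤ vacantDegree G v ω * K := by
    simp only [vacantDegree, avoidIndicator, mem_singleton, ← sum_filter, filter_filter, sum_const,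
      nsmul_eq_mul, mul_one]
    rw [card_sigma, Nat.cast_sum, ← nsmul_eq_mul]
    exact sum_le_card_nsmul _ _ _ fun a _ => card_vacantBranch_le hK hω
  calc vacantMass G d v (k + 1) ω ^ 2 ≤ #D * vacantMeetingMass G d v k ω := by
        refine (sq_pathSum_le_card_mul_pairSum hD).trans_eq ?_
        simp only [Sigma.mk.injEq, heq_eq_eq, avoidIndicator_mul, vacantMeetingMass]
    _ ≤ vacantDegree G v ω * K * vacantMeetingMass G d v k ω :=
        mul_le_mul_of_nonneg_right hcard (vacantMeetingMass_nonneg G d v k ω)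
    _ = K * (vacantDegree G v ω * vacantMeetingMass G d v k ω) := by ring

end VacantBranches

section Moments

variable {α : Type*} [Fintype α] {P : Matrix α α ℝ} {G : SimpleGraph α} {d t k L : ℕ} {u v : α}
  {R ρ z q η μ σ κ γ θ : ℝ} {g : α → ℝ} {S : Finset α}

/-- The probability that the chain with kernel `P` started at `u` avoids `S` up to time `t` is close
to `q ^ #S`, with relative error `η`, up to a loss `g` from the vertices of `S` that the chain may
hit before it is mixed. -/
structure AvoidanceEstimate (P : Matrix α α ℝ) (u : α) (t : ℕ) (q η : ℝ) (g : α → ℝ)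
    (S : Finset α) : Prop where
  le_mul_pow : avoidProb P S t u ≤ (1 + η) * q ^ #S
  pow_mul_le : q ^ #S * (1 - η - 2 * ∑ s ∈ S, g s) ≤ avoidProb P S t u

lemma pathSum_vacantMass (P : Matrix α α ℝ) (u v : α) (t h : ℕ) :
    pathSum P u t (vacantMass G d v h) =
      pathSum (outwardKernel G d v) v h fun p => avoidProb P (pathTail p) t u := by
  unfold vacantMass
  rw [pathSum_comm]
  simp only [pathSum_avoidIndicator]

lemma pathSum_vacantMass_sq (P : Matrix α α ℝ) (u v : α) (t h : ℕ) :
    pathSum P u t (fun ω => vacantMass G d v h ω ^ 2) =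
      pairSum (outwardKernel G d v) v h fun p p' => avoidProb P (pathTail p ∪ pathTail p') t u := by
  simp only [sq, vacantMass, ← pairSum_mul, avoidIndicator_mul, pairSum]
  rw [pathSum_comm]
  refine congrArg _ (funext fun p => ?_)
  rw [pathSum_comm]
  simp only [pathSum_avoidIndicator]

lemma pathSum_vacantMeetingMass (P : Matrix α α ℝ) (u v : α) (t k : ℕ) :
    pathSum P u t (vacantMeetingMass G d v k) =
      pairSum (outwardKernel G d v) v (k + 1) fun p p' =>
        if p 1 = p' 1 ∧ p (Fin.last (k + 1)) = p' (Fin.last (k + 1)) then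
          avoidProb P (pathTail p ∪ pathTail p') t u else 0 := by
  unfold vacantMeetingMass pairSum
  rw [pathSum_comm]
  refine congrArg _ (funext fun p => ?_)
  rw [pathSum_comm]
  refine congrArg _ (funext fun p' => ?_)
  beta_reduce
  split_ifs
  exacts [pathSum_avoidIndicator P _ t u, by simp only [pathSum, mul_zero, sum_const_zero]]

lemma pathSum_vacantDegree_le (hdeg : #{a | G.Adj v a} = d) (hq : 0 ≤ q) (hη1 : η ≤ 1)
    (hone : ∀ a, AvoidanceEstimate P u t q η g {a}) :
    pathSum P u t (vacantDegree G v) ≤ 2 * (d * q) := by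
  unfold vacantDegree
  rw [pathSum_sum]
  simp only [pathSum_avoidIndicator]
  calc ∑ a with G.Adj v a, avoidProb P {a} t u ≤ ∑ a with G.Adj v a, 2 * q := by
        refine sum_le_sum fun a _ => (hone a).le_mul_pow.trans ?_
        rw [card_singleton, pow_one]
        exact mul_le_mul_of_nonneg_right (by linarith) hq
    _ = 2 * (d * q) := by rw [sum_const, hdeg, nsmul_eq_mul]; ring

lemma le_pathSum_vacantMass {h : ℕ} (hq : 0 ≤ q)
    (hest : ∀ p : Fin (h + 1) → α, IsGeodesic G v p → AvoidanceEstimate P u t q η g (pathTail p))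
    (hμ : pathSum (outwardKernel G d v) v h (fun p => ∑ i : Fin h, g (p i.succ)) ≤ μ) :
    q ^ h * (geodesicMass G d v h * (1 - η) - 2 * μ) ≤ pathSum P u t (vacantMass G d v h) :=
  calc q ^ h * (geodesicMass G d v h * (1 - η) - 2 * μ)
      ≤ q ^ h * (geodesicMass G d v h * (1 - η) -
          2 * pathSum (outwardKernel G d v) v h fun p => ∑ i : Fin h, g (p i.succ)) := by gcongr
    _ = pathSum (outwardKernel G d v) v h
          fun p => q ^ h * ((1 - η) * 1 - 2 * ∑ i : Fin h, g (p i.succ)) := by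
        rw [pathSum_const_mul, pathSum_sub, pathSum_const_mul, pathSum_const_mul, geodesicMass,
          mul_comm (1 - η)]
    _ ≤ pathSum P u t (vacantMass G d v h) := by
        rw [pathSum_vacantMass]
        refine pathSum_mono (outwardKernel_nonneg G d v) fun p hp => ?_
        have hgeo := isGeodesic_of_pathWeight_ne_zero hp
        have hlower := (hest p hgeo).pow_mul_le
        rwa [hgeo.sum_pathTail, hgeo.card_pathTail, ← mul_one (1 - η)] at hlower

namespace IsOutwardExpanding

lemma pathSum_vacantMass_sq_le (hG : IsOutwardExpanding G d R ρ) (hz : 1 ≤ z) (hq : 0 < q)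
    (hq1 : q ≤ 1) (hη : 0 ≤ η) (hR : 2 ≤ R) (hκ : pairFactor d R ρ z q⁻¹ ≤ κ) (hκ2 : κ ≤ 1 / 2)
    {h : ℕ} (hh : 2 * (h : ℝ) ≤ R) (hest : ∀ p p' : Fin (h + 1) → α, IsGeodesic G v p →
      IsGeodesic G v p' → AvoidanceEstimate P u t q η g (pathTail p ∪ pathTail p')) :
    pathSum P u t (fun ω => vacantMass G d v h ω ^ 2) ≤
      (q ^ h) ^ 2 * ((1 + η) * (geodesicMass G d v h ^ 2 + 2 * κ)) :=
  calc pathSum P u t (fun ω => vacantMass G d v h ω ^ 2)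
      ≤ pairSum (outwardKernel G d v) v h
          fun p p' => (q ^ h) ^ 2 * (1 + η) * q⁻¹ ^ coincidences p p' := by
        rw [pathSum_vacantMass_sq]
        refine pairSum_mono (outwardKernel_nonneg G d v) fun p p' hp hp' => ?_
        have hgeo := isGeodesic_of_pathWeight_ne_zero hp
        have hgeo' := isGeodesic_of_pathWeight_ne_zero hp'
        refine (hest p p' hgeo hgeo').le_mul_pow.trans_eq ?_
        rw [hgeo.pow_card_union hgeo' hq.ne', mul_left_comm, mul_assoc]
    _ ≤ (q ^ h) ^ 2 * (1 + η) * (geodesicMass G d v h ^ 2 + 2 * κ) := by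
        rw [pairSum_const_mul]
        gcongr
        refine (hG.pairSum_outwardKernel_pow_coincidences_le hz ((one_le_inv₀ hq).2 hq1) hR
          (hκ.trans hκ2) v hh).trans ?_
        gcongr
    _ = (q ^ h) ^ 2 * ((1 + η) * (geodesicMass G d v h ^ 2 + 2 * κ)) := mul_assoc _ _ _

lemma pathSum_vacantMeetingMass_le (hG : IsOutwardExpanding G d R ρ) (hz : 1 ≤ z) (hq : 0 < q)
    (hη0 : 0 ≤ η) (hη1 : η ≤ 1) (hR : 2 ≤ R) (hκ : pairFactor d R ρ z q⁻¹ ≤ κ)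
    (hk : 2 * (k : ℝ) ≤ R) (hest : ∀ p p' : Fin (k + 2) → α, IsGeodesic G v p →
      IsGeodesic G v p' → AvoidanceEstimate P u t q η g (pathTail p ∪ pathTail p')) :
    pathSum P u t (vacantMeetingMass G d v k) ≤
      (q ^ (k + 1)) ^ 2 * (2 * (q⁻¹ / d * κ ^ k)) := by
  have hκ0 : 0 ≤ pairFactor d R ρ z q⁻¹ := hG.pairFactor_nonneg (inv_nonneg.2 hq.le)
  calc pathSum P u t (vacantMeetingMass G d v k)
      ≤ pairSum (outwardKernel G d v) v (k + 1) fun p p' => (q ^ (k + 1)) ^ 2 * (1 + η) *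
          if p 1 = p' 1 ∧ p (Fin.last (k + 1)) = p' (Fin.last (k + 1)) then
            q⁻¹ ^ coincidences p p' else 0 := by
        rw [pathSum_vacantMeetingMass]
        refine pairSum_mono (outwardKernel_nonneg G d v) fun p p' hp hp' => ?_
        have hgeo := isGeodesic_of_pathWeight_ne_zero hp
        have hgeo' := isGeodesic_of_pathWeight_ne_zero hp'
        split_ifs
        · refine (hest p p' hgeo hgeo').le_mul_pow.trans_eq ?_
          rw [hgeo.pow_card_union hgeo' hq.ne', mul_left_comm, mul_assoc]
        · rw [mul_zero]
    _ ≤ (q ^ (k + 1)) ^ 2 * (1 + η) * (q⁻¹ / d * pairFactor d R ρ z q⁻¹ ^ k) := by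
        rw [pairSum_const_mul]
        gcongr
        exact (pairSum_mono_kernel (outwardKernel_nonneg G d v) (outwardKernel_le G d v)
          fun p p' => ite_nonneg (by positivity) le_rfl).trans
          (hG.pairSum_common_ends_le hz (inv_nonneg.2 hq.le) hR v hk)
    _ ≤ (q ^ (k + 1)) ^ 2 * 2 * (q⁻¹ / d * κ ^ k) := by
        gcongr
        linarith
    _ = (q ^ (k + 1)) ^ 2 * (2 * (q⁻¹ / d * κ ^ k)) := mul_assoc _ _ _

end IsOutwardExpanding

lemma one_le_of_sq_le_sq_mul {K m x a b : ℝ} (hm : 1 / 2 ≤ m) (hK : 0 ≤ K) (ha : 0 ≤ a)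
    (hb : 0 ≤ b) (hx : x ^ 2 ≤ K ^ 2 * (a * b)) : 1 ≤ 16 * (x - m) ^ 2 + 2 * K * (a + b) := by
  have hamgm : x ^ 2 ≤ (K * ((a + b) / 2)) ^ 2 := by
    refine hx.trans ?_
    rw [mul_pow]
    exact mul_le_mul_of_nonneg_left (by linarith [sq_nonneg (a - b)]) (sq_nonneg K)
  have hx' : x ≤ K * ((a + b) / 2) := le_of_sq_le_sq hamgm (by positivity)
  rcases le_total x (m / 2) with h | h
  · nlinarith [mul_nonneg hK (add_nonneg ha hb)]
  · nlinarith [sq_nonneg (x - m)]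

lemma one_sub_indicator_le {K Q τ m : ℝ} (hK : 0 ≤ K) (hτ : 0 < τ) (hm : 1 / 2 ≤ m) (d : ℕ)
    (v : α) (k : ℕ) (ω : Fin (t + 1) → α) :
    1 - (if bigVacantComponent G ω 0 (K ^ 2) then 1 else 0) ≤
      16 * (vacantMass G d v (k + 1) ω / Q - m) ^ 2 +
        2 * K * (vacantDegree G v ω / τ + τ * (vacantMeetingMass G d v k ω / Q ^ 2)) := by
  have hA : 0 ≤ vacantDegree G v ω / τ := div_nonneg (vacantDegree_nonneg G v ω) hτ.le
  have hZ : 0 ≤ τ * (vacantMeetingMass G d v k ω / Q ^ 2) :=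
    mul_nonneg hτ.le (div_nonneg (vacantMeetingMass_nonneg G d v k ω) (sq_nonneg Q))
  split_ifs with hω
  · rw [sub_self]
    positivity
  · rw [sub_zero]
    refine one_le_of_sq_le_sq_mul hm hK hA hZ ?_
    calc (vacantMass G d v (k + 1) ω / Q) ^ 2
        ≤ K ^ 2 * (vacantDegree G v ω * vacantMeetingMass G d v k ω) / Q ^ 2 := by
          rw [div_pow]
          exact div_le_div_of_nonneg_right (vacantMass_sq_le (sq_nonneg K) hω d v k) (sq_nonneg Q)
      _ = K ^ 2 * (vacantDegree G v ω / τ * (τ * (vacantMeetingMass G d v k ω / Q ^ 2))) := by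
          field_simp

lemma one_sub_pathSum_bigVacantComponent_le (hP : IsSymmStochastic P) {K Q τ m : ℝ} (hK : 0 ≤ K)
    (hτ : 0 < τ) (hm : 1 / 2 ≤ m) (d : ℕ) (u v : α) (t k : ℕ) :
    1 - pathSum P u t (fun ω => if bigVacantComponent G ω 0 (K ^ 2) then 1 else 0) ≤
      16 * pathSum P u t (fun ω => (vacantMass G d v (k + 1) ω / Q - m) ^ 2) +
        2 * K * (τ⁻¹ * pathSum P u t (vacantDegree G v) +
          τ / Q ^ 2 * pathSum P u t (vacantMeetingMass G d v k)) := by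
  have hone := pathSum_one (Matrix.sum_row_of_mem_rowStochastic hP.stochastic) t u
  refine (congrArg (· - _) hone.symm).trans_le ?_
  simp only [← pathSum_sub, ← pathSum_const_mul, ← pathSum_add]
  refine pathSum_mono hP.nonneg fun ω _ =>
    (one_sub_indicator_le (Q := Q) hK hτ hm d v k ω).trans_eq ?_
  ring

lemma pathSum_sq_sub_le (hP : IsSymmStochastic P) {X : (Fin (t + 1) → α) → ℝ} {Q m : ℝ}
    (hQ : 0 < Q) (hm : 0 ≤ m) (hm1 : m ≤ 1) (hη0 : 0 ≤ η) (hη1 : η ≤ 1) (hκ : 0 ≤ κ) (hμ : 0 ≤ μ)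
    (hfirst : Q * (m * (1 - η) - 2 * μ) ≤ pathSum P u t X)
    (hsecond : pathSum P u t (fun ω => X ω ^ 2) ≤ Q ^ 2 * ((1 + η) * (m ^ 2 + 2 * κ))) :
    pathSum P u t (fun ω => (X ω / Q - m) ^ 2) ≤ 3 * η + 4 * κ + 4 * μ := by
  have hone := pathSum_one (Matrix.sum_row_of_mem_rowStochastic hP.stochastic) t u
  have hexpand : pathSum P u t (fun ω => (X ω / Q - m) ^ 2) =
      pathSum P u t (fun ω => X ω ^ 2) / Q ^ 2 - 2 * m * (pathSum P u t X / Q) + m ^ 2 := by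
    have hpoint (ω : Fin (t + 1) → α) : (X ω / Q - m) ^ 2 =
        (Q ^ 2)⁻¹ * X ω ^ 2 - 2 * m / Q * X ω + m ^ 2 * 1 := by
      field_simp
      ring
    simp only [hpoint, pathSum_add, pathSum_sub, pathSum_const_mul, hone]
    ring
  have hfirst' : m * (1 - η) - 2 * μ ≤ pathSum P u t X / Q := by rwa [le_div_iff₀' hQ]
  have hsecond' : pathSum P u t (fun ω => X ω ^ 2) / Q ^ 2 ≤ (1 + η) * (m ^ 2 + 2 * κ) := by
    rwa [div_le_iff₀' (by positivity)]
  have hm2 : m ^ 2 ≤ 1 := pow_le_one₀ hm hm1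
  calc pathSum P u t (fun ω => (X ω / Q - m) ^ 2)
      ≤ (1 + η) * (m ^ 2 + 2 * κ) - 2 * m * (m * (1 - η) - 2 * μ) + m ^ 2 := by
        rw [hexpand]
        gcongr
    _ = 3 * (η * m ^ 2) + 2 * κ + 2 * (η * κ) + 4 * (m * μ) := by ring
    _ ≤ 3 * (η * 1) + 2 * κ + 2 * (1 * κ) + 4 * (1 * μ) := by gcongr
    _ = 3 * η + 4 * κ + 4 * μ := by ring

theorem IsOutwardExpanding.one_sub_pathSum_le_of_avoidanceEstimate {K : ℝ}
    (hG : IsOutwardExpanding G d R ρ) (hz : 1 ≤ z) (hq : 0 < q) (hq1 : q ≤ 1) (hη0 : 0 ≤ η)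
    (hη1 : η ≤ 1) (hμ0 : 0 ≤ μ) (hσ : 0 < σ) (hσ2 : σ ^ 2 ≤ 1 / 2)
    (hκ : pairFactor d R ρ z q⁻¹ ≤ σ ^ 2) (hk : 2 * (k : ℝ) + 2 ≤ R) (hK : 0 ≤ K)
    (hm : 1 / 2 ≤ geodesicMass G d v (k + 1))
    (hμ : pathSum (outwardKernel G d v) v (k + 1) (fun p => ∑ i : Fin (k + 1), g (p i.succ)) ≤ μ)
    (hone : ∀ a, AvoidanceEstimate (simpleStep G d) u t q η g {a})
    (hest : ∀ p p' : Fin (k + 2) → α, IsGeodesic G v p → IsGeodesic G v p' →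
      AvoidanceEstimate (simpleStep G d) u t q η g (pathTail p ∪ pathTail p')) :
    1 - pathSum (simpleStep G d) u t
        (fun ω => if bigVacantComponent G ω 0 (K ^ 2) then 1 else 0) ≤
      16 * (3 * η + 4 * σ ^ 2 + 4 * μ) + 8 * K * σ ^ k := by
  have hP := hG.isSymmStochastic
  have hd : (0 : ℝ) < d := by exact_mod_cast hG.degree_pos
  have hR : 2 ≤ R := by linarith [k.cast_nonneg (α := ℝ)]
  have hh : 2 * ((k + 1 : ℕ) : ℝ) ≤ R := by push_cast; linarith
  set Q := q ^ (k + 1)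
  have hQ : 0 < Q := by positivity
  set τ := d * q / σ ^ k with hτdef
  have hτ : 0 < τ := by positivity
  have hfirst := le_pathSum_vacantMass (d := d) hq.le
    (fun p hp => by simpa only [union_self] using hest p p hp hp) hμ
  have hsecond := hG.pathSum_vacantMass_sq_le hz hq hq1 hη0 hR hκ hσ2 hh hest
  have hmeet := hG.pathSum_vacantMeetingMass_le hz hq hη0 hη1 hR hκ (by linarith) hest
  have hdeg := pathSum_vacantDegree_le (hG.card_adj v) hq.le hη1 hone
  calc 1 - pathSum (simpleStep G d) u t
        (fun ω => if bigVacantComponent G ω 0 (K ^ 2) then 1 else 0)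
      ≤ 16 * pathSum (simpleStep G d) u t
          (fun ω => (vacantMass G d v (k + 1) ω / Q - geodesicMass G d v (k + 1)) ^ 2) +
        2 * K * (τ⁻¹ * pathSum (simpleStep G d) u t (vacantDegree G v) +
          τ / Q ^ 2 * pathSum (simpleStep G d) u t (vacantMeetingMass G d v k)) :=
        one_sub_pathSum_bigVacantComponent_le hP hK hτ hm d u v t k
    _ ≤ 16 * (3 * η + 4 * σ ^ 2 + 4 * μ) +
        2 * K * (τ⁻¹ * (2 * (d * q)) + τ / Q ^ 2 * (Q ^ 2 * (2 * (q⁻¹ / d * (σ ^ 2) ^ k)))) := by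
        gcongr
        exact pathSum_sq_sub_le hP hQ (by linarith) (hG.geodesicMass_le_one v _) hη0 hη1
          (sq_nonneg σ) hμ0 hfirst hsecond
    _ = 16 * (3 * η + 4 * σ ^ 2 + 4 * μ) + 8 * K * σ ^ k := by
        rw [hτdef]
        field_simp
        ring

end Moments

section FiniteBound

variable {α : Type*} [Fintype α] {G : SimpleGraph α} {d t k L : ℕ} {R ρ z γ m σ K : ℝ}
  {S : Finset α}

/-- The relative error in the spectral gap of the simple random walk killed on a set of at most `m`
vertices, in terms of its spectral gap `γ`, the number `N` of vertices and a bound `r` on the decay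
of the return probabilities per step. -/
def killedGapError (d : ℕ) (γ N r m : ℝ) : ℝ :=
  (1 + 1 / d) * (1 + 12 * (6 / d)) + (1 + d) * (m * r ^ 24 / γ) + m / (γ * N) - 1

/-- The relative error in the probability of avoiding a set of at most `m` vertices up to time
`N * T`, in terms of the number `N` of vertices, a mixing time `L` and the error `θ` in the spectral
gap of the killed walk. -/
def avoidanceError (N T L θ m : ℝ) : ℝ :=
  Real.exp (m * T * θ + m * L / N) * (1 + 1 / N) - 1 + (8 * m ^ 2 * (T + 1) / N + 2 / N)

lemma killedGapError_nonneg {N r : ℝ} (hγ : 0 ≤ γ) (hN : 0 ≤ N) (hm : 0 ≤ m) :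
    0 ≤ killedGapError d γ N r m := by
  have hdeg : (1 : ℝ) ≤ (1 + 1 / d) * (1 + 12 * (6 / d)) :=
    one_le_mul_of_one_le_of_one_le (le_add_of_nonneg_right (by positivity))
      (le_add_of_nonneg_right (by positivity))
  have hreturn : 0 ≤ (1 + d) * (m * r ^ 24 / γ) := by positivity
  have hmean : 0 ≤ m / (γ * N) := by positivity
  rw [killedGapError]
  linarith

lemma avoidanceError_nonneg {N T θ : ℝ} (hN : 0 ≤ N) (hT : 0 ≤ T) (hθ : 0 ≤ θ) (hm : 0 ≤ m) :
    0 ≤ avoidanceError N T L θ m := by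
  have hexp : 1 ≤ Real.exp (m * T * θ + m * L / N) * (1 + 1 / N) :=
    one_le_mul_of_one_le_of_one_le (Real.one_le_exp (by positivity))
      (le_add_of_nonneg_right (by positivity))
  have hstart : 0 ≤ 8 * m ^ 2 * (T + 1) / N + 2 / N := by positivity
  rw [avoidanceError]
  linarith

namespace IsOutwardExpanding

lemma avoidanceEstimate (hG : IsOutwardExpanding G d R ρ) (hγ : 0 < γ)
    (hgap : HasSpectralGap (simpleStep G d) γ) (hz : 1 ≤ z) (hR : 24 ≤ R)
    (hL : (Fintype.card α : ℝ) ^ 3 ≤ Real.exp (γ / 2 * L)) (hS : S.Nonempty) (hm : #S ≤ m)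
    (hm4 : 4 * m ≤ Fintype.card α) (hhit : ∀ x, ∑ s ∈ S, simpleStep G d x s ≤ 6 / d) {θ η : ℝ}
    (hθ : killedGapError d γ (Fintype.card α) (decayFactor d R ρ z) m = θ) (hθ1 : θ ≤ 1)
    (hη : avoidanceError (Fintype.card α) (t / Fintype.card α) L θ m = η) (hη1 : η ≤ 1) (u : α) :
    AvoidanceEstimate (simpleStep G d) u t (Real.exp (-(t / Fintype.card α))) η
      (truncatedGreen (lazyMatrix (simpleStep G d)) L u) S := by
  have hP := hG.isSymmStochastic
  have : Nonempty α := hG.connected.nonempty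
  have hm0 : 0 ≤ m := (Nat.cast_nonneg _).trans hm
  have hθ0 : 0 ≤ θ := hθ ▸ killedGapError_nonneg hγ.le (Nat.cast_nonneg _) hm0
  have hkilled : KilledGap (simpleStep G d) S (#S / Fintype.card α * (1 - θ)) := by
    refine hP.killedGap (J := 12) (τ := 1 / d) hγ hgap hS (by positivity) hhit
      (fun s _ => hG.pow_apply_self_le hz (by exact_mod_cast hR) s)
      (one_div_pos.2 (by exact_mod_cast hG.degree_pos)) hθ1 ?_
    rw [← hθ, killedGapError, add_sub_cancel, one_div_one_div]
    push_cast
    gcongr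
  have hexp : 0 ≤ Real.exp (m * (t / Fintype.card α) * θ + m * L / Fintype.card α) *
      (1 + 1 / Fintype.card α) - 1 := sub_nonneg.2 <|
    one_le_mul_of_one_le_of_one_le (Real.one_le_exp (by positivity))
      (le_add_of_nonneg_right (by positivity))
  have hstart : 0 ≤ 8 * m ^ 2 * (t / Fintype.card α + 1 : ℝ) / Fintype.card α +
      2 / Fintype.card α := by positivity
  have hupper : Real.exp (#S * (t / Fintype.card α) * θ + #S * L / Fintype.card α) *
      (1 + 1 / Fintype.card α) ≤ 1 + η := by
    refine le_trans (by gcongr) (sub_le_iff_le_add'.1 ((le_add_of_nonneg_right hstart).trans_eq hη))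
  refine ⟨hP.avoidProb_le_pow hgap hθ0 hθ1 hkilled hL hupper u,
    hP.pow_mul_le_avoidProb hgap hθ0 hθ1 hkilled hL hupper hη1 (by linarith) ?_ u⟩
  exact le_trans (by gcongr) ((le_add_of_nonneg_left hexp).trans_eq hη)

theorem one_sub_pathSum_le (hG : IsOutwardExpanding G d R ρ) (hγ : 0 < γ)
    (hgap : HasSpectralGap (simpleStep G d) γ) (hz : 1 ≤ z) (hR : 24 ≤ R)
    (hL : (Fintype.card α : ℝ) ^ 3 ≤ Real.exp (γ / 2 * L)) (hk : 2 * (k : ℝ) + 2 ≤ R)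
    (hmass : ρ * (k + 1) ^ 2 / d ≤ 1 / 2) (hN : 4 * (2 * (k : ℝ) + 2) ≤ Fintype.card α)
    (hσ : 0 < σ) (hσ2 : σ ^ 2 ≤ 1 / 2)
    (hκ : pairFactor d R ρ z (Real.exp (t / Fintype.card α)) ≤ σ ^ 2) (hK : 0 ≤ K) {θ η : ℝ}
    (hθ : killedGapError d γ (Fintype.card α) (decayFactor d R ρ z) (2 * k + 2) = θ) (hθ1 : θ ≤ 1)
    (hη : avoidanceError (Fintype.card α) (t / Fintype.card α) L θ (2 * k + 2) = η) (hη1 : η ≤ 1)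
    (u : α) :
    1 - pathSum (simpleStep G d) u t
        (fun ω => if bigVacantComponent G ω 0 (K ^ 2) then 1 else 0) ≤
      16 * (3 * η + 4 * σ ^ 2 + 4 * ((k + 1) * L / Fintype.card α)) + 8 * K * σ ^ k := by
  have hP := hG.isSymmStochastic
  have hθ0 : 0 ≤ θ := hθ ▸ killedGapError_nonneg hγ.le (Nat.cast_nonneg _) (by positivity)
  have hη0 : 0 ≤ η :=
    hη ▸ avoidanceError_nonneg (by positivity) (by positivity) hθ0 (by positivity)
  have hest {S : Finset α} (hS : S.Nonempty) (hcard : (#S : ℝ) ≤ 2 * k + 2)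
      (hhit : ∀ x, ∑ s ∈ S, simpleStep G d x s ≤ 6 / d) :=
    hG.avoidanceEstimate hγ hgap hz hR hL hS hcard hN hhit hθ hθ1 hη hη1 u
  obtain ⟨v, hv⟩ := hG.exists_root
    (g := truncatedGreen (lazyMatrix (simpleStep G d)) L u)
    (hP.lazy.truncatedGreen_nonneg L u) (k + 1)
  rw [hP.lazy.sum_truncatedGreen] at hv
  have hT : 0 ≤ (t : ℝ) / Fintype.card α := by positivity
  refine hG.one_sub_pathSum_le_of_avoidanceEstimate hz (Real.exp_pos (-(t / Fintype.card α)))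
    (Real.exp_le_one_iff.2 (neg_nonpos.2 hT)) hη0 hη1 (by positivity) hσ hσ2
    (by rwa [← Real.exp_neg, neg_neg]) hk hK ?_ (by exact_mod_cast hv) ?_ ?_
  · have hgeo := hG.le_geodesicMass v (t := k + 1) (by push_cast; linarith)
    push_cast at hgeo
    linarith
  · refine fun a => hest (singleton_nonempty a) ?_ fun x => ?_
    · rw [card_singleton]
      push_cast
      linarith
    · rw [sum_singleton, simpleStep, Matrix.of_apply]
      split_ifs
      exacts [by rw [inv_eq_one_div]; gcongr; norm_num, by positivity]
  · intro p p' hp hp'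
    refine hest ⟨p 1, mem_union_left _ (mem_pathTail.2 ⟨0, rfl⟩)⟩ ?_
      (sum_simpleStep_pathTail_union_le hG.connected hp hp')
    have hcard := hp.card_union_add_coincidences hp'
    exact_mod_cast (by lia : #(pathTail p ∪ pathTail p') ≤ 2 * k + 2)

end IsOutwardExpanding

end FiniteBound

section Asymptotics

open Asymptotics Topology

variable {ι : Type*} {l : Filter ι}

section PowerScale

variable {x f g : ι → ℝ} {a b c : ℝ}

lemma isBigO_rpow_of_le (hx : Tendsto x l atTop) (hab : a ≤ b) :
    (fun i => x i ^ a) =O[l] fun i => x i ^ b := by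
  refine IsBigO.of_bound' ?_
  filter_upwards [hx.eventually_ge_atTop 1] with i hi
  rw [Real.norm_of_nonneg (by positivity), Real.norm_of_nonneg (by positivity)]
  exact Real.rpow_le_rpow_of_exponent_le hi hab

lemma isBigO_mul_rpow (hx : Tendsto x l atTop) (hf : f =O[l] fun i => x i ^ a)
    (hg : g =O[l] fun i => x i ^ b) (hc : a + b ≤ c) :
    (fun i => f i * g i) =O[l] fun i => x i ^ c := by
  refine ((hf.mul hg).congr' .rfl ?_).trans (isBigO_rpow_of_le hx hc)
  filter_upwards [hx.eventually_gt_atTop 0] with i hi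
  rw [Real.rpow_add hi]

lemma isBigO_pow_rpow (hx : Tendsto x l atTop) (hf : f =O[l] fun i => x i ^ a) (n : ℕ) :
    (fun i => f i ^ n) =O[l] fun i => x i ^ (a * n) := by
  refine (hf.pow n).congr' .rfl ?_
  filter_upwards [hx.eventually_ge_atTop 0] with i hi
  rw [Real.rpow_mul_natCast hi]

lemma tendsto_zero_of_isBigO_rpow (hx : Tendsto x l atTop) (hf : f =O[l] fun i => x i ^ a)
    (ha : a < 0) : Tendsto f l (𝓝 0) := by
  refine hf.trans_tendsto ?_
  simpa only [neg_neg, Function.comp_def] using (tendsto_rpow_neg_atTop (neg_pos.2 ha)).comp hx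

end PowerScale

section Errors

variable {d : ι → ℕ} {γ N r m D T L θ b : ι → ℝ} {ρ : ℝ}

lemma isBigO_inv_natCast_rpow :
    (fun i => (d i : ℝ)⁻¹) =O[l] fun i => (d i : ℝ) ^ (-1 : ℝ) := by
  simpa only [Real.rpow_neg_one] using isBigO_refl _ _

lemma isBigO_killedGapError (hd : Tendsto (fun i => (d i : ℝ)) l atTop)
    (hγ : (fun i => (γ i)⁻¹) =O[l] fun i => (d i : ℝ) ^ (3 : ℝ))
    (hN : (fun i => (N i)⁻¹) =O[l] fun i => (d i : ℝ) ^ (-5 : ℝ))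
    (hr : r =O[l] fun i => (d i : ℝ) ^ (-1 / 4 : ℝ))
    (hm : m =O[l] fun i => (d i : ℝ) ^ (1 / 2 : ℝ)) :
    (fun i => killedGapError (d i) (γ i) (N i) (r i) (m i)) =O[l]
      fun i => (d i : ℝ) ^ (-1 : ℝ) := by
  have hexpand (i : ι) : killedGapError (d i) (γ i) (N i) (r i) (m i) =
      73 * (d i : ℝ)⁻¹ + 72 * ((d i : ℝ)⁻¹ * (d i : ℝ)⁻¹) +
        (m i * r i ^ 24 * (γ i)⁻¹ + m i * r i ^ 24 * (γ i)⁻¹ * d i) +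
        m i * (γ i)⁻¹ * (N i)⁻¹ := by
    rw [killedGapError]
    ring
  have hinv := isBigO_inv_natCast_rpow (l := l) (d := d)
  have hd1 : (fun i => (d i : ℝ)) =O[l] fun i => (d i : ℝ) ^ (1 : ℝ) := by
    simpa only [Real.rpow_one] using isBigO_refl _ _
  have hreturn := isBigO_mul_rpow (c := -5 / 2) hd
    (isBigO_mul_rpow hd hm (isBigO_pow_rpow hd hr 24) le_rfl) hγ (by norm_num)
  simp only [hexpand]
  refine (((hinv.const_mul_left _).add ?_).add (IsBigO.add ?_ ?_)).add ?_
  · exact (isBigO_mul_rpow hd hinv hinv (by norm_num)).const_mul_left _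
  · exact hreturn.trans (isBigO_rpow_of_le hd (by norm_num))
  · exact isBigO_mul_rpow hd hreturn hd1 (by norm_num)
  · exact isBigO_mul_rpow hd (isBigO_mul_rpow hd hm hγ le_rfl) hN (by norm_num)

lemma tendsto_avoidanceError (hd : Tendsto (fun i => (d i : ℝ)) l atTop)
    (hN : (fun i => (N i)⁻¹) =O[l] fun i => (d i : ℝ) ^ (-5 : ℝ))
    (hT : T =O[l] fun i => (d i : ℝ) ^ (1 / 4 : ℝ))
    (hL : (fun i => L i / N i) =O[l] fun i => (d i : ℝ) ^ (-2 : ℝ))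
    (hθ : θ =O[l] fun i => (d i : ℝ) ^ (-1 : ℝ)) (hm : m =O[l] fun i => (d i : ℝ) ^ (1 / 2 : ℝ)) :
    Tendsto (fun i => avoidanceError (N i) (T i) (L i) (θ i) (m i)) l (𝓝 0) := by
  have hgap : Tendsto (fun i => m i * T i * θ i) l (𝓝 0) :=
    tendsto_zero_of_isBigO_rpow (a := -1 / 4) hd
      (isBigO_mul_rpow hd (isBigO_mul_rpow hd hm hT le_rfl) hθ (by norm_num)) (by norm_num)
  have hmix : Tendsto (fun i => m i * (L i / N i)) l (𝓝 0) :=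
    tendsto_zero_of_isBigO_rpow (a := -3 / 2) hd (isBigO_mul_rpow hd hm hL (by norm_num))
      (by norm_num)
  have hinv := tendsto_zero_of_isBigO_rpow hd hN (by norm_num)
  have hsq := isBigO_mul_rpow (c := -4) hd (isBigO_pow_rpow hd hm 2) hN (by norm_num)
  have hsqT := isBigO_mul_rpow (c := -3) hd hsq hT (by norm_num)
  have hstart : Tendsto (fun i => 8 * m i ^ 2 * (T i + 1) / N i) l (𝓝 0) := by
    have h := ((tendsto_zero_of_isBigO_rpow hd hsqT (by norm_num)).add
      (tendsto_zero_of_isBigO_rpow hd hsq (by norm_num))).const_mul 8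
    rw [add_zero, mul_zero] at h
    refine h.congr fun i => ?_
    ring
  have h := (((hgap.add hmix).rexp.mul (hinv.const_add 1)).sub_const 1).add
    (hstart.add (hinv.const_mul 2))
  simp only [add_zero, Real.exp_zero, mul_one, sub_self, mul_zero] at h
  refine h.congr fun i => ?_
  rw [avoidanceError]
  ring_nf

lemma isBigO_decayFactor (hd : Tendsto (fun i => (d i : ℝ)) l atTop)
    (hD : D =O[l] fun i => (d i : ℝ) ^ (1 / 2 : ℝ)) :
    (fun i => decayFactor (d i) (D i) ρ ((d i : ℝ) ^ (1 / 4 : ℝ))) =O[l]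
      fun i => (d i : ℝ) ^ (-1 / 4 : ℝ) := by
  have hz : (fun i => ((d i : ℝ) ^ (1 / 4 : ℝ))⁻¹) =O[l] fun i => (d i : ℝ) ^ (-1 / 4 : ℝ) := by
    simp only [← Real.rpow_neg (Nat.cast_nonneg _), neg_div]
    exact isBigO_refl _ _
  refine hz.add ?_
  simp only [div_eq_mul_inv _ (Nat.cast _ : ℝ), mul_assoc ρ]
  exact (isBigO_mul_rpow hd (isBigO_mul_rpow hd hD (isBigO_refl _ _) le_rfl)
    isBigO_inv_natCast_rpow (by norm_num)).const_mul_left ρ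

lemma tendsto_pairFactor (hd : Tendsto (fun i => (d i : ℝ)) l atTop)
    (hD : D =O[l] fun i => (d i : ℝ) ^ (1 / 2 : ℝ))
    (hb : Tendsto (fun i => b i / d i) l (𝓝 0)) :
    Tendsto (fun i => pairFactor (d i) (D i) ρ ((d i : ℝ) ^ (1 / 4 : ℝ)) (b i)) l (𝓝 0) := by
  have hr := tendsto_zero_of_isBigO_rpow hd (isBigO_decayFactor (ρ := ρ) hd hD) (by norm_num)
  have hz : Tendsto (fun i => ((d i : ℝ) ^ (1 / 4 : ℝ)) ^ 2 * (d i : ℝ)⁻¹) l (𝓝 0) :=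
    tendsto_zero_of_isBigO_rpow (a := -1 / 2) hd
      (isBigO_mul_rpow hd (isBigO_pow_rpow hd (isBigO_refl _ _) 2) (isBigO_inv_natCast_rpow)
        (by norm_num)) (by norm_num)
  have h := (hr.pow 2).add (hb.add ((hb.mul hz).const_mul (2 * ρ)))
  simp only [ne_eq, OfNat.ofNat_ne_zero, not_false_eq_true, zero_pow, mul_zero, add_zero] at h
  refine h.congr fun i => ?_
  rw [pairFactor]
  ring

end Errors

end Asymptotics

section Limit

open Asymptotics Topology

variable {ι : Type*} {l : Filter ι}

lemma exp_half_mul_pow_floor_le {x σ : ℝ} (hσ0 : 0 ≤ σ) (hσ : σ ≤ Real.exp (-1)) :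
    Real.exp (x / 2) * σ ^ ⌊x⌋₊ ≤ Real.exp (1 - x / 2) := by
  calc Real.exp (x / 2) * σ ^ ⌊x⌋₊ ≤ Real.exp (x / 2) * Real.exp (-1) ^ ⌊x⌋₊ := by gcongr
    _ = Real.exp (x / 2 - ⌊x⌋₊) := by
        rw [← Real.exp_nat_mul, ← Real.exp_add]
        ring_nf
    _ ≤ Real.exp (1 - x / 2) := Real.exp_le_exp.2 (by linarith [Nat.lt_floor_add_one x])

lemma tendsto_exp_half_mul_pow_floor {x σ : ι → ℝ} (hx : Tendsto x l atTop)
    (hσ0 : ∀ i, 0 ≤ σ i) (hσ : Tendsto σ l (𝓝 0)) :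
    Tendsto (fun i => Real.exp (x i / 2) * σ i ^ ⌊x i⌋₊) l (𝓝 0) := by
  have hexponent : Tendsto (fun i => 1 - x i / 2) l atBot :=
    tendsto_atBot_add_const_left l 1
      (tendsto_neg_atTop_atBot.comp (hx.atTop_div_const two_pos))
  refine squeeze_zero' (.of_forall fun i => mul_nonneg (Real.exp_nonneg _) (pow_nonneg (hσ0 i) _))
    ?_ (Real.tendsto_exp_atBot.comp hexponent)
  filter_upwards [hσ.eventually_le_const (Real.exp_pos (-1))] with i hi
  exact exp_half_mul_pow_floor_le (hσ0 i) hi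

section Rates

variable {d : ι → ℕ} {N T : ι → ℝ}

lemma isBigO_inv_of_isBigO_log_div {f : ι → ℝ} (hN : Tendsto N l atTop)
    (h : (fun i => Real.log (N i) / N i) =O[l] f) : (fun i => (N i)⁻¹) =O[l] f := by
  refine IsBigO.trans (.of_bound' ?_) h
  filter_upwards [(Real.tendsto_log_atTop.comp hN).eventually_ge_atTop 1] with i hi
  rw [norm_div, norm_inv, inv_eq_one_div]
  exact div_le_div_of_nonneg_right (hi.trans (Real.le_norm_self _)) (norm_nonneg _)

lemma isBigO_natCeil_div (hd : Tendsto (fun i => (d i : ℝ)) l atTop) (hN : Tendsto N l atTop)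
    (hlog : (fun i => Real.log (N i) / N i) =O[l] fun i => (d i : ℝ) ^ (-5 : ℝ)) {γ : ι → ℝ}
    (hγ0 : ∀ᶠ i in l, 0 ≤ γ i) (hγ : (fun i => (γ i)⁻¹) =O[l] fun i => (d i : ℝ) ^ (3 : ℝ)) :
    (fun i => (⌈6 * Real.log (N i) / γ i⌉₊ : ℝ) / N i) =O[l] fun i => (d i : ℝ) ^ (-2 : ℝ) := by
  have hmain := (isBigO_mul_rpow (c := -2) hd hlog hγ (by norm_num)).const_mul_left 6
  have hinv := (isBigO_inv_of_isBigO_log_div hN hlog).trans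
    (isBigO_rpow_of_le (b := -2) hd (by norm_num))
  refine IsBigO.trans (.of_bound' ?_) (hmain.add hinv)
  filter_upwards [hN.eventually_ge_atTop 1, hγ0] with i hi hγi
  have hceil : 0 ≤ 6 * Real.log (N i) / γ i :=
    div_nonneg (mul_nonneg (by norm_num) (Real.log_nonneg hi)) hγi
  have hi0 : 0 ≤ N i := zero_le_one.trans hi
  rw [Real.norm_of_nonneg (div_nonneg (Nat.cast_nonneg _) hi0)]
  refine le_trans ?_ (Real.le_norm_self _)
  calc (⌈6 * Real.log (N i) / γ i⌉₊ : ℝ) / N i ≤ (6 * Real.log (N i) / γ i + 1) / N i := by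
        gcongr
        exact (Nat.ceil_lt_add_one hceil).le
    _ = 6 * (Real.log (N i) / N i * (γ i)⁻¹) + (N i)⁻¹ := by ring

lemma pow_three_le_exp_natCeil {γ N : ℝ} (hγ : 0 < γ) (hN : 0 < N) :
    N ^ 3 ≤ Real.exp (γ / 2 * ⌈6 * Real.log N / γ⌉₊) := by
  rw [← Real.log_le_iff_le_exp (pow_pos hN 3), Real.log_pow]
  calc ((3 : ℕ) : ℝ) * Real.log N = γ / 2 * (6 * Real.log N / γ) := by
        push_cast
        field_simp
        ring
    _ ≤ γ / 2 * ⌈6 * Real.log N / γ⌉₊ := by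
        gcongr
        exact Nat.le_ceil _

lemma isBigO_rpow_of_exp_le (hd : Tendsto (fun i => (d i : ℝ)) l atTop) (hT0 : ∀ i, 0 ≤ T i)
    (hT : ∀ᶠ i in l, Real.exp (T i) ≤ d i) {a : ℝ} (ha : 0 < a) :
    T =O[l] fun i => (d i : ℝ) ^ a := by
  refine IsBigO.trans (.of_bound' ?_) ((isLittleO_log_rpow_atTop ha).comp_tendsto hd).isBigO
  filter_upwards [hT] with i hi
  rw [Real.norm_of_nonneg (hT0 i)]
  exact ((Real.le_log_iff_exp_le ((Real.exp_pos _).trans_le hi)).2 hi).trans (Real.le_norm_self _)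

end Rates

lemma pairFactor_pos {d : ℕ} {R ρ z b : ℝ} (hρ : 0 ≤ ρ) (hR : 0 ≤ R) (hz : 0 < z) (hb : 0 ≤ b) :
    0 < pairFactor d R ρ z b := by
  unfold pairFactor decayFactor
  positivity

variable {V : ι → Type*} [∀ i, Fintype (V i)] {G : ∀ i, SimpleGraph (V i)} {d t : ι → ℕ}
  {D : ι → ℝ} {ρ : ℝ}

lemma tendsto_pathSum_of_errors {L : ι → ℕ} {γ z x : ι → ℝ}
    (hG : ∀ᶠ i in l, IsOutwardExpanding (G i) (d i) (D i) ρ)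
    (hgap : ∀ᶠ i in l, 0 < γ i ∧ HasSpectralGap (simpleStep (G i) (d i)) (γ i))
    (hz : ∀ᶠ i in l, 1 ≤ z i) (hD : Tendsto D l atTop) (hx : Tendsto x l atTop)
    (hL : ∀ᶠ i in l, (Fintype.card (V i) : ℝ) ^ 3 ≤ Real.exp (γ i / 2 * L i))
    (hdepth : ∀ᶠ i in l, 2 * (⌊x i⌋₊ : ℝ) + 2 ≤ D i ∧ ρ * (⌊x i⌋₊ + 1) ^ 2 / d i ≤ 1 / 2 ∧
      4 * (2 * (⌊x i⌋₊ : ℝ) + 2) ≤ Fintype.card (V i))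
    {θ : ι → ℝ} (hθ : ∀ i, killedGapError (d i) (γ i) (Fintype.card (V i))
      (decayFactor (d i) (D i) ρ (z i)) (2 * ⌊x i⌋₊ + 2) = θ i) (hθ0 : Tendsto θ l (𝓝 0))
    (hη : Tendsto (fun i => avoidanceError (Fintype.card (V i)) (t i / Fintype.card (V i))
      (L i) (θ i) (2 * ⌊x i⌋₊ + 2)) l (𝓝 0))
    (hκ : Tendsto (fun i => pairFactor (d i) (D i) ρ (z i)
      (Real.exp (t i / Fintype.card (V i)))) l (𝓝 0))
    (hmix : Tendsto (fun i => (2 * ⌊x i⌋₊ + 2 : ℝ) * (L i / Fintype.card (V i))) l (𝓝 0))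
    (u : ∀ i, V i) :
    Tendsto (fun i => pathSum (simpleStep (G i) (d i)) (u i) (t i) fun ω =>
      if bigVacantComponent (G i) ω 0 (Real.exp (x i)) then 1 else 0) l (𝓝 1) := by
  have hσ : Tendsto (fun i => √(pairFactor (d i) (D i) ρ (z i)
      (Real.exp (t i / Fintype.card (V i))))) l (𝓝 0) := by
    simpa only [Real.sqrt_zero] using hκ.sqrt
  have hbound := ((((hη.const_mul 3).add (hκ.const_mul 4)).add (hmix.const_mul 2)).const_mul
    16).add ((tendsto_exp_half_mul_pow_floor hx (fun _ => Real.sqrt_nonneg _) hσ).const_mul 8)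
  have hlower := hbound.const_sub 1
  simp only [mul_zero, add_zero, sub_zero] at hlower
  refine tendsto_of_tendsto_of_tendsto_of_le_of_le' hlower tendsto_const_nhds ?_ ?_
  · filter_upwards [hG, hgap, hz, hD.eventually_ge_atTop 24, hL, hdepth,
      hθ0.eventually_le_const one_pos, hη.eventually_le_const one_pos,
      hκ.eventually_le_const one_half_pos] with i hG hgap hz hD hL hdepth hθ1 hη1 hκ
    have hpos := pairFactor_pos (d := d i) hG.rho_nonneg (hD.trans' (by norm_num))
      (one_pos.trans_le hz) (Real.exp_nonneg (t i / Fintype.card (V i)))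
    have h := hG.one_sub_pathSum_le hgap.1 hgap.2 hz hD hL hdepth.1 hdepth.2.1 hdepth.2.2
      (Real.sqrt_pos.2 hpos) (by rwa [Real.sq_sqrt hpos.le]) (Real.sq_sqrt hpos.le).ge
      (Real.exp_nonneg (x i / 2)) (hθ i) hθ1 rfl hη1 (u i)
    rw [Real.sq_sqrt hpos.le, ← Real.exp_nat_mul, Nat.cast_two, mul_div_cancel₀ _ two_ne_zero,
      mul_assoc 8, mul_div_assoc (_ + 1)] at h
    linarith
  · filter_upwards [hG] with i hG
    have hP := hG.isSymmStochastic
    refine (pathSum_mono hP.nonneg fun ω _ => ?_).trans_eq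
      (pathSum_one (Matrix.sum_row_of_mem_rowStochastic hP.stochastic) (t i) (u i))
    split_ifs
    exacts [le_rfl, zero_le_one]

lemma depth_bounds {d : ℕ} {D ρ : ℝ} (hρ : 0 ≤ ρ) (hD : 4 * (1 + ρ) ≤ D) (hd : D ^ 2 ≤ d) :
    2 * (⌊1 / (4 * (1 + ρ)) * D⌋₊ : ℝ) + 2 ≤ D ∧
      ρ * (⌊1 / (4 * (1 + ρ)) * D⌋₊ + 1 : ℝ) ^ 2 / d ≤ 1 / 2 := by
  have hD0 : 0 < D := lt_of_lt_of_le (by positivity) hD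
  have hone : 1 ≤ 1 / (4 * (1 + ρ)) * D := by
    rwa [one_div, inv_mul_eq_div, one_le_div (by positivity)]
  have hfloor : (⌊1 / (4 * (1 + ρ)) * D⌋₊ + 1 : ℝ) ≤ D / (2 * (1 + ρ)) := by
    calc (⌊1 / (4 * (1 + ρ)) * D⌋₊ + 1 : ℝ)
        ≤ 1 / (4 * (1 + ρ)) * D + 1 / (4 * (1 + ρ)) * D :=
          add_le_add (Nat.floor_le (zero_le_one.trans hone)) hone
      _ = D / (2 * (1 + ρ)) := by
          field_simp
          norm_num
  constructor
  · have hhalf : D / (2 * (1 + ρ)) ≤ D / 2 := by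
      gcongr
      linarith
    linarith
  · calc ρ * (⌊1 / (4 * (1 + ρ)) * D⌋₊ + 1 : ℝ) ^ 2 / d
        ≤ ρ * (D / (2 * (1 + ρ))) ^ 2 / D ^ 2 := by gcongr
      _ = ρ / (4 * (1 + ρ) ^ 2) := by
          field_simp
          norm_num
      _ ≤ 1 / 2 := by
          rw [div_le_div_iff₀ (by positivity) two_pos]
          nlinarith

lemma IsOutwardExpanding.degree_le_card {α : Type*} [Fintype α] {G : SimpleGraph α} {d : ℕ}
    {R ρ : ℝ} (hG : IsOutwardExpanding G d R ρ) : d ≤ Fintype.card α := by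
  obtain ⟨x⟩ := hG.connected.nonempty
  exact (hG.card_adj x).symm.trans_le (card_le_univ _)

lemma tendsto_pathSum_of_rates {γ x : ι → ℝ}
    (hG : ∀ᶠ i in l, IsOutwardExpanding (G i) (d i) (D i) ρ)
    (hgap : ∀ᶠ i in l, 0 < γ i ∧ HasSpectralGap (simpleStep (G i) (d i)) (γ i))
    (hd : Tendsto (fun i => (d i : ℝ)) l atTop) (hD : Tendsto D l atTop)
    (hx : Tendsto x l atTop) (hγ : (fun i => (γ i)⁻¹) =O[l] fun i => (d i : ℝ) ^ (3 : ℝ))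
    (hcard : (fun i => Real.log (Fintype.card (V i)) / Fintype.card (V i)) =O[l]
      fun i => (d i : ℝ) ^ (-5 : ℝ))
    (hDO : D =O[l] fun i => (d i : ℝ) ^ (1 / 2 : ℝ))
    (hb : Tendsto (fun i => Real.exp (t i / Fintype.card (V i)) / d i) l (𝓝 0))
    (hdepth : ∀ᶠ i in l, 2 * (⌊x i⌋₊ : ℝ) + 2 ≤ D i)
    (hmass : ∀ᶠ i in l, ρ * (⌊x i⌋₊ + 1) ^ 2 / d i ≤ 1 / 2) (u : ∀ i, V i) :
    Tendsto (fun i => pathSum (simpleStep (G i) (d i)) (u i) (t i) fun ω =>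
      if bigVacantComponent (G i) ω 0 (Real.exp (x i)) then 1 else 0) l (𝓝 1) := by
  have hN : Tendsto (fun i => (Fintype.card (V i) : ℝ)) l atTop :=
    tendsto_atTop_mono' l (hG.mono fun i hi => Nat.cast_le.2 hi.degree_le_card) hd
  have hinv := isBigO_inv_of_isBigO_log_div hN hcard
  have hT : (fun i => (t i : ℝ) / Fintype.card (V i)) =O[l] fun i => (d i : ℝ) ^ (1 / 4 : ℝ) := by
    refine isBigO_rpow_of_exp_le hd (fun i => by positivity) ?_ (by norm_num)
    filter_upwards [hb.eventually_le_const one_pos, hd.eventually_gt_atTop 0] with i hi hdi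
    exact (div_le_one hdi).1 hi
  have hm : (fun i => 2 * (⌊x i⌋₊ : ℝ) + 2) =O[l] fun i => (d i : ℝ) ^ (1 / 2 : ℝ) := by
    refine IsBigO.trans (.of_bound' ?_) hDO
    filter_upwards [hdepth] with i hi
    rw [Real.norm_of_nonneg (by positivity)]
    exact hi.trans (Real.le_norm_self _)
  have hL := isBigO_natCeil_div hd hN hcard (hgap.mono fun _ h => h.1.le) hγ
  have hθ := isBigO_killedGapError hd hγ hinv (isBigO_decayFactor (ρ := ρ) hd hDO) hm
  have hmN := tendsto_zero_of_isBigO_rpow (a := -9 / 2) hd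
    (isBigO_mul_rpow hd hm hinv (by norm_num)) (by norm_num)
  refine tendsto_pathSum_of_errors (z := fun i => (d i : ℝ) ^ (1 / 4 : ℝ)) hG hgap ?_ hD hx ?_ ?_
    (fun i => rfl) (tendsto_zero_of_isBigO_rpow hd hθ (by norm_num))
    (tendsto_avoidanceError hd hinv hT hL hθ hm) (tendsto_pairFactor hd hDO hb)
    (tendsto_zero_of_isBigO_rpow (a := -3 / 2) hd (isBigO_mul_rpow hd hm hL (by norm_num))
      (by norm_num)) u
  · exact (hd.eventually_ge_atTop 1).mono fun i hi => Real.one_le_rpow hi (by norm_num)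
  · filter_upwards [hgap, hN.eventually_gt_atTop 0] with i hγ hNi
    exact pow_three_le_exp_natCeil hγ.1 hNi
  · filter_upwards [hdepth, hmass, hmN.eventually_le_const (show (0 : ℝ) < 1 / 4 by norm_num),
      hN.eventually_gt_atTop 0] with i hdi hmi hmNi hNi
    refine ⟨hdi, hmi, ?_⟩
    rw [← div_eq_mul_inv, div_le_iff₀ hNi] at hmNi
    linarith

theorem tendsto_pathSum_bigVacantComponent {c₁ : ℝ} (hc₁ : 0 < c₁)
    (hG : ∀ᶠ i in l, IsOutwardExpanding (G i) (d i) (D i) ρ) (hD : Tendsto D l atTop)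
    (hgap : ∀ᶠ i in l, HasSpectralGap (simpleStep (G i) (d i)) (c₁ / d i ^ 3))
    (hcard : (fun i => Real.log (Fintype.card (V i)) / Fintype.card (V i)) =O[l]
      fun i => (d i : ℝ) ^ (-5 : ℝ))
    (ht : ∀ᶠ i in l, Real.exp (t i / Fintype.card (V i)) ≤ d i / D i ^ 2) (hρ : 0 ≤ ρ)
    (u : ∀ i, V i) :
    Tendsto (fun i => pathSum (simpleStep (G i) (d i)) (u i) (t i) fun ω =>
      if bigVacantComponent (G i) ω 0 (Real.exp (1 / (4 * (1 + ρ)) * D i)) then 1 else 0)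
      l (𝓝 1) := by
  have hDd : ∀ᶠ i in l, D i ^ 2 ≤ d i := by
    filter_upwards [ht, hD.eventually_gt_atTop 0] with i hi hDi
    exact (one_le_div (by positivity)).1 ((Real.one_le_exp (by positivity)).trans hi)
  have hd : Tendsto (fun i => (d i : ℝ)) l atTop :=
    tendsto_atTop_mono' l hDd ((tendsto_pow_atTop two_ne_zero).comp hD)
  have hγ : (fun i => (c₁ / (d i : ℝ) ^ 3)⁻¹) =O[l] fun i => (d i : ℝ) ^ (3 : ℝ) := by
    simp only [inv_div, div_eq_inv_mul _ c₁, ← Real.rpow_natCast]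
    exact (isBigO_refl _ _).const_mul_left _
  have hγ0 : ∀ᶠ i in l, 0 < c₁ / (d i : ℝ) ^ 3 :=
    (hd.eventually_gt_atTop 0).mono fun i hi => by positivity
  have hDO : D =O[l] fun i => (d i : ℝ) ^ (1 / 2 : ℝ) := by
    refine .of_bound' ?_
    filter_upwards [hDd, hD.eventually_ge_atTop 0] with i hi hDi
    rw [Real.norm_of_nonneg hDi, ← Real.sqrt_eq_rpow, Real.norm_of_nonneg (Real.sqrt_nonneg _)]
    exact Real.le_sqrt_of_sq_le hi
  have hb : Tendsto (fun i => Real.exp (t i / Fintype.card (V i)) / d i) l (𝓝 0) := by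
    refine squeeze_zero' (.of_forall fun i => by positivity) ?_
      (tendsto_inv_atTop_zero.comp ((tendsto_pow_atTop two_ne_zero).comp hD))
    filter_upwards [ht, hd.eventually_gt_atTop 0] with i hi hdi
    rwa [div_le_iff₀ hdi, Function.comp_apply, Function.comp_apply, inv_mul_eq_div]
  have hdepth : ∀ᶠ i in l, 2 * (⌊1 / (4 * (1 + ρ)) * D i⌋₊ : ℝ) + 2 ≤ D i ∧
      ρ * (⌊1 / (4 * (1 + ρ)) * D i⌋₊ + 1 : ℝ) ^ 2 / d i ≤ 1 / 2 := by
    filter_upwards [hDd, hD.eventually_ge_atTop (4 * (1 + ρ))] with i hi hDi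
    exact depth_bounds hρ hDi hi
  exact tendsto_pathSum_of_rates hG (hγ0.and hgap) hd hD (hD.const_mul_atTop (by positivity)) hγ
    hcard hDO hb (hdepth.mono fun _ => And.left) (hdepth.mono fun _ => And.right) u

end Limit

section Supercritical

open Asymptotics Topology

lemma isOutwardExpanding_of_propP3 {α : Type*} [Fintype α] {G : SimpleGraph α}
    {d : ℕ} {ε R ρ : ℝ} (hd : 0 < d) (hreg : G.IsRegularOfDegree d) (hconn : G.Connected)
    (hρ : 0 ≤ ρ) (hP3 : PropP3 G d ε ρ) (hR : R ≤ (d : ℝ) ^ ε) : IsOutwardExpanding G d R ρ where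
  degree_pos := hd
  card_adj x := by rw [← hreg.degree_eq x, ← SimpleGraph.card_neighborFinset_eq_degree,
    SimpleGraph.neighborFinset_eq_filter]
  connected := hconn
  rho_nonneg := hρ
  card_inward_le a y h := hP3 a y (h.trans hR)

variable {ι : Type*} {l : Filter ι} {d : ι → ℕ} {ε N : ι → ℝ}

lemma tendsto_rpow_half_atTop (hd : Tendsto (fun i => (d i : ℝ)) l atTop)
    (hεd : Tendsto (fun i => ε i * Real.log (d i)) l atTop) :
    Tendsto (fun i => (d i : ℝ) ^ (ε i / 2)) l atTop := by
  refine (Real.tendsto_exp_atTop.comp (hεd.atTop_div_const two_pos)).congr' ?_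
  filter_upwards [hd.eventually_gt_atTop 0] with i hi
  rw [Real.rpow_def_of_pos hi, Function.comp_apply]
  ring_nf

lemma exp_div_le_of_le {d : ℕ} {ε N t : ℝ} (hd : 0 < d) (hN : 0 < N)
    (ht : t ≤ (1 - ε) * (N * Real.log d)) :
    Real.exp (t / N) ≤ d / ((d : ℝ) ^ (ε / 2)) ^ 2 := by
  have hd0 : (0 : ℝ) < d := Nat.cast_pos.2 hd
  have hexponent : t / N ≤ Real.log d * (1 - ε) := by
    rw [div_le_iff₀ hN]
    linarith
  calc Real.exp (t / N) ≤ Real.exp (Real.log d * (1 - ε)) := Real.exp_le_exp.2 hexponent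
    _ = d / ((d : ℝ) ^ (ε / 2)) ^ 2 := by
        rw [← Real.rpow_def_of_pos hd0, Real.rpow_sub hd0, Real.rpow_one,
          ← Real.rpow_mul_natCast hd0.le, Nat.cast_two, div_mul_cancel₀ _ two_ne_zero]

lemma isBigO_log_div_of_le_rpow {c : ℝ} (hd : Tendsto (fun i => (d i : ℝ)) l atTop)
    (hN : ∀ᶠ i in l, 1 ≤ N i)
    (h : ∀ᶠ i in l, (d i : ℝ) ≤ c * (N i / Real.log (N i)) ^ (1 / 5 : ℝ)) :
    (fun i => Real.log (N i) / N i) =O[l] fun i => (d i : ℝ) ^ (-5 : ℝ) := by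
  refine .of_bound (c ^ 5) ?_
  filter_upwards [hd.eventually_gt_atTop 0, hN, h] with i hdi hNi hi
  have hy : 0 ≤ N i / Real.log (N i) :=
    div_nonneg (zero_le_one.trans hNi) (Real.log_nonneg hNi)
  have hpow : (d i : ℝ) ^ 5 ≤ c ^ 5 * (N i / Real.log (N i)) := by
    calc (d i : ℝ) ^ 5 ≤ (c * (N i / Real.log (N i)) ^ (1 / 5 : ℝ)) ^ 5 := by gcongr
      _ = c ^ 5 * (N i / Real.log (N i)) := by
          rw [mul_pow, ← Real.rpow_mul_natCast hy]
          norm_num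
  have hpos : 0 < N i / Real.log (N i) := by
    refine hy.lt_of_ne fun h0 => (pow_pos hdi 5).not_ge ?_
    rwa [← h0, mul_zero] at hpow
  rw [← inv_div, Real.norm_of_nonneg (inv_nonneg.2 hy), Real.norm_of_nonneg (by positivity),
    Real.rpow_neg hdi.le, ← div_eq_mul_inv, inv_le_iff_one_le_mul₀ hpos, div_mul_eq_mul_div,
    one_le_div (by positivity)]
  exact_mod_cast hpow

theorem vacant_set_supercritical_general {V : ι → Type*} [∀ i, Fintype (V i)]
    [∀ i, DecidableEq (V i)] (G : ∀ i, SimpleGraph (V i)) (u : ∀ i, V i) {t : ι → ℕ}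
    {c₁ ρ₁ c₂ ρ₂ : ℝ} (hreg : ∀ᶠ i in l, (G i).IsRegularOfDegree (d i))
    (hconn : ∀ᶠ i in l, (G i).Connected) (hd : Tendsto (fun i => (d i : ℝ)) l atTop)
    (hε : ∀ᶠ i in l, 0 < ε i) (hεd : Tendsto (fun i => ε i * Real.log (d i)) l atTop)
    (hc₁ : 0 < c₁) (hρ₁ : ρ₁ ≤ 3)
    (hP1 : ∀ᶠ i in l, SpectralGapLB (G i) (d i) (c₁ / (d i : ℝ) ^ ρ₁))
    (hP2 : ∀ᶠ i in l, (d i : ℝ) ≤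
      c₂ * (Fintype.card (V i) / Real.log (Fintype.card (V i))) ^ (1 / 5 : ℝ))
    (hρ₂ : 0 < ρ₂) (hP3 : ∀ᶠ i in l, PropP3 (G i) (d i) (ε i) ρ₂)
    (ht : ∀ᶠ i in l, (t i : ℝ) ≤ (1 - ε i) * (Fintype.card (V i) * Real.log (d i))) :
    ∃ c : ℝ, 0 < c ∧ Tendsto (fun i => walkProb (simpleStep (G i) (d i)) (u i) (t i) fun ω =>
      bigVacantComponent (G i) ω 0 (Real.exp (c * (d i : ℝ) ^ (ε i / 2)))) l (𝓝 1) := by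
  have hd1 := hd.eventually_ge_atTop 1
  have hcard (i : ι) : (1 : ℝ) ≤ Fintype.card (V i) :=
    Nat.one_le_cast.2 (Fintype.card_pos_iff.2 ⟨u i⟩)
  refine ⟨1 / (4 * (1 + ρ₂)), by positivity, ?_⟩
  simp only [walkProb_eq_pathSum]
  refine tendsto_pathSum_bigVacantComponent hc₁ ?_ (tendsto_rpow_half_atTop hd hεd) ?_
    (isBigO_log_div_of_le_rpow hd (.of_forall hcard) hP2) ?_ hρ₂.le u
  · filter_upwards [hreg, hconn, hP3, hd1, hε] with i hregi hconni hP3i hdi hεi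
    exact isOutwardExpanding_of_propP3 (Nat.one_le_cast.1 hdi) hregi hconni hρ₂.le hP3i
      (Real.rpow_le_rpow_of_exponent_le hdi (half_le_self hεi.le))
  · filter_upwards [hP1, hd1] with i hgap hdi
    refine hasSpectralGap_of_spectralGapLB hgap (le_trans ?_ (le_mul_of_one_le_left
      (by positivity) one_le_two))
    rw [← Real.rpow_natCast]
    gcongr
    exact_mod_cast hρ₁
  · filter_upwards [ht, hd1] with i hti hdi
    exact exp_div_le_of_le (Nat.one_le_cast.1 hdi) (one_pos.trans_le (hcard i)) hti

end Supercritical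

/-- **Theorem 1(a)**: for a sequence of connected `d`-regular graphs satisfying
P1–P4, if `t ≤ (1-ε) n ln d` then w.h.p. the vacant set of the first `t` steps
of the simple random walk induces a component of at least `exp(c d^(ε/2))`
vertices.  (The `n`-th graph of the sequence has `n + 1` vertices.) -/
theorem vacant_set_supercritical
    (G : ∀ n : ℕ, SimpleGraph (Fin (n + 1))) (d : ℕ → ℕ) (ε : ℕ → ℝ)
    (u : ∀ n : ℕ, Fin (n + 1)) (t : ℕ → ℕ)
    (hreg : ∀ n, (G n).IsRegularOfDegree (d n))
    (hconn : ∀ n, (G n).Connected)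
    (hd : Tendsto (fun n => (d n : ℝ)) atTop atTop)
    (hε : ∀ n, 0 < ε n ∧ ε n < 1)
    (hεd : Tendsto (fun n => ε n * Real.log (d n)) atTop atTop)
    (hP1 : ∃ c₁ ρ₁ : ℝ, 0 < c₁ ∧ 0 < ρ₁ ∧ ρ₁ ≤ 3 ∧
      ∀ n, SpectralGapLB (G n) (d n) (c₁ / (d n : ℝ) ^ ρ₁))
    (hP2a : Tendsto (fun n : ℕ => Real.log (Real.log ((n : ℝ) + 1)) ^ (2 / ε n) / (d n : ℝ))
      atTop (nhds 0))
    (hP2b : ∃ c₂ : ℝ, 0 < c₂ ∧ ∀ n, 1 ≤ n →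
      (d n : ℝ) ≤ c₂ * (((n : ℝ) + 1) / Real.log ((n : ℝ) + 1)) ^ ((1 : ℝ) / 5))
    (hP3 : ∃ ρ₂ : ℝ, 0 < ρ₂ ∧ ∀ n, PropP3 (G n) (d n) (ε n) ρ₂)
    (hP4 : ∀ δ : ℝ, 0 < δ → ∃ δ' : ℝ, 0 < δ' ∧ ∃ n₀ : ℕ, ∀ n, n₀ ≤ n →
      ∀ S : Finset (Fin (n + 1)), (S.card : ℝ) ≤ δ' * Real.log ((n : ℝ) + 1) →
        (edgesInside (G n) S : ℝ) ≤ δ * (d n : ℝ) * (S.card : ℝ))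
    (ht : ∀ n, (t n : ℝ) ≤ (1 - ε n) * (((n : ℝ) + 1) * Real.log (d n))) :
    ∃ c : ℝ, 0 < c ∧
      Tendsto (fun n =>
        walkProb (simpleStep (G n) (d n)) (u n) (t n)
          (fun p => bigVacantComponent (G n) p 0 (Real.exp (c * (d n : ℝ) ^ (ε n / 2)))))
        atTop (nhds 1) := by
  obtain ⟨c₁, ρ₁, hc₁, -, hρ₁, hgap⟩ := hP1
  obtain ⟨c₂, -, hdegree⟩ := hP2b
  obtain ⟨ρ₂, hρ₂, hinward⟩ := hP3
  exact vacant_set_supercritical_general G u (.of_forall hreg) (.of_forall hconn) hd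
    (.of_forall fun n => (hε n).1) hεd hc₁ hρ₁ (.of_forall hgap)
    ((eventually_ge_atTop 1).mono fun n hn => by simpa using hdegree n hn) hρ₂
    (.of_forall hinward) (.of_forall fun n => by simpa using ht n)

end
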